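/- arXiv:2604.25739 — 4 statements merged into one kernel-verified Lean document; each statement's English description precedes it below -/
import Mathlib

section
/- Let e, y ∈ ℝ⁴ with ‖e‖ = 1 and y ∉ {0, e}. Then the function (x₁, x₂) ↦ 1/(‖x₁‖²‖x₁ − e‖²‖x₁ − y‖²‖x₁ − x₂‖²‖x₂‖²‖x₂ − e‖²‖x₂ − y‖²) is Lebesgue integrable on ℝ⁴ × ℝ⁴ and (1/π⁴) ∫_{ℝ⁴×ℝ⁴} dx₁ dx₂ / (‖x₁‖²‖x₁ − e‖²‖x₁ − y‖²‖x₁ − x₂‖²‖x₂‖²‖x₂ − e‖²‖x₂ − y‖²) = 6ζ(3)/(‖y‖²‖y − e‖²). -/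
open MeasureTheory

namespace K5
open Real Polynomial

noncomputable def Uc (n : ℕ) (x : ℝ) : ℝ := (Polynomial.Chebyshev.U ℝ (n:ℤ)).eval x

noncomputable def Pk (b x : ℝ) : ℝ := (1 - 2*b*x + b^2)⁻¹

lemma Uc_zero (x : ℝ) : Uc 0 x = 1 := by simp [Uc]
lemma Uc_one (x : ℝ) : Uc 1 x = 2*x := by simp [Uc]
lemma Uc_add_two (n : ℕ) (x : ℝ) : Uc (n+2) x = 2*x*Uc (n+1) x - Uc n x := by
  simp [Uc, Polynomial.Chebyshev.U_add_two]

lemma Uc_cos (n : ℕ) (t : ℝ) : Uc n (cos t) * sin t = sin ((n+1)*t) := by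
  have := Polynomial.Chebyshev.U_real_cos t (n:ℤ)
  simpa [Uc] using this

lemma Uc_cont (n : ℕ) : Continuous (Uc n) := by
  unfold Uc; exact Polynomial.continuous _

lemma abs_sin_nat_mul (n : ℕ) (t : ℝ) : |sin (n*t)| ≤ n * |sin t| := by
  induction n with
  | zero => simp
  | succ k ih =>
    push_cast
    rw [add_mul, one_mul, sin_add]
    have h1 := abs_add_le (sin (k*t) * cos t) (cos (k*t) * sin t)
    rw [abs_mul, abs_mul] at h1
    have h2 := abs_cos_le_one t
    have h3 := abs_cos_le_one (k*t)
    nlinarith [abs_nonneg (sin (k*t)), abs_nonneg (sin t), abs_nonneg (cos t), abs_nonneg (cos (k*t))]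

lemma Uc_bound (n : ℕ) {x : ℝ} (hx : |x| ≤ 1) : |Uc n x| ≤ n + 1 := by
  rw [abs_le] at hx
  have hc : cos (arccos x) = x := cos_arccos hx.1 hx.2
  by_cases hs : sin (arccos x) = 0
  · have h2 := sin_sq_add_cos_sq (arccos x)
    rw [hs, hc] at h2
    have : x = 1 ∨ x = -1 := by
      have : (x-1)*(x+1) = 0 := by nlinarith
      rcases mul_eq_zero.1 this with h | h
      · left; linarith
      · right; linarith
    rcases this with h | h
    · subst h; simp [Uc]
      rw [abs_of_nonneg]; positivity
    · subst h; simp [Uc, abs_mul]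
      rw [abs_of_nonneg]; positivity
  · have h1 := Uc_cos n (arccos x)
    rw [hc] at h1
    have h2 := abs_sin_nat_mul (n+1) (arccos x)
    push_cast at h2
    rw [← h1, abs_mul] at h2
    exact le_of_mul_le_mul_right h2 (abs_pos.2 hs)

lemma summable_bd {b : ℝ} (hb : 0 ≤ b) (hb1 : b < 1) : Summable fun n : ℕ => b^n * ((n:ℝ)+1) := by
  have h1 := summable_pow_mul_geometric_of_norm_lt_one 1 (r := b) (by rw [Real.norm_eq_abs, abs_of_nonneg hb]; exact hb1)
  have h2 := summable_geometric_of_lt_one hb hb1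
  refine (h1.add h2).congr fun n => ?_
  ring

lemma gen {b x : ℝ} (hb : 0 ≤ b) (hb1 : b < 1) (hx : |x| ≤ 1) :
    HasSum (fun n : ℕ => b^n * Uc n x) (Pk b x) := by
  have hs : Summable (fun n : ℕ => b^n * Uc n x) := by
    refine Summable.of_norm_bounded (summable_bd hb hb1) fun n => ?_
    rw [norm_mul, Real.norm_eq_abs, Real.norm_eq_abs, abs_of_nonneg (pow_nonneg hb n)]
    exact mul_le_mul_of_nonneg_left (Uc_bound n hx) (pow_nonneg hb n)
  have hs1 := (summable_nat_add_iff 1).2 hs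
  have e1 := hs.tsum_eq_zero_add
  have e2 := hs1.tsum_eq_zero_add
  simp only [Uc_zero, zero_add, Uc_one, pow_zero, one_mul, pow_one] at e1 e2
  have e3 : ∑' n : ℕ, b^(n+1+1) * Uc (n+1+1) x = 2*x*b*(∑' n : ℕ, b^(n+1) * Uc (n+1) x) - b^2 * ∑' n : ℕ, b^n * Uc n x := by
    rw [← tsum_mul_left, ← tsum_mul_left, ← Summable.tsum_sub (hs1.mul_left _) (hs.mul_left _)]
    refine tsum_congr fun n => ?_
    rw [Uc_add_two]; ring
  have hp : 0 < 1 - 2*b*x + b^2 := by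
    rw [abs_le] at hx
    nlinarith [mul_nonneg hb (sub_nonneg.2 hx.2), sq_pos_of_pos (sub_pos.2 hb1)]
  have : ∑' n : ℕ, b^n * Uc n x = Pk b x := by
    unfold Pk
    apply eq_inv_of_mul_eq_one_left
    linear_combination (1-2*x*b) * e1 + e2 + e3
  rw [← this]; exact hs.hasSum

lemma yint (m : ℕ) (p t : ℝ) : ∫ y in (-sin p)..(sin p), Uc m (cos p * cos t + y * sin t) =
    2/(m+1) * sin ((m+1)*p) * Uc m (cos t) := by
  have hm : (m:ℝ)+1 ≠ 0 := by positivity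
  by_cases hs : sin t = 0
  · simp only [hs, mul_zero, add_zero, intervalIntegral.integral_const, smul_eq_mul]
    have h2 := sin_sq_add_cos_sq t
    rw [hs] at h2
    have : cos t = 1 ∨ cos t = -1 := by
      have : (cos t-1)*(cos t+1) = 0 := by nlinarith
      rcases mul_eq_zero.1 this with h | h
      · left; linarith
      · right; linarith
    have h3 := Uc_cos m p
    rw [← h3]
    rcases this with h | h <;> rw [h]
    · have : Uc m 1 = m+1 := by simp [Uc]
      rw [this]; field_simp; ring_nf
    · have : Uc m (-1) = ((m:ℤ).negOnePow : ℤ) * (m+1) := by simp [Uc]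
      rw [this]
      have : Uc m (cos p * -1) = ((m:ℤ).negOnePow : ℤ) * Uc m (cos p) := by
        rw [mul_neg_one]; simp only [Uc]; exact_mod_cast Polynomial.Chebyshev.U_eval_neg ℝ m (cos p)
      rw [this]; field_simp; ring
  · have hd : ∀ y : ℝ, HasDerivAt (fun y => (Polynomial.Chebyshev.T ℝ ((m:ℤ)+1)).eval (cos p * cos t + y * sin t) / ((m+1) * sin t))
        (Uc m (cos p * cos t + y * sin t)) y := by
      intro y
      have h1 := (Polynomial.Chebyshev.T ℝ ((m:ℤ)+1)).hasDerivAt (cos p * cos t + y * sin t)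
      have h2 : HasDerivAt (fun y : ℝ => cos p * cos t + y * sin t) (sin t) y := by
        simpa using ((hasDerivAt_id y).mul_const (sin t)).const_add (cos p * cos t)
      have h3 := (h1.comp y h2).div_const ((m+1) * sin t)
      refine h3.congr_deriv ?_
      rw [Polynomial.Chebyshev.T_derivative_eq_U]
      simp [Uc]
      field_simp
    rw [intervalIntegral.integral_eq_sub_of_hasDerivAt (fun y _ => hd y)]
    · have a1 : cos p * cos t + sin p * sin t = cos (p - t) := by rw [cos_sub]
      have a2 : cos p * cos t + -sin p * sin t = cos (p + t) := by rw [cos_add]; ring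
      rw [a1, a2, Polynomial.Chebyshev.T_real_cos, Polynomial.Chebyshev.T_real_cos, ← sub_div,
        div_eq_iff (by positivity)]
      have := Uc_cos m t
      push_cast
      have h5 : cos ((m+1)*(p-t)) - cos ((m+1)*(p+t)) = 2 * sin ((m+1)*p) * sin ((m+1)*t) := by
        rw [mul_sub, mul_add, cos_sub, cos_add]; ring
      rw [h5, ← this]; field_simp
    · apply Continuous.intervalIntegrable
      exact (Uc_cont m).comp (by fun_prop)

end K5

namespace K5
open Real

lemma hsum_congr {f g : ℕ → ℝ} {a : ℝ} (h : HasSum g a) (hfg : ∀ n, f n = g n) : HasSum f a := by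
  rw [show f = g from funext hfg]; exact h

lemma dom_sum {F : ℕ → ℝ → ℝ} {f : ℝ → ℝ} {a b : ℝ} (c : ℕ → ℝ) (hF : ∀ n, Continuous (F n))
    (hc : Summable c) (hb : ∀ n, ∀ t ∈ Set.uIoc a b, |F n t| ≤ c n)
    (hs : ∀ t ∈ Set.uIoc a b, HasSum (fun n => F n t) (f t)) :
    HasSum (fun n => ∫ t in a..b, F n t) (∫ t in a..b, f t) := by
  refine intervalIntegral.hasSum_integral_of_dominated_convergence (fun n _ => c n)
    (fun n => (hF n).aestronglyMeasurable) (fun n => ?_) ?_ ?_ ?_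
  · exact Filter.Eventually.of_forall fun t ht => hb n t ht
  · exact Filter.Eventually.of_forall fun t ht => hc
  · exact intervalIntegrable_const
  · exact Filter.Eventually.of_forall fun t ht => hs t ht

lemma Pk_pos {b x : ℝ} (hb : 0 ≤ b) (hb1 : b < 1) (hx : |x| ≤ 1) : 0 < 1 - 2*b*x + b^2 := by
  rw [abs_le] at hx
  nlinarith [mul_nonneg hb (sub_nonneg.2 hx.2), sq_pos_of_pos (sub_pos.2 hb1)]

lemma Pk_nonneg {b x : ℝ} (hb : 0 ≤ b) (hb1 : b < 1) (hx : |x| ≤ 1) : 0 ≤ Pk b x :=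
  inv_nonneg.2 (Pk_pos hb hb1 hx).le

lemma arg_bound {p t y : ℝ} (hy : |y| ≤ |sin p|) : |cos p * cos t + y * sin t| ≤ 1 := by
  rw [← sq_le_one_iff_abs_le_one]
  have h1 := sq_le_sq.2 hy
  have h2 := sin_sq_add_cos_sq p
  have h3 := sin_sq_add_cos_sq t
  have h4 : (cos p * cos t + y * sin t)^2 + (cos p * sin t - y * cos t)^2 = (cos p^2 + y^2) * (sin t^2+cos t^2) := by ring
  rw [h3] at h4
  nlinarith [sq_nonneg (cos p * sin t - y * cos t)]

lemma uIoc_sin {p y : ℝ} (hy : y ∈ Set.uIoc (-sin p) (sin p)) : |y| ≤ |sin p| := by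
  rw [Set.mem_uIoc] at hy
  rw [abs_le]
  rcases hy with h | h <;> constructor <;> cases abs_cases (sin p) <;> linarith

lemma L1 {b : ℝ} (hb : 0 ≤ b) (hb1 : b < 1) (p t : ℝ) :
    HasSum (fun m : ℕ => b^m * (2/(m+1) * sin ((m+1)*p) * Uc m (cos t)))
      (∫ y in (-sin p)..(sin p), Pk b (cos p * cos t + y * sin t)) := by
  have := dom_sum (F := fun m y => b^m * Uc m (cos p * cos t + y * sin t))
    (f := fun y => Pk b (cos p * cos t + y * sin t)) (a := -sin p) (b := sin p)
    (fun n : ℕ => b^n * ((n:ℝ)+1)) (fun n => continuous_const.mul ((Uc_cont n).comp (by fun_prop)))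
    (summable_bd hb hb1) (fun n y hy => ?_) (fun y hy => gen hb hb1 (arg_bound (uIoc_sin hy)))
  · simpa only [intervalIntegral.integral_const_mul, yint] using this
  · rw [abs_mul, abs_of_nonneg (pow_nonneg hb n)]
    exact mul_le_mul_of_nonneg_left (Uc_bound n (arg_bound (uIoc_sin hy))) (pow_nonneg hb n)

lemma int_cos_nat (k : ℤ) : ∫ p in (0:ℝ)..π, cos (k * p) = if k = 0 then π else 0 := by
  split_ifs with h
  · simp [h]
  · have : (k:ℝ) ≠ 0 := by exact_mod_cast h
    rw [intervalIntegral.integral_comp_mul_left (fun x => cos x) this]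
    simp [Real.sin_int_mul_pi]

lemma int_sin_sin (n m : ℕ) : ∫ p in (0:ℝ)..π, sin ((n+1)*p) * sin ((m+1)*p) =
    if n = m then π/2 else 0 := by
  have h : ∀ p : ℝ, sin ((n+1)*p) * sin ((m+1)*p) =
      (cos (((n:ℤ)-(m:ℤ) : ℤ)*p) - cos (((n:ℤ)+(m:ℤ)+2 : ℤ)*p))/2 := by
    intro p
    have e1 : (((n:ℤ)-(m:ℤ) : ℤ):ℝ)*p = (n+1)*p - (m+1)*p := by push_cast; ring
    have e2 : (((n:ℤ)+(m:ℤ)+2 : ℤ):ℝ)*p = (n+1)*p + (m+1)*p := by push_cast; ring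
    rw [e1, e2, cos_sub, cos_add]; ring
  simp_rw [h]
  rw [intervalIntegral.integral_div, intervalIntegral.integral_sub
    (Continuous.intervalIntegrable (by fun_prop) _ _) (Continuous.intervalIntegrable (by fun_prop) _ _),
    int_cos_nat, int_cos_nat]
  have : ((n:ℤ)+(m:ℤ)+2) ≠ 0 := by positivity
  rw [if_neg this]
  by_cases hnm : n = m
  · simp [hnm]
  · have : (n:ℤ) - m ≠ 0 := by omega
    simp [hnm, this]

lemma L2 {a : ℝ} (ha : 0 ≤ a) (ha1 : a < 1) (m : ℕ) :
    ∫ p in (0:ℝ)..π, sin p * Pk a (cos p) * sin ((m+1)*p) = a^m * (π/2) := by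
  have := dom_sum (F := fun (n:ℕ) p => a^n * (sin ((n+1)*p) * sin ((m+1)*p)))
    (f := fun p => sin p * Pk a (cos p) * sin ((m+1)*p)) (a := 0) (b := π)
    (fun n : ℕ => a^n) (fun n => by fun_prop)
    (summable_geometric_of_lt_one ha ha1) (fun n y hy => ?_) (fun y hy => ?_)
  · simp only [intervalIntegral.integral_const_mul, int_sin_sin] at this
    refine this.unique ?_
    convert hasSum_ite_eq m (a^m * (π/2)) using 2 with n
    by_cases h : n = m <;> simp [h]
  · rw [abs_mul, abs_of_nonneg (pow_nonneg ha n), abs_mul]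
    refine mul_le_of_le_one_right (pow_nonneg ha n) ?_
    exact mul_le_one₀ (abs_sin_le_one _) (abs_nonneg _) (abs_sin_le_one _)
  · have := ((gen ha ha1 (abs_cos_le_one y)).mul_left (sin y)).mul_right (sin ((m+1)*y))
    refine hsum_congr this (fun n => ?_)
    rw [← Uc_cos n y]; ring

lemma L4 {k c : ℝ} (hk : 0 ≤ k) (hk1 : k < 1) (hc : |c| ≤ 1) :
    HasSum (fun m : ℕ => k^m / (m+1) * Uc m c) (∫ s in (0:ℝ)..1, Pk (k*s) c) := by
  have := dom_sum (F := fun m s => (k*s)^m * Uc m c)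
    (f := fun s => Pk (k*s) c) (a := 0) (b := 1)
    (fun n : ℕ => k^n * ((n:ℝ)+1)) (fun n => by fun_prop)
    (summable_bd hk hk1) (fun n y hy => ?_) (fun y hy => ?_)
  · convert this using 2 with m
    rw [intervalIntegral.integral_mul_const]
    simp_rw [mul_pow]
    rw [intervalIntegral.integral_const_mul, integral_pow]
    simp [div_eq_mul_inv]
  · rw [Set.uIoc_of_le zero_le_one] at hy
    rw [abs_mul, abs_of_nonneg (pow_nonneg (mul_nonneg hk hy.1.le) n)]
    refine mul_le_mul ?_ (Uc_bound n hc) (abs_nonneg _) (pow_nonneg hk n)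
    exact pow_le_pow_left₀ (mul_nonneg hk hy.1.le) (mul_le_of_le_one_right hk hy.2) n
  · rw [Set.uIoc_of_le zero_le_one] at hy
    exact gen (mul_nonneg hk hy.1.le) (lt_of_le_of_lt (mul_le_of_le_one_right hk hy.2) hk1) hc

/-- the inner integral as a function of the angle, extended continuously -/
noncomputable def Sfun (b t p : ℝ) : ℝ := ∑' m : ℕ, b^m * (2/(m+1) * sin ((m+1)*p) * Uc m (cos t))

lemma term_bound {b : ℝ} (hb : 0 ≤ b) (t p : ℝ) (m : ℕ) :
    |b^m * (2/(m+1) * sin ((m+1)*p) * Uc m (cos t))| ≤ 2 * b^m := by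
  rw [abs_mul, abs_of_nonneg (pow_nonneg hb m), abs_mul, abs_mul, mul_comm 2]
  refine mul_le_mul_of_nonneg_left ?_ (pow_nonneg hb m)
  rw [abs_of_nonneg (by positivity : (0:ℝ) ≤ 2/(m+1))]
  calc 2/((m:ℝ)+1) * |sin ((m+1)*p)| * |Uc m (cos t)| ≤ 2/((m:ℝ)+1) * 1 * (m+1) := by
        gcongr
        · exact abs_sin_le_one _
        · exact Uc_bound m (abs_cos_le_one t)
    _ = 2 := by field_simp

lemma Sfun_cont {b : ℝ} (hb : 0 ≤ b) (hb1 : b < 1) (t : ℝ) : Continuous (Sfun b t) := by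
  unfold Sfun
  exact continuous_tsum (fun m => by fun_prop) ((summable_geometric_of_lt_one hb hb1).mul_left 2)
    (fun m p => by rw [Real.norm_eq_abs]; exact term_bound hb t p m)

lemma Sfun_eq {b : ℝ} (hb : 0 ≤ b) (hb1 : b < 1) (p t : ℝ) :
    Sfun b t p = ∫ y in (-sin p)..(sin p), Pk b (cos p * cos t + y * sin t) :=
  (L1 hb hb1 p t).tsum_eq

lemma Pk_cos_cont {a : ℝ} (ha : 0 ≤ a) (ha1 : a < 1) : Continuous fun p => Pk a (cos p) := by
  unfold Pk
  exact Continuous.inv₀ (by fun_prop) fun p => (Pk_pos ha ha1 (abs_cos_le_one p)).ne'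

lemma L3 {a b : ℝ} (ha : 0 ≤ a) (ha1 : a < 1) (hb : 0 ≤ b) (hb1 : b < 1) (t : ℝ) :
    ∫ p in (0:ℝ)..π, sin p * Pk a (cos p) * Sfun b t p =
      π * ∫ s in (0:ℝ)..1, Pk (a*b*s) (cos t) := by
  have hbd : ∀ p, Pk a (cos p) ≤ ((1-a)^2)⁻¹ := by
    intro p
    unfold Pk
    have := cos_le_one p
    exact inv_anti₀ (by have := sub_pos.2 ha1; positivity) (by nlinarith)
  have := dom_sum (F := fun (m:ℕ) p => sin p * Pk a (cos p) * (b^m * (2/(m+1) * sin ((m+1)*p) * Uc m (cos t))))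
    (f := fun p => sin p * Pk a (cos p) * Sfun b t p) (a := 0) (b := π)
    (fun m : ℕ => ((1-a)^2)⁻¹ * (2 * b^m))
    (fun m => (continuous_sin.mul (Pk_cos_cont ha ha1)).mul (by fun_prop))
    (((summable_geometric_of_lt_one hb hb1).mul_left 2).mul_left _) (fun n y hy => ?_) (fun y hy => ?_)
  · refine this.unique ?_
    have h4 := (L4 (mul_nonneg ha hb) (by nlinarith : a*b < 1) (abs_cos_le_one t)).mul_left π
    refine hsum_congr h4 (fun m => ?_)
    have : ∀ p, sin p * Pk a (cos p) * (b^m * (2/(m+1) * sin ((m+1)*p) * Uc m (cos t))) =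
      (b^m * (2/(m+1) * Uc m (cos t))) * (sin p * Pk a (cos p) * sin ((m+1)*p)) := by intro p; ring
    simp_rw [this]
    rw [intervalIntegral.integral_const_mul, L2 ha ha1]
    rw [mul_pow]; ring
  · rw [abs_mul]
    refine mul_le_mul ?_ (term_bound hb t y n) (abs_nonneg _) (by positivity)
    rw [abs_mul, abs_of_nonneg (Pk_nonneg ha ha1 (abs_cos_le_one y))]
    exact (mul_le_of_le_one_left (Pk_nonneg ha ha1 (abs_cos_le_one y)) (abs_sin_le_one y)).trans (hbd y)
  · exact (L1 hb hb1 y t).summable.hasSum.mul_left _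

lemma lint_of_interval {f : ℝ → ℝ} {a b : ℝ} (hab : a ≤ b) (hf : IntervalIntegrable f volume a b)
    (h0 : ∀ x ∈ Set.Ioo a b, 0 ≤ f x) :
    ∫⁻ x in Set.Ioo a b, ENNReal.ofReal (f x) = ENNReal.ofReal (∫ x in a..b, f x) := by
  rw [intervalIntegral.integral_of_le hab, ← integral_Ioc_eq_integral_Ioo.symm,
    ofReal_integral_eq_lintegral_ofReal]
  · exact ((intervalIntegrable_iff_integrableOn_Ioo_of_le hab).1 hf)
  · exact (ae_restrict_iff' measurableSet_Ioo).2 (Filter.Eventually.of_forall h0)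

/-- Logan-Shepp type convolution identity, generating function form. -/
lemma LL {a b : ℝ} (ha : 0 ≤ a) (ha1 : a < 1) (hb : 0 ≤ b) (hb1 : b < 1) (t : ℝ) :
    ∫⁻ p in Set.Ioo 0 π, ENNReal.ofReal (sin p) * ∫⁻ y in Set.Ioo (-sin p) (sin p),
      ENNReal.ofReal (Pk a (cos p)) * ENNReal.ofReal (Pk b (cos p * cos t + y * sin t)) =
    ENNReal.ofReal π * ∫⁻ s in Set.Ioo 0 1, ENNReal.ofReal (Pk (a*b*s) (cos t)) := by
  have hab : 0 ≤ a*b := mul_nonneg ha hb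
  have hab1 : a*b < 1 := by nlinarith
  have key : ∀ s ∈ Set.Icc (0:ℝ) 1, 0 ≤ a*b*s ∧ a*b*s < 1 := fun s hs =>
    ⟨mul_nonneg hab hs.1, lt_of_le_of_lt (mul_le_of_le_one_right hab hs.2) hab1⟩
  rw [lint_of_interval zero_le_one, ← ENNReal.ofReal_mul pi_pos.le, ← L3 ha ha1 hb hb1 t,
    ← lint_of_interval pi_pos.le]
  rotate_left
  · refine Continuous.intervalIntegrable ?_ _ _
    exact (continuous_sin.mul (Pk_cos_cont ha ha1)).mul (Sfun_cont hb hb1 t)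
  · intro p hp
    refine mul_nonneg (mul_nonneg (sin_pos_of_mem_Ioo hp).le (Pk_nonneg ha ha1 (abs_cos_le_one p))) ?_
    rw [Sfun_eq hb hb1]
    refine intervalIntegral.integral_nonneg (by linarith [sin_pos_of_mem_Ioo hp]) fun y hy => ?_
    exact Pk_nonneg hb hb1 (arg_bound ((abs_le.2 hy).trans (le_abs_self _)))
  · refine ContinuousOn.intervalIntegrable ?_
    rw [Set.uIcc_of_le zero_le_one]
    unfold Pk
    exact ContinuousOn.inv₀ (by fun_prop) fun s hs =>
      (Pk_pos (key s hs).1 (key s hs).2 (abs_cos_le_one t)).ne'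
  · intro s hs
    have := key s (Set.Ioo_subset_Icc_self hs)
    exact Pk_nonneg this.1 this.2 (abs_cos_le_one t)
  refine setLIntegral_congr_fun measurableSet_Ioo fun p hp => ?_
  have hsp := sin_pos_of_mem_Ioo hp
  rw [ENNReal.ofReal_mul, ENNReal.ofReal_mul hsp.le, lintegral_const_mul', Sfun_eq hb hb1, ← mul_assoc,
    lint_of_interval (by linarith)]
  · refine ContinuousOn.intervalIntegrable ?_
    rw [Set.uIcc_of_le (by linarith)]
    unfold Pk
    exact ContinuousOn.inv₀ (by fun_prop) fun y hy =>
      (Pk_pos hb hb1 (arg_bound ((abs_le.2 hy).trans (le_abs_self _)))).ne'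
  · intro y hy
    exact Pk_nonneg hb hb1 (arg_bound ((abs_lt.2 hy).le.trans (le_abs_self _)))
  · exact ENNReal.ofReal_ne_top
  · exact mul_nonneg hsp.le (Pk_nonneg ha ha1 (abs_cos_le_one p))

end K5

namespace K5
open Real

lemma pi_succ {n : ℕ} (f : (Fin (n+1) → ℝ) → ENNReal) (hf : Measurable f) :
    ∫⁻ x, f x = ∫⁻ a : ℝ, ∫⁻ z : Fin n → ℝ, f (Fin.cons a z) := by
  have h := (volume_preserving_piFinSuccAbove (fun _ : Fin (n+1) => ℝ) 0).symm
  have hm := (MeasurableEquiv.piFinSuccAbove (fun _ : Fin (n+1) => ℝ) 0).symm.measurable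
  rw [← h.lintegral_comp hf, Measure.volume_eq_prod, lintegral_prod _ (by exact (hf.comp hm).aemeasurable)]
  refine lintegral_congr fun a => lintegral_congr fun z => ?_
  simp [Fin.insertNthEquiv]

lemma euc4 (H : ℝ × ℝ × ℝ → ENNReal) (hH : Measurable H) :
    ∫⁻ x : EuclideanSpace ℝ (Fin 4), H (‖x‖, x 0, x 1) =
      ∫⁻ a : ℝ, ∫⁻ b : ℝ, ∫⁻ z : ℝ × ℝ, H (√((a^2+b^2)+(z.1^2+z.2^2)), a, b) := by
  have h1 := PiLp.volume_preserving_toLp (Fin 4)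
  have hm : Measurable fun x : EuclideanSpace ℝ (Fin 4) => H (‖x‖, x 0, x 1) := by fun_prop
  have hm2 : Measurable fun x : Fin 4 → ℝ => H (√(x 0^2 + x 1^2 + (x 2^2 + x 3^2)), x 0, x 1) := by fun_prop
  rw [← h1.lintegral_comp hm]
  have : ∀ x : Fin 4 → ℝ, H (‖(WithLp.toLp 2 x : EuclideanSpace ℝ (Fin 4))‖, x 0, x 1) =
     H (√(x 0^2 + x 1^2 + (x 2^2 + x 3^2)), x 0, x 1) := by
    intro x
    rw [EuclideanSpace.norm_eq]
    simp [Fin.sum_univ_four, add_assoc]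
  simp only [this]
  rw [pi_succ _ hm2]
  refine lintegral_congr fun a => ?_
  rw [pi_succ _ (by fun_prop)]
  refine lintegral_congr fun b => ?_
  rw [← (volume_preserving_finTwoArrow ℝ).lintegral_comp (by fun_prop)]
  rfl

lemma polar2 (K : ℝ → ENNReal) (hK : Measurable K) :
    ∫⁻ z : ℝ × ℝ, K (z.1^2+z.2^2) = ENNReal.ofReal (2*π) * ∫⁻ r in Set.Ioi (0:ℝ), ENNReal.ofReal r * K (r^2) := by
  rw [← lintegral_comp_polarCoord_symm]
  have : ∀ p : ℝ × ℝ, ENNReal.ofReal p.1 • K ((polarCoord.symm p).1^2 + (polarCoord.symm p).2^2) =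
      ENNReal.ofReal p.1 * K (p.1^2) := by
    intro p
    simp only [polarCoord_symm_apply, smul_eq_mul]
    congr 2
    nlinarith [sin_sq_add_cos_sq p.2]
  simp only [this]
  rw [polarCoord_target, Measure.volume_eq_prod, setLIntegral_prod _ (by fun_prop)]
  simp only [lintegral_const, Measure.restrict_apply MeasurableSet.univ, Set.univ_inter, volume_Ioo]
  rw [lintegral_mul_const'' _ (by fun_prop), mul_comm]
  congr 2; ring

lemma radial_shift (c : ℝ) (hc : 0 ≤ c) (K : ℝ → ENNReal) :
    ∫⁻ r in Set.Ioi (0:ℝ), ENNReal.ofReal r * K (√(c + r^2)) =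
      ∫⁻ r in Set.Ioi (√c), ENNReal.ofReal r * K r := by
  have him : (fun r => √(c + r^2)) '' Set.Ioi (0:ℝ) = Set.Ioi (√c) := by
    ext s
    simp only [Set.mem_image, Set.mem_Ioi]
    constructor
    · rintro ⟨r, hr, rfl⟩
      exact sqrt_lt_sqrt hc (by nlinarith)
    · intro hs
      have hs0 : 0 < s := lt_of_le_of_lt (sqrt_nonneg c) hs
      have h2 : c < s^2 := (sqrt_lt' hs0).1 hs
      refine ⟨√(s^2 - c), sqrt_pos.2 (by linarith), ?_⟩
      rw [sq_sqrt (by linarith), add_sub_cancel, sqrt_sq hs0.le]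
  rw [← him, lintegral_image_eq_lintegral_abs_deriv_mul measurableSet_Ioi (f' := fun r => r / √(c+r^2))]
  · refine setLIntegral_congr_fun measurableSet_Ioi fun r hr => ?_
    have hr : 0 < r := hr
    have hp : 0 < √(c+r^2) := sqrt_pos.2 (by positivity)
    rw [← mul_assoc, ← ENNReal.ofReal_mul (abs_nonneg _), abs_of_nonneg (by positivity)]
    congr 2; field_simp
  · intro r hr
    have hr : 0 < r := hr
    have h1 : HasDerivAt (fun r : ℝ => c + r^2) (2*r) r := by
      simpa using (hasDerivAt_pow 2 r).const_add c
    have := (h1.sqrt (by positivity)).hasDerivWithinAt (s := Set.Ioi 0)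
    refine this.congr_deriv ?_
    field_simp
  · intro r hr s hs h
    have hr : 0 < r := hr
    have hs : 0 < s := hs
    have h := (sqrt_inj (by positivity) (by positivity)).1 h
    exact (pow_left_inj₀ hr.le hs.le two_ne_zero).1 (by linarith)

lemma disc (r : ℝ) (hr : 0 < r) (H : ℝ → ℝ → ENNReal) :
    ∫⁻ a : ℝ, ∫⁻ b in {b | a^2+b^2 < r^2}, H a b =
     ENNReal.ofReal (r^2) * ∫⁻ p in Set.Ioo 0 π, ENNReal.ofReal (sin p) *
       ∫⁻ y in Set.Ioo (-sin p) (sin p), H (r * cos p) (r*y) := by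
  have him : (fun p => r * cos p) '' Set.Ioo 0 π = Set.Ioo (-r) r := by
    ext s
    simp only [Set.mem_image, Set.mem_Ioo]
    constructor
    · rintro ⟨p, hp, rfl⟩
      have h1 := sin_sq_add_cos_sq p
      have h2 := sin_pos_of_mem_Ioo hp
      have : |cos p| < 1 := by rw [← sq_lt_one_iff_abs_lt_one]; nlinarith
      rw [abs_lt] at this
      constructor <;> nlinarith
    · intro hs
      have h1 : -1 < s/r := by rw [lt_div_iff₀ hr]; linarith
      have h2 : s/r < 1 := by rw [div_lt_iff₀ hr]; linarith
      refine ⟨arccos (s/r), ⟨arccos_pos.2 h2, ?_⟩, ?_⟩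
      · refine lt_of_le_of_ne (arccos_le_pi _) fun h => ?_
        rw [arccos_eq_pi] at h; linarith
      · rw [cos_arccos h1.le h2.le]; field_simp
  have h0 : ∫⁻ a : ℝ, ∫⁻ b in {b | a^2+b^2 < r^2}, H a b =
      ∫⁻ a in Set.Ioo (-r) r, ∫⁻ b in {b | a^2+b^2 < r^2}, H a b := by
    rw [← lintegral_indicator measurableSet_Ioo]
    refine lintegral_congr fun a => ?_
    by_cases ha : a ∈ Set.Ioo (-r) r
    · simp [ha]
    · rw [Set.indicator_of_notMem ha]
      have : {b | a^2+b^2 < r^2} = ∅ := by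
        ext b
        simp only [Set.mem_ofPred_eq, Set.mem_empty_iff_false, iff_false, not_lt]
        have : r ≤ |a| := by
          by_contra h
          exact ha (abs_lt.1 (not_le.1 h))
        have := pow_le_pow_left₀ hr.le this 2
        rw [sq_abs] at this
        nlinarith [sq_nonneg b]
      rw [this]; simp
  rw [h0, ← him, lintegral_image_eq_lintegral_abs_deriv_mul measurableSet_Ioo (f' := fun p => r * (-sin p)),
    ← lintegral_const_mul' _ _ ENNReal.ofReal_ne_top]
  · refine setLIntegral_congr_fun measurableSet_Ioo fun p hp => ?_
    have hs := sin_pos_of_mem_Ioo hp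
    have : {b | (r * cos p)^2+b^2 < r^2} = (fun y => r * y) '' Set.Ioo (-sin p) (sin p) := by
      ext b
      simp only [Set.mem_image, Set.mem_Ioo, Set.mem_ofPred_eq]
      have h1 := sin_sq_add_cos_sq p
      constructor
      · intro hb
        refine ⟨b/r, ?_, by field_simp⟩
        rw [← abs_lt]
        refine abs_lt_of_sq_lt_sq ?_ hs.le
        rw [div_pow, div_lt_iff₀ (by positivity)]
        nlinarith
      · rintro ⟨y, hy, rfl⟩
        have := sq_lt_sq' hy.1 hy.2
        have : r^2 * y^2 < r^2 * sin p^2 := mul_lt_mul_of_pos_left this (by positivity)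
        nlinarith
    rw [this, lintegral_image_eq_lintegral_abs_deriv_mul measurableSet_Ioo (f' := fun _ => r),
      lintegral_const_mul' _ _ ENNReal.ofReal_ne_top, ← mul_assoc, ← mul_assoc,
      ← ENNReal.ofReal_mul (abs_nonneg _), ← ENNReal.ofReal_mul (by positivity)]
    · congr 2
      rw [mul_neg, abs_neg, abs_of_pos (by positivity), abs_of_pos hr]; ring
    · intro y _
      simpa using ((hasDerivAt_id y).const_mul r).hasDerivWithinAt
    · intro y _ z _ h
      exact mul_left_cancel₀ hr.ne' h
  · intro p _
    exact ((hasDerivAt_cos p).const_mul r).hasDerivWithinAt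
  · intro p hp q hq h
    exact injOn_cos (Set.Ioo_subset_Icc_self hp) (Set.Ioo_subset_Icc_self hq) (mul_left_cancel₀ hr.ne' h)

lemma coord4 (H : ℝ × ℝ × ℝ → ENNReal) (hH : Measurable H) :
    ∫⁻ x : EuclideanSpace ℝ (Fin 4), H (‖x‖, x 0, x 1) =
      ENNReal.ofReal (2*π) * ∫⁻ r in Set.Ioi (0:ℝ), ENNReal.ofReal (r^3) *
        ∫⁻ p in Set.Ioo 0 π, ENNReal.ofReal (sin p) *
         ∫⁻ y in Set.Ioo (-sin p) (sin p), H (r, r * cos p, r * y) := by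
  rw [euc4 H hH]
  have e1 : ∀ a b : ℝ, ∫⁻ z : ℝ × ℝ, H (√((a^2+b^2)+(z.1^2+z.2^2)), a, b) =
      ENNReal.ofReal (2*π) * ∫⁻ r in Set.Ioi (√(a^2+b^2)), ENNReal.ofReal r * H (r, a, b) := by
    intro a b
    rw [polar2 (fun s => H (√((a^2+b^2)+s), a, b)) (by fun_prop),
      radial_shift (a^2+b^2) (by positivity) (fun r => H (r, a, b))]
  simp only [e1]
  let S : Set (ℝ × ℝ × ℝ) := {w | 0 < w.1 ∧ w.2.1^2 + w.2.2^2 < w.1^2}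
  have hS : MeasurableSet S := by
    refine MeasurableSet.inter (s₁ := {w : ℝ × ℝ × ℝ | 0 < w.1})
      (s₂ := {w : ℝ × ℝ × ℝ | w.2.1^2 + w.2.2^2 < w.1^2}) ?_ ?_
    · exact measurableSet_lt measurable_const (by fun_prop)
    · exact measurableSet_lt (by fun_prop) (by fun_prop)
  let Q : ℝ × ℝ × ℝ → ENNReal := S.indicator fun w => ENNReal.ofReal w.1 * H w
  have hQ : Measurable Q := Measurable.indicator (by fun_prop) hS
  have e2 : ∀ a b : ℝ, ∫⁻ r in Set.Ioi (√(a^2+b^2)), ENNReal.ofReal r * H (r, a, b) = ∫⁻ r, Q (r, a, b) := by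
    intro a b
    rw [← lintegral_indicator measurableSet_Ioi]
    refine lintegral_congr fun r => ?_
    have : r ∈ Set.Ioi (√(a^2+b^2)) ↔ (r, a, b) ∈ S := by
      simp only [Set.mem_Ioi, S, Set.mem_ofPred_eq]
      constructor
      · intro h
        have h0 := lt_of_le_of_lt (sqrt_nonneg _) h
        exact ⟨h0, (sqrt_lt' h0).1 h⟩
      · intro h
        exact (sqrt_lt' h.1).2 h.2
    by_cases h : (r, a, b) ∈ S
    · simp only [Q]
      rw [Set.indicator_of_mem h, Set.indicator_of_mem (this.2 h)]
    · simp only [Q]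
      rw [Set.indicator_of_notMem h, Set.indicator_of_notMem (fun h' => h (this.1 h'))]
  simp only [e2]
  have hQ2 : Measurable fun w : ℝ × ℝ => ∫⁻ r, Q (r, w.1, w.2) := by
    apply Measurable.lintegral_prod_right' (f := fun w : (ℝ × ℝ) × ℝ => Q (w.2, w.1.1, w.1.2))
    fun_prop
  have hQ3 : Measurable fun w : ℝ × ℝ => ∫⁻ b, Q (w.2, w.1, b) := by
    apply Measurable.lintegral_prod_right' (f := fun w : (ℝ × ℝ) × ℝ => Q (w.1.2, w.1.1, w.2))
    fun_prop
  simp only [lintegral_const_mul' _ _ (ENNReal.ofReal_ne_top (r := 2*π))]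
  congr 1
  have e3 : ∀ a : ℝ, ∫⁻ b, ∫⁻ r, Q (r, a, b) = ∫⁻ r, ∫⁻ b, Q (r, a, b) := by
    intro a
    exact lintegral_lintegral_swap (by unfold Function.uncurry; fun_prop)
  simp only [e3]
  rw [lintegral_lintegral_swap (by exact hQ3.aemeasurable), ← lintegral_indicator measurableSet_Ioi]
  refine lintegral_congr fun r => ?_
  by_cases hr : 0 < r
  · rw [Set.indicator_of_mem (by exact hr)]
    have : ENNReal.ofReal (r^3) = ENNReal.ofReal r * ENNReal.ofReal (r^2) := by
      rw [← ENNReal.ofReal_mul hr.le]; ring_nf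
    rw [this, mul_assoc, ← disc r hr (fun a b => H (r, a, b)), ← lintegral_const_mul' _ _ ENNReal.ofReal_ne_top]
    refine lintegral_congr fun a => ?_
    rw [← lintegral_const_mul' _ _ ENNReal.ofReal_ne_top, ← lintegral_indicator (measurableSet_lt (by fun_prop) (by fun_prop))]
    refine lintegral_congr fun b => ?_
    simp [Q, S, Set.indicator_apply, hr]
  · rw [Set.indicator_of_notMem (by exact hr)]
    simp [Q, S, Set.indicator_apply, hr]

end K5

namespace K5
open Real

abbrev E4 := EuclideanSpace ℝ (Fin 4)

lemma basis1 (u : E4) (hu : ‖u‖ = 1) (w : E4) (huw : inner ℝ u w = 0) :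
    ∃ b : OrthonormalBasis (Fin 4) ℝ E4, b 0 = u ∧ w = ‖w‖ • b 1 := by
  have hcard : Module.finrank ℝ E4 = Fintype.card (Fin 4) := by simp
  by_cases hw : w = 0
  · obtain ⟨b, hb⟩ := Orthonormal.exists_orthonormalBasis_extension_of_card_eq (𝕜 := ℝ) hcard
      (v := fun _ => u) (s := {0}) (by
        constructor
        · intro i; simpa using hu
        · intro i j hij
          exact absurd (Subsingleton.elim i j) hij)
    exact ⟨b, hb 0 rfl, by simp [hw]⟩
  · have hw' : ‖w‖ ≠ 0 := norm_ne_zero_iff.2 hw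
    obtain ⟨b, hb⟩ := Orthonormal.exists_orthonormalBasis_extension_of_card_eq (𝕜 := ℝ) hcard
      (v := ![u, ‖w‖⁻¹ • w, 0, 0]) (s := {0, 1}) (by
        constructor
        · rintro ⟨i, hi⟩
          rcases hi with rfl | rfl
          · simpa using hu
          · simp [norm_smul, hw']
        · rintro ⟨i, hi⟩ ⟨j, hj⟩ hij
          rcases hi with rfl | rfl <;> rcases hj with rfl | rfl
          · exact absurd rfl hij
          · simp [inner_smul_right, huw]
          · simp [inner_smul_left, real_inner_comm, huw]
          · exact absurd rfl hij)
    refine ⟨b, by simpa using hb 0 (by simp), ?_⟩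
    rw [hb 1 (by simp)]
    simp [smul_smul, hw']

lemma basis2 (p q : E4) (hp : p ≠ 0) (hq : q ≠ 0) :
    ∃ b : OrthonormalBasis (Fin 4) ℝ E4, ∃ t : ℝ, p = ‖p‖ • b 0 ∧
      q = ‖q‖ • (cos t • b 0 + sin t • b 1) := by
  have hp' : ‖p‖ ≠ 0 := norm_ne_zero_iff.2 hp
  have hq' : 0 < ‖q‖ := norm_pos_iff.2 hq
  set u := ‖p‖⁻¹ • p with hu
  have hu1 : ‖u‖ = 1 := by simp [hu, norm_smul, hp']
  set c := inner ℝ u q with hc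
  have huu : inner ℝ u u = (1:ℝ) := by rw [real_inner_self_eq_norm_sq, hu1]; norm_num
  obtain ⟨b, hb0, hb1⟩ := basis1 u hu1 (q - c • u) (by
    rw [inner_sub_right, inner_smul_right, huu, ← hc]; ring)
  set d := ‖q - c • u‖ with hd
  have hq2 : q = c • b 0 + d • b 1 := by rw [← hb1, hb0]; simp
  have hn : ‖q‖^2 = c^2 + d^2 := by
    have h01 : inner ℝ (b 0) (b 1) = (0:ℝ) := b.orthonormal.2 (by decide)
    have h10 : inner ℝ (b 1) (b 0) = (0:ℝ) := b.orthonormal.2 (by decide)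
    have h00 : inner ℝ (b 0) (b 0) = (1:ℝ) := by rw [real_inner_self_eq_norm_sq, b.orthonormal.1]; norm_num
    have h11 : inner ℝ (b 1) (b 1) = (1:ℝ) := by rw [real_inner_self_eq_norm_sq, b.orthonormal.1]; norm_num
    rw [← real_inner_self_eq_norm_sq]
    conv_lhs => rw [hq2]
    simp only [inner_add_left, inner_add_right, inner_smul_left, inner_smul_right, h01, h10, h00, h11]
    simp; ring
  have hd0 : 0 ≤ d := norm_nonneg _
  have habs : |c| ≤ ‖q‖ := abs_le_of_sq_le_sq (by nlinarith) hq'.le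
  rw [abs_le] at habs
  have h1 : cos (arccos (c/‖q‖)) = c/‖q‖ := by
    apply cos_arccos
    · rw [le_div_iff₀ hq']; linarith
    · rw [div_le_iff₀ hq']; linarith
  have h2 : sin (arccos (c/‖q‖)) = d/‖q‖ := by
    rw [sin_arccos]
    have : 1 - (c/‖q‖)^2 = (d/‖q‖)^2 := by
      field_simp; linarith
    rw [this, sqrt_sq (by positivity)]
  refine ⟨b, arccos (c/‖q‖), ?_, ?_⟩
  · rw [hb0, hu, smul_smul, mul_inv_cancel₀ hp', one_smul]
  · rw [h1, h2, smul_add, smul_smul, smul_smul, mul_div_cancel₀ _ hq'.ne', mul_div_cancel₀ _ hq'.ne']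
    exact hq2

lemma coordPQ (p q : E4) (hp : p ≠ 0) (hq : q ≠ 0) : ∃ t : ℝ, inner ℝ p q = ‖p‖*‖q‖*cos t ∧
    ∀ H : ℝ × ℝ × ℝ → ENNReal, Measurable H →
    ∫⁻ x : E4, H (‖x‖, inner ℝ p x, inner ℝ q x) =
      ENNReal.ofReal (2*π) * ∫⁻ r in Set.Ioi (0:ℝ), ENNReal.ofReal (r^3) *
        ∫⁻ a in Set.Ioo 0 π, ENNReal.ofReal (sin a) *
         ∫⁻ y in Set.Ioo (-sin a) (sin a), H (r, r * ‖p‖ * cos a, r * ‖q‖ * (cos a * cos t + y * sin t)) := by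
  obtain ⟨b, t, hpb, hqb⟩ := basis2 p q hp hq
  refine ⟨t, ?_, ?_⟩
  · have h01 : inner ℝ (b 0) (b 1) = (0:ℝ) := b.orthonormal.2 (by decide)
    have h00 : inner ℝ (b 0) (b 0) = (1:ℝ) := by rw [real_inner_self_eq_norm_sq, b.orthonormal.1]; norm_num
    conv_lhs => rw [hpb, hqb]
    simp only [inner_add_right, inner_smul_left, inner_smul_right, h01, h00]
    simp; ring
  · intro H hH
    have hm : Measurable fun x : E4 => H (‖x‖, inner ℝ p x, inner ℝ q x) := by fun_prop
    rw [← (b.measurePreserving_repr_symm).lintegral_comp hm]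
    have e : ∀ z : E4, H (‖b.repr.symm z‖, inner ℝ p (b.repr.symm z), inner ℝ q (b.repr.symm z)) =
       H (‖z‖, ‖p‖ * z 0, ‖q‖ * (z 0 * cos t + z 1 * sin t)) := by
      intro z
      have hi : ∀ i, inner ℝ (b i) (b.repr.symm z) = z i := by
        intro i
        rw [← b.repr_apply_apply, LinearIsometryEquiv.apply_symm_apply]
      have h1 : inner ℝ p (b.repr.symm z) = ‖p‖ * z 0 := by
        conv_lhs => rw [hpb]
        rw [inner_smul_left, hi]; simp
      have h2 : inner ℝ q (b.repr.symm z) = ‖q‖ * (z 0 * cos t + z 1 * sin t) := by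
        conv_lhs => rw [hqb]
        rw [inner_smul_left, inner_add_left, inner_smul_left, inner_smul_left, hi, hi]
        simp only [conj_trivial]; ring
      rw [h1, h2, LinearIsometryEquiv.norm_map]
    simp only [e]
    rw [coord4 (fun w => H (w.1, ‖p‖ * w.2.1, ‖q‖ * (w.2.1 * cos t + w.2.2 * sin t))) (by fun_prop)]
    have e2 : ∀ r a y : ℝ, H (r, ‖p‖ * (r * cos a), ‖q‖ * (r * cos a * cos t + r * y * sin t)) =
      H (r, r * ‖p‖ * cos a, r * ‖q‖ * (cos a * cos t + y * sin t)) := by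
      intro r a y
      have h1 : ‖p‖ * (r * cos a) = r * ‖p‖ * cos a := by ring
      have h2 : ‖q‖ * (r * cos a * cos t + r * y * sin t) = r * ‖q‖ * (cos a * cos t + y * sin t) := by ring
      rw [h1, h2]
    simp only [e2]

noncomputable def rho (r P : ℝ) : ℝ := min (r/P) (P/r)

lemma rho_meas : Measurable fun w : ℝ × ℝ => rho w.1 w.2 := by unfold rho; fun_prop

lemma rho_pos {r P : ℝ} (hr : 0 < r) (hP : 0 < P) : 0 < rho r P :=
  lt_min (by positivity) (by positivity)

lemma rho_lt {r P : ℝ} (hr : 0 < r) (hP : 0 < P) (h : r ≠ P) : rho r P < 1 := by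
  rcases lt_or_gt_of_ne h with h | h
  · exact (min_le_left _ _).trans_lt ((div_lt_one hP).2 h)
  · exact (min_le_right _ _).trans_lt ((div_lt_one hr).2 h)

lemma rho_le {r P : ℝ} (hr : 0 < r) (hP : 0 < P) : rho r P ≤ 1 := by
  by_cases h : r = P
  · subst h; simp [rho, hr.ne']
  · exact (rho_lt hr hP h).le

lemma kernel {r P : ℝ} (hr : 0 < r) (hP : 0 < P) (c : ℝ) :
    (r^2 - 2*(r*P*c) + P^2)⁻¹ = rho r P/(r*P) * Pk (rho r P) c := by
  unfold Pk rho
  rcases le_total r P with h | h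
  · rw [min_eq_left (by rw [div_le_div_iff₀ hP hr]; nlinarith)]
    have : (1 - 2 * (r / P) * c + (r / P) ^ 2) * (r*P) = (r^2 - 2*(r*P*c) + P^2) * (r/P) := by field_simp; ring
    rw [div_mul_eq_mul_div, ← div_eq_mul_inv, div_div, this, div_mul_cancel_right₀ (by positivity)]
  · rw [min_eq_right (by rw [div_le_div_iff₀ hr hP]; nlinarith)]
    have : (1 - 2 * (P / r) * c + (P / r) ^ 2) * (r*P) = (r^2 - 2*(r*P*c) + P^2) * (P/r) := by field_simp
    rw [div_mul_eq_mul_div, ← div_eq_mul_inv, div_div, this, div_mul_cancel_right₀ (by positivity)]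

noncomputable def kap (x : E4) : ENNReal := ENNReal.ofReal ((‖x‖^2)⁻¹)

lemma kap_meas : Measurable kap := by unfold kap; fun_prop

lemma kap_sub (x p : E4) : kap (x - p) = ENNReal.ofReal ((‖x‖^2 - 2 * inner ℝ p x + ‖p‖^2)⁻¹) := by
  unfold kap
  rw [norm_sub_sq_real, real_inner_comm]

end K5

namespace K5
open Real

@[fun_prop]
lemma rho_meas2 {α : Type*} [MeasurableSpace α] {f g : α → ℝ} (hf : Measurable f) (hg : Measurable g) :
    Measurable fun x => rho (f x) (g x) := by unfold rho; fun_prop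

@[fun_prop]
lemma Pk_meas2 {α : Type*} [MeasurableSpace α] {f g : α → ℝ} (hf : Measurable f) (hg : Measurable g) :
    Measurable fun x => Pk (f x) (g x) := by unfold Pk; fun_prop

@[fun_prop]
lemma kap_meas2 {α : Type*} [MeasurableSpace α] {f : α → E4} (hf : Measurable f) :
    Measurable fun x => kap (f x) := kap_meas.comp hf

lemma ang (p q : E4) (hp : p ≠ 0) (hq : q ≠ 0) (w : ℝ → ENNReal) (α β : ℝ → ℝ)
    (hw : Measurable w) (hα : Measurable α) (hβ : Measurable β)
    (h : ∀ᵐ r, 0 < r → (0 ≤ α r ∧ α r < 1) ∧ 0 ≤ β r ∧ β r < 1) :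
    ∫⁻ x : E4, w ‖x‖ * (ENNReal.ofReal (Pk (α ‖x‖) (inner ℝ p x / (‖x‖ * ‖p‖))) *
        ENNReal.ofReal (Pk (β ‖x‖) (inner ℝ q x / (‖x‖ * ‖q‖)))) =
      ENNReal.ofReal (2*π^2) * ∫⁻ r in Set.Ioi (0:ℝ), ENNReal.ofReal (r^3) * w r *
        ∫⁻ s in Set.Ioo (0:ℝ) 1, ENNReal.ofReal (Pk (α r * β r * s) (inner ℝ p q / (‖p‖*‖q‖))) := by
  have hP : 0 < ‖p‖ := norm_pos_iff.2 hp
  have hQ : 0 < ‖q‖ := norm_pos_iff.2 hq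
  obtain ⟨t, ht, hH⟩ := coordPQ p q hp hq
  rw [hH (fun z => w z.1 * (ENNReal.ofReal (Pk (α z.1) (z.2.1 / (z.1 * ‖p‖))) *
        ENNReal.ofReal (Pk (β z.1) (z.2.2 / (z.1 * ‖q‖))))) (by fun_prop)]
  have hpi : ENNReal.ofReal (2*π^2) = ENNReal.ofReal (2*π) * ENNReal.ofReal π := by
    rw [← ENNReal.ofReal_mul (by positivity)]; congr 1; ring
  rw [hpi, mul_assoc, ← lintegral_const_mul' (ENNReal.ofReal π) _ ENNReal.ofReal_ne_top]
  congr 1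
  apply setLIntegral_congr_fun_ae (s := Set.Ioi (0:ℝ)) measurableSet_Ioi
  filter_upwards [h] with r hr hr0
  have hr0 : 0 < r := hr0
  obtain ⟨⟨ha, ha1⟩, hb, hb1⟩ := hr hr0
  have hc : inner ℝ p q / (‖p‖*‖q‖) = cos t := by rw [ht]; field_simp
  rw [hc]
  have e1 : ∀ a, r * ‖p‖ * cos a / (r * ‖p‖) = cos a := by intro a; field_simp
  have e2 : ∀ a y, r * ‖q‖ * (cos a * cos t + y * sin t) / (r * ‖q‖) = cos a * cos t + y * sin t := by
    intro a y; field_simp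
  simp only [e1, e2]
  have key := LL ha ha1 hb hb1 t
  have e3 : ∀ a, ENNReal.ofReal (sin a) * ∫⁻ y in Set.Ioo (-sin a) (sin a),
      w r * (ENNReal.ofReal (Pk (α r) (cos a)) * ENNReal.ofReal (Pk (β r) (cos a * cos t + y * sin t))) =
      w r * (ENNReal.ofReal (sin a) * ∫⁻ y in Set.Ioo (-sin a) (sin a),
        (ENNReal.ofReal (Pk (α r) (cos a)) * ENNReal.ofReal (Pk (β r) (cos a * cos t + y * sin t)))) := by
    intro a
    rw [lintegral_const_mul _ (by fun_prop)]; ring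
  simp only [e3]
  rw [lintegral_const_mul'', key]
  · ring
  · apply Measurable.aemeasurable
    apply Measurable.mul (by fun_prop)
    have : Measurable fun z : ℝ × ℝ => (Set.Ioo (-sin z.1) (sin z.1)).indicator (fun y =>
        (ENNReal.ofReal (Pk (α r) (cos z.1)) * ENNReal.ofReal (Pk (β r) (cos z.1 * cos t + y * sin t)))) z.2 := by
      have hs : MeasurableSet {z : ℝ × ℝ | z.2 ∈ Set.Ioo (-sin z.1) (sin z.1)} := by
        have h1 : MeasurableSet {z : ℝ × ℝ | -sin z.1 < z.2} := measurableSet_lt (by fun_prop) (by fun_prop)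
        have h2 : MeasurableSet {z : ℝ × ℝ | z.2 < sin z.1} := measurableSet_lt (by fun_prop) (by fun_prop)
        have h3 : {z : ℝ × ℝ | z.2 ∈ Set.Ioo (-sin z.1) (sin z.1)} =
          {z : ℝ × ℝ | -sin z.1 < z.2} ∩ {z : ℝ × ℝ | z.2 < sin z.1} := by ext z; simp
        rw [h3]; exact h1.inter h2
      have hm : Measurable fun z : ℝ × ℝ => (ENNReal.ofReal (Pk (α r) (cos z.1)) * ENNReal.ofReal (Pk (β r) (cos z.1 * cos t + z.2 * sin t))) := by fun_prop
      exact hm.indicator hs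
    have := this.lintegral_prod_right' (ν := volume)
    simpa only [lintegral_indicator measurableSet_Ioo] using this


lemma kap_kernel (x p : E4) (hx : x ≠ 0) (hp : p ≠ 0) :
    kap (x - p) = ENNReal.ofReal (rho ‖x‖ ‖p‖ / (‖x‖ * ‖p‖)) *
      ENNReal.ofReal (Pk (rho ‖x‖ ‖p‖) (inner ℝ p x / (‖x‖ * ‖p‖))) := by
  have hP : 0 < ‖p‖ := norm_pos_iff.2 hp
  have hX : 0 < ‖x‖ := norm_pos_iff.2 hx
  have hr := rho_pos hX hP
  rw [← ENNReal.ofReal_mul (by positivity), ← kernel hX hP, kap_sub]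
  congr 4
  field_simp

lemma ae_ne (c : ℝ) : ∀ᵐ r : ℝ, r ≠ c := by
  simp [ae_iff, measure_singleton]

lemma ae_ne4 (c : E4) : ∀ᵐ r : E4, r ≠ c := by
  simp [ae_iff, measure_singleton]

lemma inner_int (p q : E4) (hp : p ≠ 0) (hq : q ≠ 0) :
    ∫⁻ x : E4, kap x * kap (x - p) * kap (x - q) =
      ENNReal.ofReal (2*π^2) * ∫⁻ r in Set.Ioi (0:ℝ), ∫⁻ s in Set.Ioo (0:ℝ) 1,
        ENNReal.ofReal (rho r ‖p‖ * rho r ‖q‖ / (r * ‖p‖ * ‖q‖)) *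
         ENNReal.ofReal (Pk (rho r ‖p‖ * rho r ‖q‖ * s) (inner ℝ p q / (‖p‖*‖q‖))) := by
  have hP : 0 < ‖p‖ := norm_pos_iff.2 hp
  have hQ : 0 < ‖q‖ := norm_pos_iff.2 hq
  have := ang p q hp hq (fun r => ENNReal.ofReal ((r^2)⁻¹) * (ENNReal.ofReal (rho r ‖p‖ / (r * ‖p‖)) *
    ENNReal.ofReal (rho r ‖q‖ / (r * ‖q‖)))) (fun r => rho r ‖p‖) (fun r => rho r ‖q‖) (by fun_prop) (by fun_prop)
    (by fun_prop) (by
      filter_upwards [ae_ne ‖p‖, ae_ne ‖q‖] with r h1 h2 hr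
      exact ⟨⟨(rho_pos hr hP).le, rho_lt hr hP h1⟩, (rho_pos hr hQ).le, rho_lt hr hQ h2⟩)
  refine (Eq.trans (lintegral_congr_ae ?_) this).trans ?_
  · filter_upwards [ae_ne4 0] with x hx
    rw [kap_kernel x p hx hp, kap_kernel x q hx hq]
    unfold kap
    ring
  congr 1
  refine setLIntegral_congr_fun measurableSet_Ioi fun r hr => ?_
  have hr : 0 < r := hr
  have h1 := rho_pos hr hP
  have h2 := rho_pos hr hQ
  rw [lintegral_const_mul' _ _ ENNReal.ofReal_ne_top]
  congr 1
  rw [← ENNReal.ofReal_mul (by positivity), ← ENNReal.ofReal_mul (by positivity), ← ENNReal.ofReal_mul (by positivity)]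
  congr 1
  field_simp

end K5

namespace K5
open Real

lemma outer_fix (v : E4) (hv : v ≠ 0) (r s : ℝ) (hr : 0 < r) (hs : s ∈ Set.Ioo (0:ℝ) 1) :
    ∫⁻ q : E4, ENNReal.ofReal (rho r ‖v‖ * rho r ‖q‖ / (r * ‖v‖ * ‖q‖)) *
         ENNReal.ofReal (Pk (rho r ‖v‖ * rho r ‖q‖ * s) (inner ℝ v q / (‖v‖*‖q‖))) * (kap q * kap (q - v)) =
    ENNReal.ofReal (2*π^2) * ∫⁻ u in Set.Ioi (0:ℝ), ∫⁻ s' in Set.Ioo (0:ℝ) 1,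
      ENNReal.ofReal (rho r ‖v‖ * rho r u * rho u ‖v‖ / (‖v‖^2 * r * u)) *
        ENNReal.ofReal (Pk (rho r ‖v‖ * rho r u * rho u ‖v‖ * s * s') 1) := by
  have hV : 0 < ‖v‖ := norm_pos_iff.2 hv
  have hrV := rho_pos hr hV
  have := ang v v hv hv (fun u => ENNReal.ofReal ((u^2)⁻¹) * (ENNReal.ofReal (rho u ‖v‖ / (u * ‖v‖)) *
    ENNReal.ofReal (rho r ‖v‖ * rho r u / (r * ‖v‖ * u)))) (fun u => rho u ‖v‖)
    (fun u => rho r ‖v‖ * rho r u * s) (by fun_prop) (by fun_prop)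
    (by fun_prop) (by
      filter_upwards [ae_ne ‖v‖] with u h1 hu
      have h3 := rho_pos hr hu
      have h4 := rho_le hr hu
      have h5 := rho_le hr hV
      refine ⟨⟨(rho_pos hu hV).le, rho_lt hu hV h1⟩, ?_, ?_⟩
      · have := hs.1
        positivity
      · calc rho r ‖v‖ * rho r u * s ≤ 1 * s := by
              have := hs.1
              gcongr
              nlinarith
          _ < 1 := by linarith [hs.2])
  refine (Eq.trans (lintegral_congr_ae ?_) this).trans ?_
  · filter_upwards [ae_ne4 0] with q hq
    rw [kap_kernel q v hq hv, mul_comm ‖v‖ ‖q‖]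
    unfold kap
    ring
  congr 1
  refine setLIntegral_congr_fun measurableSet_Ioi fun u hu => ?_
  have hu : 0 < u := hu
  have h1 := rho_pos hr hu
  have h2 := rho_pos hu hV
  have hvv : inner ℝ v v / (‖v‖ * ‖v‖) = (1:ℝ) := by
    rw [real_inner_self_eq_norm_sq]; field_simp
  rw [lintegral_const_mul' _ _ ENNReal.ofReal_ne_top, hvv]
  have e : ∀ s' : ℝ, rho u ‖v‖ * (rho r ‖v‖ * rho r u * s) * s' = rho r ‖v‖ * rho r u * rho u ‖v‖ * s * s' := by
    intro s'; ring
  simp only [e]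
  congr 1
  rw [← ENNReal.ofReal_mul (by positivity), ← ENNReal.ofReal_mul (by positivity), ← ENNReal.ofReal_mul (by positivity)]
  congr 1
  field_simp

noncomputable def J (v : E4) : ENNReal := ∫⁻ q : E4, ∫⁻ x : E4,
  kap x * kap (x - v) * kap (x - q) * (kap q * kap (q - v))

lemma J_eq (v : E4) (hv : v ≠ 0) : J v = ENNReal.ofReal (2*π^2) * (ENNReal.ofReal (2*π^2) *
    ∫⁻ r in Set.Ioi (0:ℝ), ∫⁻ u in Set.Ioi (0:ℝ), ∫⁻ s in Set.Ioo (0:ℝ) 1, ∫⁻ s' in Set.Ioo (0:ℝ) 1,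
      ENNReal.ofReal (rho r ‖v‖ * rho r u * rho u ‖v‖ / (‖v‖^2 * r * u)) *
        ENNReal.ofReal (Pk (rho r ‖v‖ * rho r u * rho u ‖v‖ * s * s') 1)) := by
  unfold J
  have e1 : ∫⁻ q : E4, ∫⁻ x : E4, kap x * kap (x - v) * kap (x - q) * (kap q * kap (q - v)) =
    ∫⁻ q : E4, ENNReal.ofReal (2*π^2) * ∫⁻ r in Set.Ioi (0:ℝ), ∫⁻ s in Set.Ioo (0:ℝ) 1,
      ENNReal.ofReal (rho r ‖v‖ * rho r ‖q‖ / (r * ‖v‖ * ‖q‖)) *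
         ENNReal.ofReal (Pk (rho r ‖v‖ * rho r ‖q‖ * s) (inner ℝ v q / (‖v‖*‖q‖))) * (kap q * kap (q - v)) := by
    apply lintegral_congr_ae
    filter_upwards [ae_ne4 0] with q hq
    have hk : kap q * kap (q - v) ≠ ⊤ := ENNReal.mul_ne_top ENNReal.ofReal_ne_top ENNReal.ofReal_ne_top
    rw [lintegral_mul_const' _ _ hk, inner_int v q hv hq, mul_assoc]
    congr 1
    rw [← lintegral_mul_const' _ _ hk]
    apply lintegral_congr
    intro r
    rw [← lintegral_mul_const' _ _ hk]
  rw [e1, lintegral_const_mul' _ _ ENNReal.ofReal_ne_top]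
  congr 1
  have hm : Measurable fun z : (E4 × ℝ) × ℝ =>
      ENNReal.ofReal (rho z.1.2 ‖v‖ * rho z.1.2 ‖z.1.1‖ / (z.1.2 * ‖v‖ * ‖z.1.1‖)) *
         ENNReal.ofReal (Pk (rho z.1.2 ‖v‖ * rho z.1.2 ‖z.1.1‖ * z.2) (inner ℝ v z.1.1 / (‖v‖*‖z.1.1‖))) *
         (kap z.1.1 * kap (z.1.1 - v)) := by fun_prop
  rw [lintegral_lintegral_swap (by
    exact (hm.lintegral_prod_right' (ν := volume.restrict (Set.Ioo (0:ℝ) 1))).aemeasurable)]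
  rw [← lintegral_const_mul' _ _ ENNReal.ofReal_ne_top]
  refine setLIntegral_congr_fun measurableSet_Ioi fun r hr => ?_
  have hm2 : Measurable fun z : E4 × ℝ =>
      ENNReal.ofReal (rho r ‖v‖ * rho r ‖z.1‖ / (r * ‖v‖ * ‖z.1‖)) *
         ENNReal.ofReal (Pk (rho r ‖v‖ * rho r ‖z.1‖ * z.2) (inner ℝ v z.1 / (‖v‖*‖z.1‖))) *
         (kap z.1 * kap (z.1 - v)) := by fun_prop
  rw [lintegral_lintegral_swap (by exact hm2.aemeasurable)]
  have hm3 : Measurable fun z : (ℝ × ℝ) × ℝ => 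
      ENNReal.ofReal (rho r ‖v‖ * rho r z.1.1 * rho z.1.1 ‖v‖ / (‖v‖^2 * r * z.1.1)) *
        ENNReal.ofReal (Pk (rho r ‖v‖ * rho r z.1.1 * rho z.1.1 ‖v‖ * z.1.2 * z.2) 1) := by fun_prop
  rw [lintegral_lintegral_swap (μ := volume.restrict (Set.Ioi (0:ℝ))) (ν := volume.restrict (Set.Ioo (0:ℝ) 1)) (by
    exact (hm3.lintegral_prod_right' (ν := volume.restrict (Set.Ioo (0:ℝ) 1))).aemeasurable)]
  rw [← lintegral_const_mul' _ _ ENNReal.ofReal_ne_top]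
  refine setLIntegral_congr_fun measurableSet_Ioo fun s hs => ?_
  exact outer_fix v hv r s hr hs

end K5

namespace K5
open Real

lemma Uc_at_one (n : ℕ) : Uc n 1 = n + 1 := by
  unfold Uc; simp

lemma lint_pow (n : ℕ) : ∫⁻ s in Set.Ioo (0:ℝ) 1, ENNReal.ofReal (s^n) = ENNReal.ofReal (1/((n:ℝ)+1)) := by
  rw [lint_of_interval zero_le_one (by apply Continuous.intervalIntegrable; fun_prop)
    (fun x hx => pow_nonneg hx.1.le n), integral_pow]
  simp

lemma ss_int {k : ℝ} (hk : 0 ≤ k) (hk1 : k < 1) :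
    ∫⁻ s in Set.Ioo (0:ℝ) 1, ∫⁻ s' in Set.Ioo (0:ℝ) 1, ENNReal.ofReal (Pk (k * s * s') 1) =
      ∑' n : ℕ, ENNReal.ofReal (k^n / ((n:ℝ)+1)) := by
  have e : ∀ s ∈ Set.Ioo (0:ℝ) 1, ∀ s' ∈ Set.Ioo (0:ℝ) 1, ENNReal.ofReal (Pk (k * s * s') 1) =
      ∑' n : ℕ, ENNReal.ofReal (((n:ℝ)+1) * k^n) * ENNReal.ofReal (s^n) * ENNReal.ofReal (s'^n) := by
    intro s hs s' hs'
    have h0 : 0 ≤ k * s * s' := by have := hs.1; have := hs'.1; positivity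
    have h1 : k * s * s' < 1 := by
      have := hs.1; have := hs'.1; have := hs.2; have := hs'.2
      have : s * s' < 1 := by nlinarith
      nlinarith
    have hg := gen (x := 1) h0 h1 (by simp)
    rw [← hg.tsum_eq, ENNReal.ofReal_tsum_of_nonneg _ hg.summable]
    · congr 1; ext n
      have := hs.1; have := hs'.1
      rw [Uc_at_one, ← ENNReal.ofReal_mul (by positivity), ← ENNReal.ofReal_mul (by positivity)]
      congr 1; ring
    · intro n; rw [Uc_at_one]; positivity
  have e2 : ∫⁻ s in Set.Ioo (0:ℝ) 1, ∫⁻ s' in Set.Ioo (0:ℝ) 1, ENNReal.ofReal (Pk (k * s * s') 1) =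
    ∫⁻ s in Set.Ioo (0:ℝ) 1, ∫⁻ s' in Set.Ioo (0:ℝ) 1, 
      ∑' n : ℕ, ENNReal.ofReal (((n:ℝ)+1) * k^n) * ENNReal.ofReal (s^n) * ENNReal.ofReal (s'^n) :=
    setLIntegral_congr_fun measurableSet_Ioo fun s hs => 
      setLIntegral_congr_fun measurableSet_Ioo fun s' hs' => e s hs s' hs'
  rw [e2]
  have e3 : ∀ s : ℝ, ∫⁻ s' in Set.Ioo (0:ℝ) 1, 
      ∑' n : ℕ, ENNReal.ofReal (((n:ℝ)+1) * k^n) * ENNReal.ofReal (s^n) * ENNReal.ofReal (s'^n) =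
      ∑' n : ℕ, ENNReal.ofReal (((n:ℝ)+1) * k^n) * ENNReal.ofReal (s^n) * ENNReal.ofReal (1/((n:ℝ)+1)) := by
    intro s
    rw [lintegral_tsum (fun n => by fun_prop)]
    congr 1; ext n
    rw [lintegral_const_mul _ (by fun_prop), lint_pow]
  simp only [e3]
  rw [lintegral_tsum (fun n => by fun_prop)]
  congr 1; ext n
  rw [lintegral_mul_const _ (by fun_prop), lintegral_const_mul _ (by fun_prop), lint_pow,
    ← ENNReal.ofReal_mul (by positivity), ← ENNReal.ofReal_mul (by positivity)]
  congr 1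
  field_simp

lemma log_sub (V : ℝ) (hV : 0 < V) (f : ℝ → ENNReal) :
    ∫⁻ r in Set.Ioi (0:ℝ), ENNReal.ofReal (1/r) * f r = ∫⁻ a, f (V * exp a) := by
  have him : (fun a => V * exp a) '' Set.univ = Set.Ioi 0 := by
    ext x; simp only [Set.image_univ, Set.mem_range, Set.mem_Ioi]
    constructor
    · rintro ⟨a, rfl⟩; positivity
    · intro hx; exact ⟨log (x/V), by rw [exp_log (by positivity)]; field_simp⟩
  rw [← him, lintegral_image_eq_lintegral_abs_deriv_mul MeasurableSet.univ
    (f' := fun a => V * exp a) (fun a _ => ((hasDerivAt_exp a).const_mul V).hasDerivWithinAt)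
    (fun a _ b _ h => by simpa [hV.ne'] using h)]
  rw [Measure.restrict_univ]
  apply lintegral_congr
  intro a
  have : 0 < V * exp a := by positivity
  rw [← mul_assoc, ← ENNReal.ofReal_mul (by positivity), abs_of_pos this, mul_one_div_cancel this.ne']
  simp

lemma rho_exp (V : ℝ) (hV : 0 < V) (a b : ℝ) : rho (V * exp a) (V * exp b) = exp (-|a-b|) := by
  unfold rho
  rw [mul_div_mul_left _ _ hV.ne', mul_div_mul_left _ _ hV.ne', ← exp_sub, ← exp_sub]
  rcases le_total a b with h | h
  · rw [min_eq_left (exp_le_exp.2 (by linarith)), abs_of_nonpos (by linarith)]; congr 1; ring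
  · rw [min_eq_right (exp_le_exp.2 (by linarith)), abs_of_nonneg (by linarith)]; congr 1; ring

end K5

namespace K5
open Real

lemma lint_Ioi {g g' : ℝ → ℝ} {c l : ℝ} (h : ∀ x ∈ Set.Ici c, HasDerivAt g (g' x) x)
    (hpos : ∀ x ∈ Set.Ioi c, 0 ≤ g' x) (hg : Filter.Tendsto g Filter.atTop (nhds l)) :
    ∫⁻ x in Set.Ioi c, ENNReal.ofReal (g' x) = ENNReal.ofReal (l - g c) := by
  rw [← integral_Ioi_of_hasDerivAt_of_nonneg' h hpos hg,
    ofReal_integral_eq_lintegral_ofReal (integrableOn_Ioi_deriv_of_nonneg' h hpos hg)]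
  exact (ae_restrict_iff' measurableSet_Ioi).2 (Filter.Eventually.of_forall hpos)

lemma lint_exp_Ioi {m : ℝ} (hm : 0 < m) (c : ℝ) :
    ∫⁻ x in Set.Ioi c, ENNReal.ofReal (exp (-m * x)) = ENNReal.ofReal (exp (-m * c) / m) := by
  rw [← ofReal_integral_eq_lintegral_ofReal (integrableOn_exp_mul_Ioi (by linarith) _)
    (Filter.Eventually.of_forall fun x => (exp_pos _).le), integral_exp_mul_Ioi (by linarith)]
  congr 1; field_simp

lemma lint_exp_Iic {m : ℝ} (hm : 0 < m) (c : ℝ) :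
    ∫⁻ x in Set.Iic c, ENNReal.ofReal (exp (m * x)) = ENNReal.ofReal (exp (m * c) / m) := by
  rw [← ofReal_integral_eq_lintegral_ofReal (integrableOn_exp_mul_Iic hm _)
    (Filter.Eventually.of_forall fun x => (exp_pos _).le), integral_exp_mul_Iic hm]

lemma conv_pos {N : ℝ} (hN : 0 < N) {a : ℝ} (ha : 0 ≤ a) :
    ∫⁻ b, ENNReal.ofReal (exp (-N * (|a| + |a - b| + |b|))) = ENNReal.ofReal (exp (-(2*N) * a) * (a + 1/N)) := by
  rw [← lintegral_add_compl _ (measurableSet_Iic (a := (0:ℝ))), Set.compl_Iic, ← Set.Ioc_union_Ioi_eq_Ioi ha,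
    lintegral_union measurableSet_Ioi Set.Ioc_disjoint_Ioi_same]
  have e1 : ∫⁻ b in Set.Iic (0:ℝ), ENNReal.ofReal (exp (-N * (|a| + |a - b| + |b|))) =
      ENNReal.ofReal (exp (-(2*N)*a)) * ∫⁻ b in Set.Iic (0:ℝ), ENNReal.ofReal (exp ((2*N) * b)) := by
    rw [← lintegral_const_mul' _ _ ENNReal.ofReal_ne_top]
    refine setLIntegral_congr_fun measurableSet_Iic fun b hb => ?_
    have hb : b ≤ 0 := hb
    rw [← ENNReal.ofReal_mul (by positivity), ← exp_add, abs_of_nonneg ha, abs_of_nonpos hb,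
      abs_of_nonneg (by linarith)]
    congr 2; ring
  have e2 : ∫⁻ b in Set.Ioc 0 a, ENNReal.ofReal (exp (-N * (|a| + |a - b| + |b|))) =
      ENNReal.ofReal (exp (-(2*N)*a)) * ENNReal.ofReal a := by
    have : ∫⁻ b in Set.Ioc 0 a, ENNReal.ofReal (exp (-N * (|a| + |a - b| + |b|))) =
      ∫⁻ b in Set.Ioc 0 a, ENNReal.ofReal (exp (-(2*N)*a)) := by
      refine setLIntegral_congr_fun measurableSet_Ioc fun b hb => ?_
      rw [abs_of_nonneg ha, abs_of_nonneg hb.1.le, abs_of_nonneg (by linarith [hb.2])]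
      congr 2; ring
    rw [this, setLIntegral_const, Real.volume_Ioc, sub_zero]
  have e3 : ∫⁻ b in Set.Ioi a, ENNReal.ofReal (exp (-N * (|a| + |a - b| + |b|))) =
      ∫⁻ b in Set.Ioi a, ENNReal.ofReal (exp (-(2*N) * b)) := by
    refine setLIntegral_congr_fun measurableSet_Ioi fun b hb => ?_
    have hb : a < b := hb
    rw [abs_of_nonneg ha, abs_of_nonneg (ha.trans hb.le), abs_of_nonpos (by linarith)]
    congr 2; ring
  rw [e1, e2, e3, lint_exp_Iic (by linarith), lint_exp_Ioi (by linarith), ← ENNReal.ofReal_mul (by positivity),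
    ← ENNReal.ofReal_mul (by positivity), ← ENNReal.ofReal_add (by positivity) (by positivity),
    ← ENNReal.ofReal_add (by positivity) (by positivity)]
  congr 1
  simp only [mul_zero, exp_zero]
  field_simp; ring

lemma conv_all {N : ℝ} (hN : 0 < N) (a : ℝ) :
    ∫⁻ b, ENNReal.ofReal (exp (-N * (|a| + |a - b| + |b|))) =
      ENNReal.ofReal (exp (-(2*N) * |a|) * (|a| + 1/N)) := by
  rcases le_total 0 a with ha | ha
  · rw [conv_pos hN ha, abs_of_nonneg ha]
  · have := conv_pos hN (a := -a) (by linarith)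
    rw [abs_of_nonpos ha, ← this, ← lintegral_neg_eq_self]
    apply lintegral_congr
    intro b
    have h1 : |a| + |a - -b| + |-b| = |-a| + |-a - b| + |b| := by
      rw [show a - -b = -(-a - b) by ring, abs_neg, abs_neg a, abs_neg b]
    rw [← h1, abs_of_nonpos ha]

lemma conv_half {N : ℝ} (hN : 0 < N) :
    ∫⁻ a in Set.Ioi (0:ℝ), ENNReal.ofReal (exp (-(2*N) * a) * (a + 1/N)) = ENNReal.ofReal (3/(4*N^2)) := by
  have h := lint_Ioi (g := fun a => -(a/(2*N) + 3/(4*N^2)) * exp (-(2*N) * a))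
    (g' := fun a => exp (-(2*N) * a) * (a + 1/N)) (c := 0) (l := 0) ?_ ?_ ?_
  · rw [h]; congr 1; simp
  · intro x _
    have h1 : HasDerivAt (fun a => exp (-(2*N) * a)) (exp (-(2*N) * x) * (-(2*N) * 1)) x :=
      ((hasDerivAt_id x).const_mul (-(2*N))).exp
    have h2 : HasDerivAt (fun a => -(a/(2*N) + 3/(4*N^2))) (-(1/(2*N))) x :=
      (((hasDerivAt_id x).div_const (2*N)).add_const _).neg
    refine (h2.mul h1).congr_deriv ?_
    field_simp; ring
  · intro x hx
    have : 0 < x := hx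
    positivity
  · have hb : 0 < 2*N := by linarith
    have h0 := tendsto_rpow_mul_exp_neg_mul_atTop_nhds_zero 0 (2*N) hb
    have h1 := tendsto_rpow_mul_exp_neg_mul_atTop_nhds_zero 1 (2*N) hb
    have := (h1.const_mul (-(1/(2*N)))).add (h0.const_mul (-(3/(4*N^2))))
    simp only [mul_zero, add_zero] at this
    refine this.congr fun x => ?_
    simp only [rpow_one, rpow_zero]; ring

lemma conv_tot {N : ℝ} (hN : 0 < N) :
    ∫⁻ a, ∫⁻ b, ENNReal.ofReal (exp (-N * (|a| + |a - b| + |b|))) = ENNReal.ofReal (3/(2*N^2)) := by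
  simp only [conv_all hN]
  rw [← lintegral_add_compl _ (measurableSet_Iic (a := (0:ℝ))), Set.compl_Iic]
  have e1 : ∫⁻ a in Set.Ioi (0:ℝ), ENNReal.ofReal (exp (-(2*N) * |a|) * (|a| + 1/N)) = ENNReal.ofReal (3/(4*N^2)) := by
    rw [← conv_half hN]
    refine setLIntegral_congr_fun measurableSet_Ioi fun b hb => ?_
    have hb : 0 < b := hb
    rw [abs_of_pos hb]
  have e2 : ∫⁻ a in Set.Iic (0:ℝ), ENNReal.ofReal (exp (-(2*N) * |a|) * (|a| + 1/N)) = ENNReal.ofReal (3/(4*N^2)) := by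
    rw [← e1, ← lintegral_indicator measurableSet_Iic, ← lintegral_neg_eq_self,
      ← lintegral_indicator measurableSet_Ioi]
    apply lintegral_congr_ae
    filter_upwards [ae_ne 0] with a ha
    rcases lt_or_gt_of_ne ha with h | h
    · rw [Set.indicator_of_notMem (by simpa using h), Set.indicator_of_notMem (by simpa using h.le)]
    · rw [Set.indicator_of_mem (by simpa using h.le), Set.indicator_of_mem (by simpa using h), abs_neg]
  rw [e1, e2, ← ENNReal.ofReal_add (by positivity) (by positivity)]
  congr 1
  field_simp; ring

end K5

namespace K5
open Real

noncomputable def Z3 : ℝ := ∑' n : ℕ, 1/((n:ℝ)+1)^3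

lemma Z3_summable : Summable fun n : ℕ => 1/((n:ℝ)+1)^3 := by
  have := (summable_nat_add_iff 1).2 (Real.summable_one_div_nat_pow (p := 3).2 (by norm_num))
  simpa using this

lemma radial (V : ℝ) (hV : 0 < V) :
    ∫⁻ r in Set.Ioi (0:ℝ), ∫⁻ u in Set.Ioi (0:ℝ), ∫⁻ s in Set.Ioo (0:ℝ) 1, ∫⁻ s' in Set.Ioo (0:ℝ) 1,
      ENNReal.ofReal (rho r V * rho r u * rho u V / (V^2 * r * u)) *
        ENNReal.ofReal (Pk (rho r V * rho r u * rho u V * s * s') 1) =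
    ENNReal.ofReal (3/2 / V^2 * Z3) := by
  have e1 : ∫⁻ r in Set.Ioi (0:ℝ), ∫⁻ u in Set.Ioi (0:ℝ), ∫⁻ s in Set.Ioo (0:ℝ) 1, ∫⁻ s' in Set.Ioo (0:ℝ) 1,
      ENNReal.ofReal (rho r V * rho r u * rho u V / (V^2 * r * u)) *
        ENNReal.ofReal (Pk (rho r V * rho r u * rho u V * s * s') 1) =
     ∫⁻ r in Set.Ioi (0:ℝ), ENNReal.ofReal (1/r) * ∫⁻ u in Set.Ioi (0:ℝ), ENNReal.ofReal (1/u) *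
       ∑' n : ℕ, ENNReal.ofReal (1/(((n:ℝ)+1)*V^2)) *
         ENNReal.ofReal ((rho r V * rho r u * rho u V)^(n+1)) := by
    apply setLIntegral_congr_fun_ae measurableSet_Ioi
    filter_upwards [ae_ne V] with r hrV hr
    have hr : 0 < r := hr
    rw [← lintegral_const_mul' _ _ ENNReal.ofReal_ne_top]
    refine setLIntegral_congr_fun measurableSet_Ioi fun u hu => ?_
    have hu : 0 < u := hu
    have h1 := rho_pos hr hV
    have h2 := rho_pos hr hu
    have h3 := rho_pos hu hV
    have h4 := rho_lt hr hV hrV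
    have h5 := rho_le hr hu
    have h6 := rho_le hu hV
    have hk0 : 0 < rho r V * rho r u * rho u V := by positivity
    have hk1 : rho r V * rho r u * rho u V < 1 := by
      calc rho r V * rho r u * rho u V ≤ rho r V * 1 * 1 := by gcongr
        _ < 1 := by linarith
    simp only [lintegral_const_mul' _ _ ENNReal.ofReal_ne_top]
    rw [ss_int hk0.le hk1, ← ENNReal.tsum_mul_left, ← ENNReal.tsum_mul_left, ← ENNReal.tsum_mul_left]
    congr 1; ext n
    rw [← ENNReal.ofReal_mul (by positivity), ← ENNReal.ofReal_mul (by positivity),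
      ← ENNReal.ofReal_mul (by positivity), ← ENNReal.ofReal_mul (by positivity)]
    congr 1
    field_simp
    ring
  rw [e1, log_sub V hV]
  have e2 : ∀ a : ℝ, ∫⁻ u in Set.Ioi (0:ℝ), ENNReal.ofReal (1/u) *
       ∑' n : ℕ, ENNReal.ofReal (1/(((n:ℝ)+1)*V^2)) *
         ENNReal.ofReal ((rho (V * exp a) V * rho (V * exp a) u * rho u V)^(n+1)) =
      ∑' n : ℕ, ENNReal.ofReal (1/(((n:ℝ)+1)*V^2)) * ∫⁻ b, 
         ENNReal.ofReal (exp (-((n:ℝ)+1) * (|a| + |a - b| + |b|))) := by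
    intro a
    rw [log_sub V hV]
    have e3 : ∀ (b : ℝ) (n : ℕ), (rho (V * exp a) V * rho (V * exp a) (V * exp b) * rho (V * exp b) V)^(n+1) =
        exp (-((n:ℝ)+1) * (|a| + |a - b| + |b|)) := by
      intro b n
      have ha := rho_exp V hV a 0
      have hb := rho_exp V hV b 0
      simp only [exp_zero, mul_one, sub_zero] at ha hb
      rw [ha, hb, rho_exp V hV, ← exp_add, ← exp_add, ← exp_nat_mul]
      congr 1; push_cast; ring
    simp only [e3]
    rw [lintegral_tsum (fun n => by fun_prop)]
    congr 1; ext n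
    rw [lintegral_const_mul' _ _ ENNReal.ofReal_ne_top]
  simp only [e2]
  rw [lintegral_tsum (fun n => by
    have : Measurable fun z : ℝ × ℝ => ENNReal.ofReal (exp (-((n:ℝ)+1) * (|z.1| + |z.1 - z.2| + |z.2|))) := by
      fun_prop
    exact ((this.lintegral_prod_right' (ν := volume)).const_mul _).aemeasurable)]
  have e4 : ∀ n : ℕ, ∫⁻ a, ENNReal.ofReal (1/(((n:ℝ)+1)*V^2)) * ∫⁻ b, 
         ENNReal.ofReal (exp (-((n:ℝ)+1) * (|a| + |a - b| + |b|))) = 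
         ENNReal.ofReal (3/2 / V^2 * (1/((n:ℝ)+1)^3)) := by
    intro n
    rw [lintegral_const_mul' _ _ ENNReal.ofReal_ne_top, conv_tot (by positivity), 
      ← ENNReal.ofReal_mul (by positivity)]
    congr 1; field_simp
  simp only [e4]
  rw [← ENNReal.ofReal_tsum_of_nonneg (fun n => by positivity) (Z3_summable.mul_left _), tsum_mul_left]
  rfl

lemma J_val (v : E4) (hv : v ≠ 0) : J v = ENNReal.ofReal (6 * π^4 * Z3 / ‖v‖^2) := by
  have hV : 0 < ‖v‖ := norm_pos_iff.2 hv
  have hZ : 0 ≤ Z3 := tsum_nonneg fun n => by positivity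
  rw [J_eq v hv, radial _ hV, ← ENNReal.ofReal_mul (by positivity), ← ENNReal.ofReal_mul (by positivity)]
  congr 1; field_simp; ring

lemma Z3_zeta : riemannZeta 3 = (Z3 : ℂ) := by
  have := zeta_nat_eq_tsum_of_gt_one (k := 3) (by norm_num)
  unfold Z3
  rw [show (3:ℂ) = ((3:ℕ):ℂ) by norm_num, this, Complex.ofReal_tsum]
  have hs : Summable fun n : ℕ => 1 / (n:ℂ)^3 := by
    have := Complex.hasSum_ofReal.2 (Real.summable_one_div_nat_pow (p := 3).2 (by norm_num)).hasSum
    simpa using this.summable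
  rw [hs.tsum_eq_zero_add]
  simp
end K5

namespace K5
open Real

noncomputable def inv4 (x : E4) : E4 := EuclideanGeometry.inversion (0:E4) 1 x

lemma inv4_inv4 (x : E4) : inv4 (inv4 x) = x := EuclideanGeometry.inversion_inversion _ one_ne_zero _

lemma inv4_eq_zero {x : E4} : inv4 x = 0 ↔ x = 0 := EuclideanGeometry.inversion_eq_center one_ne_zero

lemma norm_inv4 (x : E4) : ‖inv4 x‖ = ‖x‖⁻¹ := by
  have := EuclideanGeometry.dist_inversion_center (0:E4) x 1
  simpa [inv4] using this

lemma norm_inv4_sub {x z : E4} (hx : x ≠ 0) (hz : z ≠ 0) : ‖inv4 x - inv4 z‖ = (‖x‖*‖z‖)⁻¹ * ‖x - z‖ := by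
  have := EuclideanGeometry.dist_inversion_inversion hx hz 1
  simpa [inv4, dist_eq_norm] using this

lemma kap_inv {x : E4} : kap (inv4 x) = ENNReal.ofReal (‖x‖^2) := by
  unfold kap; rw [norm_inv4]; simp

lemma kap_inv_sub {x z : E4} (hx : x ≠ 0) (hz : z ≠ 0) :
    kap (inv4 x - inv4 z) = ENNReal.ofReal (‖x‖^2) * ENNReal.ofReal (‖z‖^2) * kap (x - z) := by
  unfold kap
  rw [norm_inv4_sub hx hz, ← ENNReal.ofReal_mul (by positivity), ← ENNReal.ofReal_mul (by positivity)]
  congr 1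
  simp [mul_pow]; ring

lemma inv_int (f : E4 → ENNReal) : ∫⁻ x, f x = ∫⁻ x, ENNReal.ofReal ((‖x‖^8)⁻¹) * f (inv4 x) := by
  have hs : MeasurableSet ({0}ᶜ : Set E4) := (measurableSet_singleton 0).compl
  have h0 : ∀ g : E4 → ENNReal, ∫⁻ x in ({0}ᶜ : Set E4), g x = ∫⁻ x, g x := by
    intro g
    rw [setLIntegral_congr (t := Set.univ), Measure.restrict_univ]
    rw [ae_eq_univ]; simp
  have him : inv4 '' ({0}ᶜ : Set E4) = {0}ᶜ := by
    ext x
    simp only [Set.mem_image, Set.mem_compl_iff, Set.mem_singleton_iff]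
    constructor
    · rintro ⟨z, hz, rfl⟩; rwa [inv4_eq_zero]
    · intro hx; exact ⟨inv4 x, by rwa [inv4_eq_zero], inv4_inv4 x⟩
  rw [← h0 f]
  conv_lhs => rw [← him]
  rw [lintegral_image_eq_lintegral_abs_det_fderiv_mul volume (f := inv4) hs
    (fun x hx => (EuclideanGeometry.hasFDerivAt_inversion (c := (0:E4)) (R := 1) hx).hasFDerivWithinAt)
    (fun a _ b _ h => by simpa [inv4_inv4] using congrArg inv4 h), ← h0]
  refine setLIntegral_congr_fun hs fun x hx => ?_
  have hx : x ≠ 0 := hx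
  have : |(((1 / dist x 0) ^ 2 • ((ℝ ∙ (x - 0))ᗮ.reflection : E4 →L[ℝ] E4)) : E4 →L[ℝ] E4).det| = (‖x‖^8)⁻¹ := by
    rw [ContinuousLinearMap.det]
    have h1 : ((((1 / dist x 0) ^ 2 • ((ℝ ∙ (x - 0))ᗮ.reflection : E4 →L[ℝ] E4)) : E4 →L[ℝ] E4) : E4 →ₗ[ℝ] E4) =
      ((1 / dist x 0) ^ 2) • ((ℝ ∙ (x - 0))ᗮ.reflection.toLinearMap) := rfl
    rw [h1, LinearMap.det_smul, Submodule.det_reflection, abs_mul, abs_pow (-1), abs_neg, abs_one, one_pow, mul_one]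
    simp
    rw [← pow_mul]
  rw [this]

lemma main_lint (e y : E4) (he : ‖e‖ = 1) (hy0 : y ≠ 0) (hye : y ≠ e) :
    ∫⁻ x2 : E4, ∫⁻ x1 : E4, kap x1 * kap (x1 - e) * kap (x1 - y) * kap (x1 - x2) *
      (kap x2 * kap (x2 - e) * kap (x2 - y)) =
    ENNReal.ofReal (6 * π^4 * Z3 / (‖y‖^2 * ‖y - e‖^2)) := by
  have he0 : e ≠ 0 := by rintro rfl; simp at he
  have hee : inv4 e = e := by
    unfold inv4
    exact EuclideanGeometry.inversion_of_mem_sphere (by simp [he])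
  have hy' : inv4 y ≠ 0 := by rwa [Ne, inv4_eq_zero]
  have hY : 0 < ‖y‖ := norm_pos_iff.2 hy0
  have hYe : 0 < ‖y - e‖ := norm_pos_iff.2 (sub_ne_zero.2 hye)
  have hpow : ∀ w : E4, w ≠ 0 → ENNReal.ofReal ((‖w‖^8)⁻¹) * ENNReal.ofReal (‖w‖^2)^4 = 1 := by
    intro w hw
    have : 0 < ‖w‖ := norm_pos_iff.2 hw
    rw [← ENNReal.ofReal_pow (by positivity), ← ENNReal.ofReal_mul (by positivity), ← pow_mul,
      inv_mul_cancel₀ (by positivity), ENNReal.ofReal_one]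
  have step : ∫⁻ x2 : E4, ∫⁻ x1 : E4, kap x1 * kap (x1 - e) * kap (x1 - y) * kap (x1 - x2) *
      (kap x2 * kap (x2 - e) * kap (x2 - y)) =
    ENNReal.ofReal (‖inv4 y‖^2)^2 * ∫⁻ w2 : E4, ∫⁻ w1 : E4, kap (w1 - e) * kap (w1 - inv4 y) * kap (w1 - w2) *
      (kap (w2 - e) * kap (w2 - inv4 y)) := by
    have hc : ENNReal.ofReal (‖inv4 y‖^2)^2 ≠ ⊤ := ENNReal.pow_ne_top ENNReal.ofReal_ne_top
    rw [inv_int, ← lintegral_const_mul' _ _ hc]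
    apply lintegral_congr_ae
    filter_upwards [ae_ne4 0] with w2 hw2
    rw [inv_int, ← lintegral_const_mul' _ _ hc, ← lintegral_const_mul' _ _ ENNReal.ofReal_ne_top]
    apply lintegral_congr_ae
    filter_upwards [ae_ne4 0] with w1 hw1
    have k1 : ∀ w, w ≠ 0 → kap (inv4 w - e) = ENNReal.ofReal (‖w‖^2) * kap (w - e) := by
      intro w hw
      conv_lhs => rw [← hee]
      rw [kap_inv_sub hw he0, he]; simp
    have k2 : ∀ w, w ≠ 0 → kap (inv4 w - y) = ENNReal.ofReal (‖w‖^2) * ENNReal.ofReal (‖inv4 y‖^2) * kap (w - inv4 y) := by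
      intro w hw
      conv_lhs => rw [← inv4_inv4 y]
      rw [kap_inv_sub hw hy']
    rw [k1 w1 hw1, k1 w2 hw2, k2 w1 hw1, k2 w2 hw2, kap_inv, kap_inv, kap_inv_sub hw1 hw2]
    have h1 := hpow w1 hw1
    have h2 := hpow w2 hw2
    calc _ = (ENNReal.ofReal ((‖w1‖^8)⁻¹) * ENNReal.ofReal (‖w1‖^2)^4) *
         (ENNReal.ofReal ((‖w2‖^8)⁻¹) * ENNReal.ofReal (‖w2‖^2)^4) * (ENNReal.ofReal (‖inv4 y‖^2)^2 *
          (kap (w1 - e) * kap (w1 - inv4 y) * kap (w1 - w2) * (kap (w2 - e) * kap (w2 - inv4 y)))) := by ring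
      _ = _ := by rw [h1, h2, one_mul, one_mul]
  have step2 : ∫⁻ w2 : E4, ∫⁻ w1 : E4, kap (w1 - e) * kap (w1 - inv4 y) * kap (w1 - w2) *
      (kap (w2 - e) * kap (w2 - inv4 y)) = J (inv4 y - e) := by
    unfold J
    rw [← lintegral_add_right_eq_self _ e]
    apply lintegral_congr; intro q
    rw [← lintegral_add_right_eq_self _ e]
    apply lintegral_congr; intro x
    rw [add_sub_cancel_right, add_sub_cancel_right, add_sub_add_right_eq_sub,
      show x + e - inv4 y = x - (inv4 y - e) by abel, show q + e - inv4 y = q - (inv4 y - e) by abel]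
  have hn : ‖inv4 y - e‖ = ‖y‖⁻¹ * ‖y - e‖ := by
    conv_lhs => rw [← hee]
    rw [norm_inv4_sub hy0 he0, he, mul_one]
  have hne : inv4 y - e ≠ 0 := by
    rw [← norm_pos_iff, hn]; positivity
  have hZ : 0 ≤ Z3 := tsum_nonneg fun n => by positivity
  rw [step, step2, J_val _ hne, ← ENNReal.ofReal_pow (by positivity), ← ENNReal.ofReal_mul (by positivity), hn, norm_inv4]
  congr 1
  field_simp

end K5

/-- The graphical function of the complete graph on the three external vertices
`0, e, y` and two internal vertices, with all edges of weight 1, in four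
dimensions: its value is `6ζ(3)/(‖y‖²‖y − e‖²)`. -/
theorem graphical_function_K5_two_internal
    (e y : EuclideanSpace ℝ (Fin 4)) (he : ‖e‖ = 1) (hy0 : y ≠ 0) (hye : y ≠ e) :
    Integrable (fun x : EuclideanSpace ℝ (Fin 4) × EuclideanSpace ℝ (Fin 4) =>
      1 / (‖x.1‖ ^ 2 * ‖x.1 - e‖ ^ 2 * ‖x.1 - y‖ ^ 2 * ‖x.1 - x.2‖ ^ 2 *
        ‖x.2‖ ^ 2 * ‖x.2 - e‖ ^ 2 * ‖x.2 - y‖ ^ 2)) ∧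
    (((1 / Real.pi ^ 4) * ∫ x : EuclideanSpace ℝ (Fin 4) × EuclideanSpace ℝ (Fin 4),
        1 / (‖x.1‖ ^ 2 * ‖x.1 - e‖ ^ 2 * ‖x.1 - y‖ ^ 2 * ‖x.1 - x.2‖ ^ 2 *
          ‖x.2‖ ^ 2 * ‖x.2 - e‖ ^ 2 * ‖x.2 - y‖ ^ 2) : ℝ) : ℂ)
      = 6 * riemannZeta 3 / ((‖y‖ : ℂ) ^ 2 * (‖y - e‖ : ℂ) ^ 2) := by
  have hY : 0 < ‖y‖ := norm_pos_iff.2 hy0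
  have hYe : 0 < ‖y - e‖ := norm_pos_iff.2 (sub_ne_zero.2 hye)
  have hZ : 0 ≤ K5.Z3 := tsum_nonneg fun n => by positivity
  have hm : Measurable (fun x : K5.E4 × K5.E4 =>
      1 / (‖x.1‖ ^ 2 * ‖x.1 - e‖ ^ 2 * ‖x.1 - y‖ ^ 2 * ‖x.1 - x.2‖ ^ 2 *
        ‖x.2‖ ^ 2 * ‖x.2 - e‖ ^ 2 * ‖x.2 - y‖ ^ 2)) := by fun_prop
  have hnn : ∀ x : K5.E4 × K5.E4, 0 ≤ 
      1 / (‖x.1‖ ^ 2 * ‖x.1 - e‖ ^ 2 * ‖x.1 - y‖ ^ 2 * ‖x.1 - x.2‖ ^ 2 *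
        ‖x.2‖ ^ 2 * ‖x.2 - e‖ ^ 2 * ‖x.2 - y‖ ^ 2) := fun x => by positivity
  have hl : ∫⁻ x : K5.E4 × K5.E4, ENNReal.ofReal (1 / (‖x.1‖ ^ 2 * ‖x.1 - e‖ ^ 2 * ‖x.1 - y‖ ^ 2 * ‖x.1 - x.2‖ ^ 2 *
        ‖x.2‖ ^ 2 * ‖x.2 - e‖ ^ 2 * ‖x.2 - y‖ ^ 2)) =
      ENNReal.ofReal (6 * Real.pi^4 * K5.Z3 / (‖y‖^2 * ‖y - e‖^2)) := by
    rw [← K5.main_lint e y he hy0 hye, Measure.volume_eq_prod, lintegral_prod_symm' _ (by fun_prop)]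
    apply lintegral_congr; intro x2
    apply lintegral_congr; intro x1
    unfold K5.kap
    simp only [one_div, mul_inv]
    repeat rw [ENNReal.ofReal_mul (by positivity)]
    ring
  constructor
  · refine ⟨hm.aestronglyMeasurable, ?_⟩
    rw [hasFiniteIntegral_iff_ofReal (Filter.Eventually.of_forall hnn), hl]
    exact ENNReal.ofReal_lt_top
  · rw [integral_eq_lintegral_of_nonneg_ae (Filter.Eventually.of_forall hnn) hm.aestronglyMeasurable, hl,
      ENNReal.toReal_ofReal (by positivity), K5.Z3_zeta]
    have : (1 / Real.pi ^ 4) * (6 * Real.pi^4 * K5.Z3 / (‖y‖^2 * ‖y - e‖^2)) =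
       6 * K5.Z3 / (‖y‖^2 * ‖y - e‖^2) := by field_simp
    rw [this]
    push_cast
    rfl
end

section
/- For every e ∈ ℝ⁴ with ‖e‖ = 1, the function (x₂, x₃, x₄) ↦ 1/(‖x₂‖²‖x₃‖²‖x₄‖²‖e − x₂‖²‖x₂ − x₃‖²‖x₃ − x₄‖²‖x₄ − e‖²) is Lebesgue integrable on (ℝ⁴)³ and (1/π⁶) ∫_{(ℝ⁴)³} dx₂ dx₃ dx₄ / (‖x₂‖²‖x₃‖²‖x₄‖²‖e − x₂‖²‖x₂ − x₃‖²‖x₃ − x₄‖²‖x₄ − e‖²) = 20ζ(5). -/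
open MeasureTheory


open Set in
lemma lintegral_radial_plane (g : ℝ → ENNReal) (hg : Measurable g) :
    ∫⁻ c : ℝ, ∫⁻ d : ℝ, g (c ^ 2 + d ^ 2) =
      ENNReal.ofReal (2 * Real.pi) * ∫⁻ ρ in Ioi (0 : ℝ), ENNReal.ofReal ρ * g (ρ ^ 2) := by
  have hm : Measurable (fun p : ℝ × ℝ => g (p.1 ^ 2 + p.2 ^ 2)) := by fun_prop
  calc ∫⁻ c : ℝ, ∫⁻ d : ℝ, g (c ^ 2 + d ^ 2)
      = ∫⁻ p : ℝ × ℝ, g (p.1 ^ 2 + p.2 ^ 2) := by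
        rw [Measure.volume_eq_prod, lintegral_prod _ hm.aemeasurable]
    _ = ∫⁻ p in Ioi (0:ℝ) ×ˢ Ioo (-Real.pi) Real.pi, ENNReal.ofReal p.1 * g (p.1 ^ 2) := by
        rw [← lintegral_comp_polarCoord_symm]
        change ∫⁻ p in Ioi (0:ℝ) ×ˢ Ioo (-Real.pi) Real.pi, _ = _
        refine lintegral_congr fun p => ?_
        simp only [polarCoord_symm_apply, smul_eq_mul]
        congr 2
        nlinarith [Real.sin_sq_add_cos_sq p.2]
    _ = _ := by
        rw [Measure.volume_eq_prod, ← Measure.prod_restrict, lintegral_prod _ (by fun_prop),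
          ← lintegral_const_mul _ (by fun_prop)]
        refine lintegral_congr fun p => ?_
        simp only [lintegral_const, Measure.restrict_apply MeasurableSet.univ, univ_inter,
          Real.volume_Ioo]
        rw [mul_comm]
        congr 2
        ring

open Set in
lemma lintegral_half_plane (f : ℝ → ℝ → ENNReal) (hf : Measurable (Function.uncurry f)) :
    ∫⁻ a : ℝ, ∫⁻ s in Ioi (0:ℝ), f a s =
      ∫⁻ r in Ioi (0 : ℝ), ∫⁻ α in Ioo 0 Real.pi,
        ENNReal.ofReal r * f (r * Real.cos α) (r * Real.sin α) := by
  have hm : Measurable (fun p : ℝ × ℝ => (univ ×ˢ Ioi (0:ℝ)).indicator (Function.uncurry f) p) :=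
    hf.indicator (MeasurableSet.univ.prod measurableSet_Ioi)
  calc ∫⁻ a : ℝ, ∫⁻ s in Ioi (0:ℝ), f a s
      = ∫⁻ p : ℝ × ℝ, (univ ×ˢ Ioi (0:ℝ)).indicator (Function.uncurry f) p := by
        rw [Measure.volume_eq_prod, lintegral_prod _ hm.aemeasurable]
        refine lintegral_congr fun a => ?_
        rw [← lintegral_indicator measurableSet_Ioi]
        refine lintegral_congr fun s => ?_
        simp [indicator, Function.uncurry]
    _ = ∫⁻ p in Ioi (0:ℝ) ×ˢ Ioo (-Real.pi) Real.pi,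
          (univ ×ˢ Ioo 0 Real.pi).indicator (fun p : ℝ × ℝ =>
          ENNReal.ofReal p.1 * f (p.1 * Real.cos p.2) (p.1 * Real.sin p.2)) p := by
        rw [← lintegral_comp_polarCoord_symm]
        change ∫⁻ p in Ioi (0:ℝ) ×ˢ Ioo (-Real.pi) Real.pi, _ = _
        refine setLIntegral_congr_fun (measurableSet_Ioi.prod measurableSet_Ioo) fun p hp => ?_
        obtain ⟨h1, h2, h3⟩ := hp
        simp only [mem_Ioi] at h1
        by_cases h : 0 < p.2
        · have : 0 < Real.sin p.2 := Real.sin_pos_of_pos_of_lt_pi h h3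
          have h' : 0 < p.1 * Real.sin p.2 := by positivity
          simp [indicator, polarCoord_symm_apply, Function.uncurry, h, h3, h']
        · have : Real.sin p.2 ≤ 0 := Real.sin_nonpos_of_nonpos_of_neg_pi_le (not_lt.mp h) h2.le
          have h' : ¬ 0 < p.1 * Real.sin p.2 := by
            have := mul_nonpos_of_nonneg_of_nonpos h1.le this
            linarith
          simp [indicator, polarCoord_symm_apply, Function.uncurry, h, h']
    _ = _ := by
        have hm2 : Measurable (fun p : ℝ × ℝ =>
          ENNReal.ofReal p.1 * f (p.1 * Real.cos p.2) (p.1 * Real.sin p.2)) := by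
          refine Measurable.mul (by fun_prop) ?_
          exact hf.comp (f := fun p : ℝ × ℝ => (p.1 * Real.cos p.2, p.1 * Real.sin p.2))
            (by fun_prop)
        rw [Measure.volume_eq_prod, ← Measure.prod_restrict, lintegral_prod _
          (hm2.indicator (MeasurableSet.univ.prod measurableSet_Ioo)).aemeasurable]
        refine lintegral_congr fun r => ?_
        have : ∀ α, (univ ×ˢ Ioo 0 Real.pi).indicator (fun p : ℝ × ℝ =>
          ENNReal.ofReal p.1 * f (p.1 * Real.cos p.2) (p.1 * Real.sin p.2)) (r, α)
          = (Ioo 0 Real.pi).indicator (fun α =>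
          ENNReal.ofReal r * f (r * Real.cos α) (r * Real.sin α)) α := by
          intro α; simp [indicator]
        simp_rw [this]
        rw [setLIntegral_indicator measurableSet_Ioo]
        congr 2
        refine inter_eq_left.mpr (Ioo_subset_Ioo_left ?_)
        linarith [Real.pi_pos]

lemma lintegral_euclid_four (h : ℝ → ℝ → ℝ → ℝ → ENNReal)
    (hh : Measurable (fun p : ℝ × ℝ × ℝ × ℝ => h p.1 p.2.1 p.2.2.1 p.2.2.2)) :
    ∫⁻ v : EuclideanSpace ℝ (Fin 4), h (v 0) (v 1) (v 2) (v 3) =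
      ∫⁻ a : ℝ, ∫⁻ b : ℝ, ∫⁻ c : ℝ, ∫⁻ d : ℝ, h a b c d := by
  have e1 := (PiLp.volume_preserving_ofLp (Fin 4)).lintegral_comp_emb
    (MeasurableEquiv.toLp 2 (Fin 4 → ℝ)).symm.measurableEmbedding
    (fun v : Fin 4 → ℝ => h (v 0) (v 1) (v 2) (v 3))
  rw [show ∫⁻ v : EuclideanSpace ℝ (Fin 4), h (v 0) (v 1) (v 2) (v 3) = _ from e1]
  have s4 := (volume_preserving_piFinSuccAbove (fun _ : Fin 4 => ℝ) 0).symm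
  have s3 := (volume_preserving_piFinSuccAbove (fun _ : Fin 3 => ℝ) 0).symm
  have s2 := (volume_preserving_finTwoArrow ℝ).symm
  rw [← s4.lintegral_comp_emb (MeasurableEquiv.measurableEmbedding _), Measure.volume_eq_prod,
    lintegral_prod _ ?_]
  · refine lintegral_congr fun a => ?_
    rw [← s3.lintegral_comp_emb (MeasurableEquiv.measurableEmbedding _), Measure.volume_eq_prod,
      lintegral_prod _ ?_]
    · refine lintegral_congr fun b => ?_
      rw [← s2.lintegral_comp_emb (MeasurableEquiv.measurableEmbedding _), Measure.volume_eq_prod,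
        lintegral_prod _ ?_]
      · rfl
      · apply Measurable.aemeasurable
        exact hh.comp (f := fun p : ℝ × ℝ => (a, b, p.1, p.2)) (by fun_prop)
    · apply Measurable.aemeasurable
      exact hh.comp (f := fun p : ℝ × (Fin 2 → ℝ) => (a, p.1, p.2 0, p.2 1)) (by fun_prop)
  · apply Measurable.aemeasurable
    exact hh.comp (f := fun p : ℝ × (Fin 3 → ℝ) => (p.1, p.2 0, p.2 1, p.2 2)) (by fun_prop)

open Set in
/-- Spherical coordinates for functions of `v 0, v 1, v 2 ^ 2 + v 3 ^ 2`. -/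
lemma lintegral_spherical (h : ℝ → ℝ → ℝ → ENNReal)
    (hh : Measurable (fun p : ℝ × ℝ × ℝ => h p.1 p.2.1 p.2.2)) :
    ∫⁻ v : EuclideanSpace ℝ (Fin 4), h (v 0) (v 1) (v 2 ^ 2 + v 3 ^ 2) =
      ENNReal.ofReal (2 * Real.pi) * ∫⁻ r in Ioi (0 : ℝ), ∫⁻ α in Ioo 0 Real.pi,
        ENNReal.ofReal r * ∫⁻ φ in Ioo 0 Real.pi,
          ENNReal.ofReal (r * Real.sin α) * (ENNReal.ofReal (r * Real.sin α * Real.sin φ) *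
          h (r * Real.cos α) (r * Real.sin α * Real.cos φ) ((r * Real.sin α * Real.sin φ) ^ 2)) := by
  rw [lintegral_euclid_four (fun a b c d => h a b (c ^ 2 + d ^ 2))
    (hh.comp (f := fun p : ℝ × ℝ × ℝ × ℝ => (p.1, p.2.1, p.2.2.1 ^ 2 + p.2.2.2 ^ 2))
      (by fun_prop))]
  have m0 : Measurable fun p : ℝ × ℝ × ℝ => ENNReal.ofReal p.2.2 * h p.1 p.2.1 (p.2.2 ^ 2) := by
    refine Measurable.mul (by fun_prop) ?_
    exact hh.comp (f := fun p : ℝ × ℝ × ℝ => (p.1, p.2.1, p.2.2 ^ 2)) (by fun_prop)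
  have h1 : ∀ a b, ∫⁻ c : ℝ, ∫⁻ d : ℝ, h a b (c ^ 2 + d ^ 2) =
      ENNReal.ofReal (2 * Real.pi) * ∫⁻ ρ in Ioi (0 : ℝ), ENNReal.ofReal ρ * h a b (ρ ^ 2) := by
    intro a b
    exact lintegral_radial_plane (h a b) (hh.comp (f := fun x : ℝ => (a, b, x)) (by fun_prop))
  simp_rw [h1]
  have h2 : ∀ a, ∫⁻ b : ℝ, ENNReal.ofReal (2 * Real.pi) *
      ∫⁻ ρ in Ioi (0 : ℝ), ENNReal.ofReal ρ * h a b (ρ ^ 2) =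
      ENNReal.ofReal (2 * Real.pi) * ∫⁻ s in Ioi (0 : ℝ), ∫⁻ φ in Ioo 0 Real.pi,
        ENNReal.ofReal s * (ENNReal.ofReal (s * Real.sin φ) *
          h a (s * Real.cos φ) ((s * Real.sin φ) ^ 2)) := by
    intro a
    rw [lintegral_const_mul' _ _ ENNReal.ofReal_ne_top]
    congr 1
    exact lintegral_half_plane (fun b ρ => ENNReal.ofReal ρ * h a b (ρ ^ 2))
      (m0.comp (f := fun p : ℝ × ℝ => (a, p.1, p.2)) (by fun_prop))
  simp_rw [h2]
  rw [lintegral_const_mul' _ _ ENNReal.ofReal_ne_top]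
  congr 1
  refine lintegral_half_plane (fun a s => ∫⁻ φ in Ioo 0 Real.pi,
        ENNReal.ofReal s * (ENNReal.ofReal (s * Real.sin φ) *
          h a (s * Real.cos φ) ((s * Real.sin φ) ^ 2))) ?_
  refine Measurable.lintegral_prod_right' (ν := volume.restrict (Ioo 0 Real.pi))
    (f := fun q : (ℝ × ℝ) × ℝ => ENNReal.ofReal q.1.2 * (ENNReal.ofReal (q.1.2 * Real.sin q.2) *
          h q.1.1 (q.1.2 * Real.cos q.2) ((q.1.2 * Real.sin q.2) ^ 2))) ?_
  refine Measurable.mul (by fun_prop) ?_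
  exact m0.comp (f := fun q : (ℝ × ℝ) × ℝ => (q.1.1, q.1.2 * Real.cos q.2, q.1.2 * Real.sin q.2))
    (by fun_prop)


lemma integral_cos_int_mul (k : ℤ) :
    ∫ α in (0:ℝ)..Real.pi, Real.cos (k * α) = if k = 0 then Real.pi else 0 := by
  split_ifs with h
  · simp [h]
  · have hk : (k : ℝ) ≠ 0 := by exact_mod_cast h
    rw [intervalIntegral.integral_comp_mul_left (fun x => Real.cos x) hk]
    simp [Real.sin_int_mul_pi]

lemma integral_sin_mul_sin (m n : ℕ) :
    ∫ α in (0:ℝ)..Real.pi, Real.sin ((m + 1 : ℝ) * α) * Real.sin ((n + 1 : ℝ) * α) =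
      if m = n then Real.pi / 2 else 0 := by
  have h : ∀ α : ℝ, Real.sin ((m + 1 : ℝ) * α) * Real.sin ((n + 1 : ℝ) * α) =
      (1 / 2) * (Real.cos (((m - n : ℤ) : ℝ) * α) - Real.cos (((m + n + 2 : ℤ) : ℝ) * α)) := by
    intro α
    push_cast
    rw [show ((m : ℝ) - n) * α = (m + 1) * α - (n + 1) * α by ring,
      show ((m : ℝ) + n + 2) * α = (m + 1) * α + (n + 1) * α by ring, Real.cos_sub, Real.cos_add]
    ring
  simp_rw [h]
  rw [intervalIntegral.integral_const_mul, intervalIntegral.integral_sub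
    (Continuous.intervalIntegrable (by fun_prop) _ _)
    (Continuous.intervalIntegrable (by fun_prop) _ _), integral_cos_int_mul, integral_cos_int_mul]
  have h2 : ¬ ((m : ℤ) + n + 2 = 0) := by omega
  rw [if_neg h2]
  by_cases hmn : m = n
  · simp [hmn]; ring
  · have : ¬ ((m : ℤ) - n = 0) := by omega
    simp [hmn, this]

lemma summable_mul_sin (a : ℕ → ℝ) (ha : Summable fun n => |a n|) (α : ℝ) :
    Summable fun n => a n * Real.sin ((n + 1 : ℝ) * α) := by
  refine Summable.of_norm_bounded ha fun n => ?_
  rw [norm_mul, Real.norm_eq_abs, Real.norm_eq_abs]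
  exact mul_le_of_le_one_right (abs_nonneg _) (Real.abs_sin_le_one _)

lemma continuous_sin_series (a : ℕ → ℝ) (ha : Summable fun n => |a n|) :
    Continuous fun α : ℝ => ∑' n, a n * Real.sin ((n + 1 : ℝ) * α) := by
  refine continuous_tsum (fun n => by fun_prop) ha fun n α => ?_
  rw [norm_mul, Real.norm_eq_abs, Real.norm_eq_abs]
  exact mul_le_of_le_one_right (abs_nonneg _) (Real.abs_sin_le_one _)

lemma integral_sin_series_mul (a : ℕ → ℝ) (ha : Summable fun n => |a n|) (g : ℝ → ℝ)
    (hg : Continuous g) :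
    ∫ α in (0:ℝ)..Real.pi, (∑' n, a n * Real.sin ((n + 1 : ℝ) * α)) * g α =
      ∑' n, a n * ∫ α in (0:ℝ)..Real.pi, Real.sin ((n + 1 : ℝ) * α) * g α := by
  obtain ⟨C, hC⟩ := (isCompact_Icc (a := (0:ℝ)) (b := Real.pi)).exists_bound_of_continuousOn
    hg.continuousOn
  have key := intervalIntegral.hasSum_integral_of_dominated_convergence (μ := volume)
    (a := 0) (b := Real.pi)
    (F := fun n α => a n * (Real.sin ((n + 1 : ℝ) * α) * g α))
    (f := fun α => (∑' n, a n * Real.sin ((n + 1 : ℝ) * α)) * g α)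
    (fun n _ => |a n| * C) (fun n => by
      apply Continuous.aestronglyMeasurable; fun_prop)
    (fun n => by
      refine Filter.Eventually.of_forall fun α hα => ?_
      rw [Set.uIoc_of_le Real.pi_pos.le] at hα
      rw [norm_mul, norm_mul, Real.norm_eq_abs, Real.norm_eq_abs]
      have h1 := hC α ⟨hα.1.le, hα.2⟩
      have h2 := Real.abs_sin_le_one ((n + 1 : ℝ) * α)
      have h3 := norm_nonneg (g α)
      refine mul_le_mul_of_nonneg_left ?_ (abs_nonneg _)
      calc _ ≤ 1 * ‖g α‖ := mul_le_mul_of_nonneg_right h2 h3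
        _ ≤ C := by linarith)
    (Filter.Eventually.of_forall fun α _ => ha.mul_right C)
    (by simp)
    (Filter.Eventually.of_forall fun α _ => by
      have := (summable_mul_sin a ha α).hasSum.mul_right (g α)
      simpa [mul_assoc] using this)
  rw [← key.tsum_eq]
  refine tsum_congr fun n => ?_
  rw [intervalIntegral.integral_const_mul]

lemma parseval_sin (a b : ℕ → ℝ) (ha : Summable fun n => |a n|) (hb : Summable fun n => |b n|) :
    ∫ α in (0:ℝ)..Real.pi, (∑' n, a n * Real.sin ((n + 1 : ℝ) * α)) *
      (∑' n, b n * Real.sin ((n + 1 : ℝ) * α)) = Real.pi / 2 * ∑' n, a n * b n := by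
  rw [integral_sin_series_mul a ha _ (continuous_sin_series b hb), ← tsum_mul_left]
  refine tsum_congr fun n => ?_
  have : ∫ α in (0:ℝ)..Real.pi, Real.sin ((n + 1 : ℝ) * α) *
      (∑' n, b n * Real.sin ((n + 1 : ℝ) * α)) = Real.pi / 2 * b n := by
    simp_rw [mul_comm (Real.sin ((n + 1 : ℝ) * _)) (∑' n, _)]
    rw [integral_sin_series_mul b hb _ (by fun_prop)]
    simp_rw [integral_sin_mul_sin]
    rw [tsum_eq_single n]
    · simp [mul_comm]
    · intro m hm; simp [hm]
  rw [this]; ring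

lemma D_pos {t : ℝ} (ht : t ≠ 0) (θ : ℝ) : 0 < 2 * Real.cosh t - 2 * Real.cos θ := by
  have := Real.one_lt_cosh.mpr ht
  have := Real.cos_le_one θ
  linarith

lemma D_eq (t θ : ℝ) : 1 - 2 * Real.exp (-|t|) * Real.cos θ + Real.exp (-|t|) ^ 2 =
    Real.exp (-|t|) * (2 * Real.cosh t - 2 * Real.cos θ) := by
  rw [← Real.cosh_abs t, Real.cosh_eq]
  have : Real.exp |t| * Real.exp (-|t|) = 1 := by rw [← Real.exp_add]; simp
  linear_combination -this

lemma exp_abs_lt_one {t : ℝ} (ht : t ≠ 0) : Real.exp (-|t|) < 1 := by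
  rw [Real.exp_lt_one_iff]; simpa using ht

lemma exp_pow_succ (t : ℝ) (n : ℕ) : Real.exp (-|t|) ^ (n + 1) = Real.exp (-((n + 1 : ℝ) * |t|)) := by
  rw [← Real.exp_nat_mul]; congr 1; push_cast; ring

lemma polar_pow (ρ θ : ℝ) (n : ℕ) :
    ((ρ : ℂ) * Complex.exp (θ * Complex.I)) ^ n =
      ⟨ρ ^ n * Real.cos (n * θ), ρ ^ n * Real.sin (n * θ)⟩ := by
  rw [Complex.mk_eq_add_mul_I,
    mul_pow, ← Complex.exp_nat_mul, show (n : ℂ) * (θ * Complex.I) = ((n * θ : ℝ) : ℂ) * Complex.I by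
    push_cast; ring, Complex.exp_mul_I]
  push_cast; ring

lemma polar_eq (ρ θ : ℝ) :
    (ρ : ℂ) * Complex.exp (θ * Complex.I) = ⟨ρ * Real.cos θ, ρ * Real.sin θ⟩ := by
  have := polar_pow ρ θ 1
  simpa using this

lemma normSq_one_sub (ρ θ : ℝ) : Complex.normSq (1 - (ρ : ℂ) * Complex.exp (θ * Complex.I)) =
    1 - 2 * ρ * Real.cos θ + ρ ^ 2 := by
  rw [polar_eq, Complex.normSq_apply]
  simp only [Complex.sub_re, Complex.sub_im, Complex.one_re, Complex.one_im]
  nlinarith [Real.sin_sq_add_cos_sq θ]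

lemma hasSum_of_congr {f g : ℕ → ℝ} {a : ℝ} (hg : HasSum g a) (h : ∀ n, f n = g n) :
    HasSum f a := by
  rw [show f = g from funext h]; exact hg

lemma hasSum_poisson {t : ℝ} (ht : t ≠ 0) (α : ℝ) :
    HasSum (fun n : ℕ => Real.exp (-((n + 1 : ℝ) * |t|)) * Real.sin ((n + 1 : ℝ) * α))
      (Real.sin α / (2 * Real.cosh t - 2 * Real.cos α)) := by
  obtain ⟨ρ, hρ⟩ : ∃ ρ, ρ = Real.exp (-|t|) := ⟨_, rfl⟩
  have hρ0 : 0 < ρ := hρ ▸ Real.exp_pos _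
  have hρ1 : ρ < 1 := hρ ▸ exp_abs_lt_one ht
  obtain ⟨z, hz⟩ : ∃ z, z = (ρ : ℂ) * Complex.exp (α * Complex.I) := ⟨_, rfl⟩
  have hzn : ‖z‖ < 1 := by
    rw [hz, norm_mul, Complex.norm_exp_ofReal_mul_I]
    simpa [abs_of_pos hρ0] using hρ1
  have h := Complex.hasSum_im ((hasSum_geometric_of_norm_lt_one hzn).mul_left z)
  have hv : Real.sin α / (2 * Real.cosh t - 2 * Real.cos α) = (z * (1 - z)⁻¹).im := by
    rw [← div_eq_mul_inv, Complex.div_im, hz, normSq_one_sub, hρ, D_eq, ← hρ, polar_eq]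
    have := D_pos ht α
    simp only [Complex.sub_re, Complex.sub_im, Complex.one_re, Complex.one_im]
    field_simp
    ring
  rw [hv]
  refine hasSum_of_congr h fun n => ?_
  rw [← pow_succ', hz, polar_pow, ← exp_pow_succ, ← hρ]
  push_cast
  rfl

lemma hasSum_log {t : ℝ} (ht : t ≠ 0) (θ : ℝ) :
    HasSum (fun n : ℕ => 2 / (n + 1 : ℝ) * Real.exp (-((n + 1 : ℝ) * |t|)) *
      Real.cos ((n + 1 : ℝ) * θ))
      (|t| - Real.log (2 * Real.cosh t - 2 * Real.cos θ)) := by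
  obtain ⟨ρ, hρ⟩ : ∃ ρ, ρ = Real.exp (-|t|) := ⟨_, rfl⟩
  have hρ0 : 0 < ρ := hρ ▸ Real.exp_pos _
  have hρ1 : ρ < 1 := hρ ▸ exp_abs_lt_one ht
  obtain ⟨z, hz⟩ : ∃ z, z = (ρ : ℂ) * Complex.exp (θ * Complex.I) := ⟨_, rfl⟩
  have hzn : ‖z‖ < 1 := by
    rw [hz, norm_mul, Complex.norm_exp_ofReal_mul_I]
    simpa [abs_of_pos hρ0] using hρ1
  have h := ((Complex.hasSum_re (Complex.hasSum_taylorSeries_neg_log hzn)).mul_left 2)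
  rw [← hasSum_nat_add_iff' 1] at h
  have hv : |t| - Real.log (2 * Real.cosh t - 2 * Real.cos θ) =
      2 * (-Complex.log (1 - z)).re - ∑ i ∈ Finset.range 1, 2 * (z ^ i / (i : ℂ)).re := by
    have hD := D_pos ht θ
    have hns : ‖1 - z‖ ^ 2 = ρ * (2 * Real.cosh t - 2 * Real.cos θ) := by
      rw [← Complex.normSq_eq_norm_sq, hz, normSq_one_sub, hρ, D_eq]
    have : Real.log (‖1 - z‖ ^ 2) = -|t| + Real.log (2 * Real.cosh t - 2 * Real.cos θ) := by
      rw [hns, Real.log_mul hρ0.ne' hD.ne', hρ, Real.log_exp]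
    rw [Real.log_pow] at this
    simp [Complex.log_re]
    push_cast at this
    linarith
  rw [hv]
  refine hasSum_of_congr h fun n => ?_
  rw [hz, polar_pow, ← exp_pow_succ, ← hρ]
  rw [show ((n + 1 : ℕ) : ℂ) = (((n + 1 : ℕ) : ℝ) : ℂ) by push_cast; rfl, Complex.div_ofReal_re]
  push_cast
  ring

lemma hasSum_log_ratio {t : ℝ} (ht : t ≠ 0) (α β : ℝ) :
    HasSum (fun n : ℕ => (4 / (n + 1 : ℝ) * Real.exp (-((n + 1 : ℝ) * |t|)) *
      Real.sin ((n + 1 : ℝ) * β)) * Real.sin ((n + 1 : ℝ) * α))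
      (Real.log ((2 * Real.cosh t - 2 * Real.cos (α + β)) /
        (2 * Real.cosh t - 2 * Real.cos (α - β)))) := by
  have h := (hasSum_log ht (α - β)).sub (hasSum_log ht (α + β))
  rw [Real.log_div (D_pos ht _).ne' (D_pos ht _).ne']
  have hv : Real.log (2 * Real.cosh t - 2 * Real.cos (α + β)) -
      Real.log (2 * Real.cosh t - 2 * Real.cos (α - β)) =
      |t| - Real.log (2 * Real.cosh t - 2 * Real.cos (α - β)) -
      (|t| - Real.log (2 * Real.cosh t - 2 * Real.cos (α + β))) := by ring
  rw [hv]
  refine hasSum_of_congr h fun n => ?_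
  rw [show (n + 1 : ℝ) * (α - β) = (n + 1) * α - (n + 1) * β by ring,
    show (n + 1 : ℝ) * (α + β) = (n + 1) * α + (n + 1) * β by ring, Real.cos_sub, Real.cos_add]
  ring

open Set in
lemma lintegral_Ioo_ofReal {f : ℝ → ℝ} (hf : Continuous f)
    (h0 : ∀ x ∈ Ioo 0 Real.pi, 0 ≤ f x) :
    ∫⁻ φ in Ioo 0 Real.pi, ENNReal.ofReal (f φ) = ENNReal.ofReal (∫ φ in (0:ℝ)..Real.pi, f φ) := by
  rw [intervalIntegral.integral_of_le Real.pi_pos.le, integral_Ioc_eq_integral_Ioo,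
    ofReal_integral_eq_lintegral_ofReal]
  · exact (hf.integrableOn_Icc (a := 0) (b := Real.pi)).mono_set Ioo_subset_Icc_self
  · exact (ae_restrict_iff' measurableSet_Ioo).mpr (Filter.Eventually.of_forall h0)

open Set in
lemma lintegral_phi {A B : ℝ} (hB : 0 < B) (hA : B < A) :
    ∫⁻ φ in Ioo 0 Real.pi, ENNReal.ofReal (Real.sin φ / (A - B * Real.cos φ)) =
      ENNReal.ofReal (1 / B * Real.log ((A + B) / (A - B))) := by
  have hpos : ∀ φ : ℝ, 0 < A - B * Real.cos φ := fun φ => by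
    have := Real.cos_le_one φ
    nlinarith
  have hc : Continuous fun φ => Real.sin φ / (A - B * Real.cos φ) :=
    Continuous.div (by fun_prop) (by fun_prop) fun φ => (hpos φ).ne'
  have hi : ∫ φ in (0:ℝ)..Real.pi, Real.sin φ / (A - B * Real.cos φ) =
      1 / B * Real.log ((A + B) / (A - B)) := by
    rw [intervalIntegral.integral_eq_sub_of_hasDerivAt
      (f := fun φ => 1 / B * Real.log (A - B * Real.cos φ))
      (f' := fun φ => Real.sin φ / (A - B * Real.cos φ))]
    · rw [Real.log_div (by linarith) (by linarith)]
      simp; ring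
    · intro φ _
      have h1 : HasDerivAt (fun φ => A - B * Real.cos φ) (B * Real.sin φ) φ := by
        have := ((Real.hasDerivAt_cos φ).const_mul B).const_sub A
        simpa using this
      have h2 := (h1.log (hpos φ).ne').const_mul (1 / B)
      have h3 : Real.sin φ / (A - B * Real.cos φ) =
          1 / B * (B * Real.sin φ / (A - B * Real.cos φ)) := by
        have := (hpos φ).ne'
        field_simp
      rw [h3]
      exact h2
    · exact hc.intervalIntegrable _ _
  rw [← hi]
  exact lintegral_Ioo_ofReal hc fun x hx =>
    div_nonneg (Real.sin_nonneg_of_nonneg_of_le_pi hx.1.le hx.2.le) (hpos x).le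

open Set in
lemma lintegral_exp_subst (f : ℝ → ENNReal) :
    ∫⁻ r in Ioi (0:ℝ), f r = ∫⁻ t : ℝ, ENNReal.ofReal (Real.exp t) * f (Real.exp t) := by
  have h := lintegral_image_eq_lintegral_abs_deriv_mul (s := univ) (f := Real.exp) (f' := Real.exp)
    MeasurableSet.univ (fun x _ => (Real.hasDerivAt_exp x).hasDerivWithinAt)
    Real.exp_injective.injOn f
  rw [image_univ, Real.range_exp] at h
  rw [h]
  simp

open Set in
lemma integral_two_exp_nonneg {N : ℝ} (hN : 0 < N) {T : ℝ} (hT : 0 ≤ T) :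
    Integrable (fun t : ℝ => Real.exp (-(N * (|t| + |t - T|)))) ∧
    ∫ t : ℝ, Real.exp (-(N * (|t| + |t - T|))) = (1 / N + |T|) * Real.exp (-(N * |T|)) := by
  rw [abs_of_nonneg hT]
  have c1 : ∀ t ∈ Iic (0:ℝ), Real.exp (-(N * (|t| + |t - T|))) =
      Real.exp (-(N * T)) * Real.exp ((2 * N) * t) := by
    intro t ht
    simp only [mem_Iic] at ht
    rw [abs_of_nonpos ht, abs_of_nonpos (by linarith), ← Real.exp_add]
    congr 1; ring
  have c2 : ∀ t ∈ Ioc (0:ℝ) T, Real.exp (-(N * (|t| + |t - T|))) = Real.exp (-(N * T)) := by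
    intro t ht
    rw [abs_of_nonneg ht.1.le, abs_of_nonpos (by linarith [ht.2])]
    congr 1; ring
  have c3 : ∀ t ∈ Ioi T, Real.exp (-(N * (|t| + |t - T|))) =
      Real.exp (N * T) * Real.exp ((-2 * N) * t) := by
    intro t ht
    simp only [mem_Ioi] at ht
    rw [abs_of_nonneg (by linarith), abs_of_nonneg (by linarith), ← Real.exp_add]
    congr 1; ring
  have i1 : IntegrableOn (fun t : ℝ => Real.exp (-(N * (|t| + |t - T|)))) (Iic 0) := by
    rw [integrableOn_congr_fun c1 measurableSet_Iic]
    exact (integrableOn_exp_mul_Iic (by linarith) 0).const_mul _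
  have i2 : IntegrableOn (fun t : ℝ => Real.exp (-(N * (|t| + |t - T|)))) (Ioc 0 T) := by
    rw [integrableOn_congr_fun c2 measurableSet_Ioc]
    exact integrableOn_const (by simp)
  have i3 : IntegrableOn (fun t : ℝ => Real.exp (-(N * (|t| + |t - T|)))) (Ioi T) := by
    rw [integrableOn_congr_fun c3 measurableSet_Ioi]
    exact (integrableOn_exp_mul_Ioi (by linarith) T).const_mul _
  have i23 : IntegrableOn (fun t : ℝ => Real.exp (-(N * (|t| + |t - T|)))) (Ioi 0) := by
    rw [← Ioc_union_Ioi_eq_Ioi hT]; exact i2.union i3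
  have i : Integrable (fun t : ℝ => Real.exp (-(N * (|t| + |t - T|)))) := by
    rw [← integrableOn_univ, ← Iic_union_Ioi (a := (0:ℝ))]; exact i1.union i23
  refine ⟨i, ?_⟩
  rw [← intervalIntegral.integral_Iic_add_Ioi i1 i23, ← Ioc_union_Ioi_eq_Ioi hT,
    setIntegral_union (Ioc_disjoint_Ioi le_rfl) measurableSet_Ioi i2 i3,
    setIntegral_congr_fun measurableSet_Iic c1, setIntegral_congr_fun measurableSet_Ioc c2,
    setIntegral_congr_fun measurableSet_Ioi c3, integral_const_mul, integral_const_mul,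
    integral_exp_mul_Iic (by linarith), integral_exp_mul_Ioi (by linarith), setIntegral_const]
  have : Real.exp (N * T) * Real.exp (-2 * N * T) = Real.exp (-(N * T)) := by
    rw [← Real.exp_add]; congr 1; ring
  simp [hT]
  rw [show -(2 * N * T) = -2 * N * T by ring, ← mul_div_assoc, this]
  field_simp
  ring

lemma integral_two_exp {N : ℝ} (hN : 0 < N) (T : ℝ) :
    Integrable (fun t : ℝ => Real.exp (-(N * (|t| + |t - T|)))) ∧
    ∫ t : ℝ, Real.exp (-(N * (|t| + |t - T|))) = (1 / N + |T|) * Real.exp (-(N * |T|)) := by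
  rcases le_total 0 T with hT | hT
  · exact integral_two_exp_nonneg hN hT
  · have h := integral_two_exp_nonneg hN (T := -T) (by linarith)
    have e : ∀ t : ℝ, Real.exp (-(N * (|-t| + |-t - -T|))) = Real.exp (-(N * (|t| + |t - T|))) := by
      intro t
      rw [abs_neg, show -t - -T = -(t - T) by ring, abs_neg]
    rw [abs_neg] at h
    refine ⟨?_, ?_⟩
    · have := h.1.comp_neg
      simpa only [e] using this
    · rw [← h.2, ← integral_neg_eq_self (fun t : ℝ => Real.exp (-(N * (|t| + |t - -T|))))]
      simp only [e]

open Set in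
lemma lintegral_sq_coeff {N : ℝ} (hN : 0 < N) :
    ∫⁻ T : ℝ, ENNReal.ofReal ((1 / N * ((1 / N + |T|) * Real.exp (-(N * |T|)))) ^ 2) =
      ENNReal.ofReal (5 / 2 * (1 / N ^ 5)) := by
  set g : ℝ → ℝ := fun T => (1 / N * ((1 / N + T) * Real.exp (-(N * T)))) ^ 2 with hg
  set G : ℝ → ℝ := fun T => -(1 / N ^ 2) * ((T ^ 2 / (2 * N) + 3 * T / (2 * N ^ 2) + 5 / (4 * N ^ 3))
    * Real.exp (-(2 * N * T))) with hG
  have hd : ∀ T, HasDerivAt G (g T) T := by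
    intro T
    have h1 : HasDerivAt (fun T : ℝ => Real.exp (-(2 * N * T)))
        (Real.exp (-(2 * N * T)) * (-(2 * N * 1))) T :=
      (((hasDerivAt_id T).const_mul (2 * N)).neg).exp
    have h2 : HasDerivAt (fun T : ℝ => T ^ 2 / (2 * N) + 3 * T / (2 * N ^ 2) + 5 / (4 * N ^ 3))
        ((2 * T) / (2 * N) + 3 * 1 / (2 * N ^ 2)) T := by
      have a1 : HasDerivAt (fun T : ℝ => T ^ 2) (2 * T) T := by simpa using hasDerivAt_pow 2 T
      exact ((a1.div_const _).add (((hasDerivAt_id T).const_mul 3).div_const _)).add_const _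
    have h3 := (h2.mul h1).const_mul (-(1 / N ^ 2))
    have e : g T = -(1 / N ^ 2) * (((2 * T) / (2 * N) + 3 * 1 / (2 * N ^ 2)) *
        Real.exp (-(2 * N * T)) + (T ^ 2 / (2 * N) + 3 * T / (2 * N ^ 2) + 5 / (4 * N ^ 3)) *
        (Real.exp (-(2 * N * T)) * (-(2 * N * 1)))) := by
      have : Real.exp (-(2 * N * T)) = Real.exp (-(N * T)) ^ 2 := by
        rw [← Real.exp_nat_mul]; congr 1; push_cast; ring
      simp only [hg]
      rw [this]
      field_simp
      ring
    rw [e]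
    exact h3
  have hlim : Filter.Tendsto G Filter.atTop (nhds 0) := by
    have q : ∀ k : ℕ, Filter.Tendsto (fun T : ℝ => T ^ k * Real.exp (-(2 * N * T)))
        Filter.atTop (nhds 0) := by
      intro k
      have := Real.tendsto_pow_mul_exp_neg_atTop_nhds_zero k
      have h := (this.comp (Filter.tendsto_id.const_mul_atTop (show 0 < 2 * N by linarith))).const_mul
        ((1 / (2 * N)) ^ k)
      rw [mul_zero] at h
      refine h.congr fun T => ?_
      simp only [Function.comp, id]
      rw [← mul_assoc, ← mul_pow]
      congr 2
      field_simp
    have h := ((((q 2).const_mul (1 / (2 * N))).add ((q 1).const_mul (3 / (2 * N ^ 2)))).add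
      ((q 0).const_mul (5 / (4 * N ^ 3)))).const_mul (-(1 / N ^ 2))
    simp only [mul_zero, add_zero] at h
    refine h.congr fun T => ?_
    simp only [hG]
    ring
  have g0 : ∀ T, 0 ≤ g T := fun T => sq_nonneg _
  have hI : IntegrableOn g (Ioi 0) :=
    integrableOn_Ioi_deriv_of_nonneg' (fun T _ => hd T) (fun T _ => g0 T) hlim
  have hV : ∫ T in Ioi 0, g T = 5 / 4 * (1 / N ^ 5) := by
    rw [integral_Ioi_of_hasDerivAt_of_nonneg' (fun T _ => hd T) (fun T _ => g0 T) hlim]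
    simp [hG]
    field_simp
  have hV2 : ∫ T, g |T| = 5 / 2 * (1 / N ^ 5) := by
    rw [integral_comp_abs, hV]; ring
  have hI2 : Integrable fun T => g |T| := by
    refine Integrable.of_integral_ne_zero ?_
    rw [hV2]; positivity
  rw [← hV2, ofReal_integral_eq_lintegral_ofReal hI2 (Filter.Eventually.of_forall fun T => g0 _)]


/-- Fourier coefficients of the box function. -/
noncomputable def boxCoeff (T : ℝ) (n : ℕ) : ℝ :=
  1 / (n + 1 : ℝ) * ((1 / (n + 1 : ℝ) + |T|) * Real.exp (-((n + 1 : ℝ) * |T|)))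

/-- Sine series of the box function. -/
noncomputable def boxSeries (T β : ℝ) : ℝ := ∑' n : ℕ, boxCoeff T n * Real.sin ((n + 1 : ℝ) * β)

lemma summable_exp_succ {t : ℝ} (ht : t ≠ 0) :
    Summable fun n : ℕ => Real.exp (-((n + 1 : ℝ) * |t|)) := by
  simp_rw [← exp_pow_succ]
  exact (summable_nat_add_iff 1).mpr
    (summable_geometric_of_lt_one (Real.exp_pos _).le (exp_abs_lt_one ht))

lemma inv_succ_le_one (n : ℕ) : 1 / (n + 1 : ℝ) ≤ 1 := by
  rw [div_le_one (by positivity)]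
  have : (0:ℝ) ≤ n := Nat.cast_nonneg n
  linarith

lemma summable_boxCoeff {T : ℝ} (hT : T ≠ 0) : Summable fun n => |boxCoeff T n| := by
  refine Summable.of_nonneg_of_le (fun n => abs_nonneg _) (fun n => ?_)
    ((summable_exp_succ hT).mul_left (1 + |T|))
  have h1 := inv_succ_le_one n
  have h0 : 0 ≤ 1 / (n + 1 : ℝ) := by positivity
  unfold boxCoeff
  rw [abs_of_nonneg (by positivity), ← mul_assoc]
  refine mul_le_mul_of_nonneg_right ?_ (Real.exp_pos _).le
  calc 1 / (n + 1 : ℝ) * (1 / (n + 1 : ℝ) + |T|) ≤ 1 * (1 + |T|) := by gcongr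
    _ = _ := one_mul _

lemma log_ratio_nonneg {t α β : ℝ} (ht : t ≠ 0) (hα : α ∈ Set.Ioo 0 Real.pi)
    (hβ : β ∈ Set.Ioo 0 Real.pi) :
    0 ≤ Real.log ((2 * Real.cosh t - 2 * Real.cos (α + β)) /
        (2 * Real.cosh t - 2 * Real.cos (α - β))) := by
  apply Real.log_nonneg
  rw [one_le_div (D_pos ht _), Real.cos_add, Real.cos_sub]
  have h1 := Real.sin_pos_of_mem_Ioo hα
  have h2 := Real.sin_pos_of_mem_Ioo hβ
  have := mul_pos h1 h2
  linarith

open Set in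
lemma lintegral_alpha {t T β : ℝ} (ht : t ≠ 0) (htT : t - T ≠ 0) (hβ : β ∈ Ioo 0 Real.pi) :
    0 ≤ ∑' n : ℕ, 1 / (n + 1 : ℝ) * Real.sin ((n + 1 : ℝ) * β) *
      Real.exp (-((n + 1 : ℝ) * (|t| + |t - T|))) ∧
    ∫⁻ α in Ioo 0 Real.pi, ENNReal.ofReal (Real.sin α / (2 * Real.cosh t - 2 * Real.cos α) *
      Real.log ((2 * Real.cosh (t - T) - 2 * Real.cos (α + β)) /
        (2 * Real.cosh (t - T) - 2 * Real.cos (α - β)))) =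
    ENNReal.ofReal (2 * Real.pi * ∑' n : ℕ, 1 / (n + 1 : ℝ) * Real.sin ((n + 1 : ℝ) * β) *
      Real.exp (-((n + 1 : ℝ) * (|t| + |t - T|)))) := by
  have hs1 : Summable fun n : ℕ => |Real.exp (-((n + 1 : ℝ) * |t|))| := by
    simpa using summable_exp_succ ht
  have hs2 : Summable fun n : ℕ => |4 / (n + 1 : ℝ) * Real.exp (-((n + 1 : ℝ) * |t - T|)) *
      Real.sin ((n + 1 : ℝ) * β)| := by
    refine Summable.of_nonneg_of_le (fun n => abs_nonneg _) (fun n => ?_)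
      ((summable_exp_succ htT).mul_left 4)
    have h1 := inv_succ_le_one n
    have h0 : 0 ≤ 1 / (n + 1 : ℝ) := by positivity
    rw [abs_mul, abs_of_nonneg (by positivity : 0 ≤ 4 / (n + 1 : ℝ) * Real.exp _)]
    calc _ ≤ 4 / (n + 1 : ℝ) * Real.exp (-((n + 1 : ℝ) * |t - T|)) * 1 :=
          mul_le_mul_of_nonneg_left (Real.abs_sin_le_one _) (by positivity)
      _ = 4 * (1 / (n + 1 : ℝ)) * Real.exp (-((n + 1 : ℝ) * |t - T|)) := by ring
      _ ≤ 4 * 1 * Real.exp (-((n + 1 : ℝ) * |t - T|)) := by gcongr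
      _ = _ := by ring
  have key := parseval_sin _ _ hs1 hs2
  have e1 := fun α => (hasSum_poisson ht α).tsum_eq
  have e2 := fun α => (hasSum_log_ratio htT α β).tsum_eq
  have hc : Continuous fun α => Real.sin α / (2 * Real.cosh t - 2 * Real.cos α) *
      Real.log ((2 * Real.cosh (t - T) - 2 * Real.cos (α + β)) /
        (2 * Real.cosh (t - T) - 2 * Real.cos (α - β))) := by
    have := (continuous_sin_series _ hs1).mul (continuous_sin_series _ hs2)
    simp only [e1, e2] at this
    exact this
  have hnn : ∀ α ∈ Ioo 0 Real.pi, 0 ≤ Real.sin α / (2 * Real.cosh t - 2 * Real.cos α) *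
      Real.log ((2 * Real.cosh (t - T) - 2 * Real.cos (α + β)) /
        (2 * Real.cosh (t - T) - 2 * Real.cos (α - β))) := fun α hα =>
    mul_nonneg (div_nonneg (Real.sin_pos_of_mem_Ioo hα).le (D_pos ht α).le)
      (log_ratio_nonneg htT hα hβ)
  simp only [e1, e2] at key
  have hval : Real.pi / 2 * ∑' n : ℕ, Real.exp (-((n + 1 : ℝ) * |t|)) *
      (4 / (n + 1 : ℝ) * Real.exp (-((n + 1 : ℝ) * |t - T|)) * Real.sin ((n + 1 : ℝ) * β)) =
      2 * Real.pi * ∑' n : ℕ, 1 / (n + 1 : ℝ) * Real.sin ((n + 1 : ℝ) * β) *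
      Real.exp (-((n + 1 : ℝ) * (|t| + |t - T|))) := by
    rw [← tsum_mul_left, ← tsum_mul_left]
    refine tsum_congr fun n => ?_
    rw [mul_add, neg_add, Real.exp_add]
    ring
  rw [hval] at key
  have hi : 0 ≤ ∫ α in (0:ℝ)..Real.pi, Real.sin α / (2 * Real.cosh t - 2 * Real.cos α) *
      Real.log ((2 * Real.cosh (t - T) - 2 * Real.cos (α + β)) /
        (2 * Real.cosh (t - T) - 2 * Real.cos (α - β))) := by
    rw [intervalIntegral.integral_of_le Real.pi_pos.le, integral_Ioc_eq_integral_Ioo]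
    exact setIntegral_nonneg measurableSet_Ioo hnn
  refine ⟨?_, ?_⟩
  · rw [key] at hi
    exact nonneg_of_mul_nonneg_right hi (by positivity)
  · rw [lintegral_Ioo_ofReal hc hnn, key]

open Set in
lemma lintegral_t_alpha {T β : ℝ} (hT : T ≠ 0) (hβ : β ∈ Ioo 0 Real.pi) :
    0 ≤ boxSeries T β ∧
    ∫⁻ t : ℝ, ∫⁻ α in Ioo 0 Real.pi,
      ENNReal.ofReal (Real.sin α / (2 * Real.cosh t - 2 * Real.cos α) *
      Real.log ((2 * Real.cosh (t - T) - 2 * Real.cos (α + β)) /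
        (2 * Real.cosh (t - T) - 2 * Real.cos (α - β)))) =
    ENNReal.ofReal (2 * Real.pi * boxSeries T β) := by
  set F : ℕ → ℝ → ℝ := fun n t => 1 / (n + 1 : ℝ) * Real.sin ((n + 1 : ℝ) * β) *
      Real.exp (-((n + 1 : ℝ) * (|t| + |t - T|))) with hF
  have hae : ∀ᵐ t : ℝ, t ≠ 0 ∧ t - T ≠ 0 := by
    filter_upwards [Measure.ae_ne volume 0, Measure.ae_ne volume T] with t h1 h2
    exact ⟨h1, sub_ne_zero.mpr h2⟩
  have hbound : ∀ n t, ‖F n t‖ ≤ 1 / (n + 1 : ℝ) * Real.exp (-((n + 1 : ℝ) * (|t| + |t - T|))) := by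
    intro n t
    simp only [hF]
    rw [norm_mul, norm_mul, Real.norm_eq_abs, Real.norm_eq_abs, Real.norm_eq_abs, Real.abs_exp,
      abs_of_nonneg (by positivity : 0 ≤ 1 / (n + 1 : ℝ))]
    refine mul_le_mul_of_nonneg_right ?_ (Real.exp_pos _).le
    exact mul_le_of_le_one_right (by positivity) (Real.abs_sin_le_one _)
  have htri : ∀ t, |T| ≤ |t| + |t - T| := by
    intro t
    have := abs_sub t (t - T)
    simpa using this
  have hFint : ∀ n, Integrable (F n) := fun n =>
    (integral_two_exp (by positivity : 0 < (n + 1 : ℝ)) T).1.const_mul _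
  have hsum : Summable fun n => ∫ t, ‖F n t‖ := by
    refine Summable.of_nonneg_of_le (fun n => integral_nonneg fun t => norm_nonneg _) (fun n => ?_)
      (summable_boxCoeff hT)
    refine le_trans (integral_mono (hFint n).norm
      ((integral_two_exp (by positivity : 0 < (n + 1 : ℝ)) T).1.const_mul _) (hbound n)) ?_
    rw [integral_const_mul, (integral_two_exp (by positivity : 0 < (n + 1 : ℝ)) T).2]
    exact le_abs_self _
  have hHS := hasSum_integral_of_summable_integral_norm hFint hsum
  have hval : ∫ t, ∑' n, F n t = boxSeries T β := by
    rw [← hHS.tsum_eq]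
    unfold boxSeries boxCoeff
    refine tsum_congr fun n => ?_
    simp only [hF]
    rw [integral_const_mul, (integral_two_exp (by positivity : 0 < (n + 1 : ℝ)) T).2]
    ring
  have hF1 : ∀ n t, ‖F n t‖ ≤ Real.exp (-((n + 1 : ℝ) * |T|)) := by
    intro n t
    refine (hbound n t).trans ?_
    calc _ ≤ 1 * Real.exp (-((n + 1 : ℝ) * |T|)) := by
          gcongr
          · exact inv_succ_le_one n
          · exact htri t
      _ = _ := one_mul _
  have hcont : Continuous fun t => ∑' n, F n t := by
    refine continuous_tsum (fun n => ?_) (summable_exp_succ hT) hF1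
    simp only [hF]
    fun_prop
  have hexpsum : Summable fun n : ℕ => Real.exp (-((n : ℝ) * |T|)) := by
    have := summable_geometric_of_lt_one (Real.exp_pos _).le (exp_abs_lt_one hT)
    refine this.congr fun n => ?_
    rw [← Real.exp_nat_mul]; congr 1; ring
  have hFtot : Integrable fun t => ∑' n, F n t := by
    refine ((integral_two_exp one_pos T).1.const_mul
      (∑' n : ℕ, Real.exp (-((n : ℝ) * |T|)))).mono' hcont.aestronglyMeasurable
      (Filter.Eventually.of_forall fun t => ?_)
    rw [← tsum_mul_right]
    refine tsum_of_norm_bounded (hexpsum.mul_right _).hasSum fun n => ?_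
    refine (hbound n t).trans ?_
    calc 1 / (n + 1 : ℝ) * Real.exp (-((n + 1 : ℝ) * (|t| + |t - T|)))
        ≤ 1 * Real.exp (-((n + 1 : ℝ) * (|t| + |t - T|))) := by
          gcongr; exact inv_succ_le_one n
      _ = Real.exp (-((n : ℝ) * (|t| + |t - T|))) * Real.exp (-(1 * (|t| + |t - T|))) := by
          rw [one_mul, ← Real.exp_add]; congr 1; ring
      _ ≤ _ := by
          gcongr
          exact htri t
  have hnn : 0 ≤ᵐ[volume] fun t => ∑' n, F n t := by
    filter_upwards [hae] with t ht
    exact (lintegral_alpha ht.1 ht.2 hβ).1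
  refine ⟨?_, ?_⟩
  · rw [← hval]
    exact integral_nonneg_of_ae hnn
  · rw [← hval, ENNReal.ofReal_mul (by positivity), ofReal_integral_eq_lintegral_ofReal hFtot hnn,
      ← lintegral_const_mul' _ _ ENNReal.ofReal_ne_top]
    refine lintegral_congr_ae ?_
    filter_upwards [hae] with t ht
    rw [(lintegral_alpha ht.1 ht.2 hβ).2, ENNReal.ofReal_mul (by positivity)]


/-- The integrand of the box function in coordinates. -/
noncomputable def boxKernel (p q a b c : ℝ) : ℝ :=
  1 / ((a ^ 2 + b ^ 2 + c) * ((1 - a) ^ 2 + b ^ 2 + c) * ((p - a) ^ 2 + (q - b) ^ 2 + c))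

/-- The box function in coordinates. -/
noncomputable def boxW (p q : ℝ) : ENNReal :=
  ∫⁻ v : EuclideanSpace ℝ (Fin 4), ENNReal.ofReal (boxKernel p q (v 0) (v 1) (v 2 ^ 2 + v 3 ^ 2))

lemma measurable_boxW : Measurable fun p : ℝ × ℝ => boxW p.1 p.2 := by
  unfold boxW
  refine Measurable.lintegral_prod_right' (ν := volume)
    (f := fun z : (ℝ × ℝ) × EuclideanSpace ℝ (Fin 4) =>
      ENNReal.ofReal (boxKernel z.1.1 z.1.2 (z.2 0) (z.2 1) (z.2 2 ^ 2 + z.2 3 ^ 2))) ?_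
  unfold boxKernel
  fun_prop

lemma kernel_algebra {t T α β φ : ℝ} (ht : t ≠ 0) (htT : t - T ≠ 0) (hα : 0 < Real.sin α)
    (hβ : 0 < Real.sin β) :
    Real.exp t * Real.sin α * (Real.exp t * Real.sin α * Real.sin φ *
      boxKernel (Real.exp T * Real.cos β) (Real.exp T * Real.sin β) (Real.exp t * Real.cos α)
        (Real.exp t * Real.sin α * Real.cos φ) ((Real.exp t * Real.sin α * Real.sin φ) ^ 2)) =
    (Real.sin α ^ 2 / (Real.exp t ^ 2 * Real.exp T * (2 * Real.cosh t - 2 * Real.cos α))) *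
      (Real.sin φ / ((2 * Real.cosh (t - T) - 2 * Real.cos α * Real.cos β) -
        (2 * Real.sin α * Real.sin β) * Real.cos φ)) := by
  have hr := Real.exp_pos t
  have hR := Real.exp_pos T
  have hD := D_pos ht α
  have hP : 0 < (2 * Real.cosh (t - T) - 2 * Real.cos α * Real.cos β) -
        (2 * Real.sin α * Real.sin β) * Real.cos φ := by
    have h1 := D_pos htT (α - β)
    rw [Real.cos_sub] at h1
    have := mul_le_mul_of_nonneg_left (Real.cos_le_one φ) (mul_pos hα hβ).le
    nlinarith
  have c1 : Real.exp t * (2 * Real.cosh t) = Real.exp t ^ 2 + 1 := by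
    rw [Real.cosh_eq, Real.exp_neg]; field_simp
  have c2 : Real.exp t * Real.exp T * (2 * Real.cosh (t - T)) = Real.exp t ^ 2 + Real.exp T ^ 2 := by
    rw [Real.cosh_eq, neg_sub, Real.exp_sub, Real.exp_sub]; field_simp
  have sα := Real.sin_sq_add_cos_sq α
  have sβ := Real.sin_sq_add_cos_sq β
  have sφ := Real.sin_sq_add_cos_sq φ
  have k1 : (Real.exp t * Real.cos α) ^ 2 + (Real.exp t * Real.sin α * Real.cos φ) ^ 2 +
      (Real.exp t * Real.sin α * Real.sin φ) ^ 2 = Real.exp t ^ 2 := by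
    linear_combination (Real.exp t ^ 2 * Real.sin α ^ 2) * sφ + Real.exp t ^ 2 * sα
  have k2 : (1 - Real.exp t * Real.cos α) ^ 2 + (Real.exp t * Real.sin α * Real.cos φ) ^ 2 +
      (Real.exp t * Real.sin α * Real.sin φ) ^ 2 =
      Real.exp t * (2 * Real.cosh t - 2 * Real.cos α) := by
    linear_combination k1 - c1
  have k3 : (Real.exp T * Real.cos β - Real.exp t * Real.cos α) ^ 2 +
      (Real.exp T * Real.sin β - Real.exp t * Real.sin α * Real.cos φ) ^ 2 +
      (Real.exp t * Real.sin α * Real.sin φ) ^ 2 =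
      Real.exp t * Real.exp T * ((2 * Real.cosh (t - T) - 2 * Real.cos α * Real.cos β) -
        (2 * Real.sin α * Real.sin β) * Real.cos φ) := by
    linear_combination k1 - c2 + Real.exp T ^ 2 * sβ
  unfold boxKernel
  rw [k1, k2, k3]
  generalize (2 * Real.cosh (t - T) - 2 * Real.cos α * Real.cos β) -
        (2 * Real.sin α * Real.sin β) * Real.cos φ = P at hP
  generalize 2 * Real.cosh t - 2 * Real.cos α = D at hD
  field_simp

open Set in
lemma boxW_eq {T β : ℝ} (hT : T ≠ 0) (hβ : β ∈ Ioo 0 Real.pi) :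
    boxW (Real.exp T * Real.cos β) (Real.exp T * Real.sin β) =
      ENNReal.ofReal (2 * Real.pi ^ 2 / (Real.exp T * Real.sin β) * boxSeries T β) := by
  have hsβ := Real.sin_pos_of_mem_Ioo hβ
  have hR := Real.exp_pos T
  unfold boxW
  rw [lintegral_spherical (fun a b c => ENNReal.ofReal
    (boxKernel (Real.exp T * Real.cos β) (Real.exp T * Real.sin β) a b c))
    (by unfold boxKernel; fun_prop), lintegral_exp_subst]
  have hae : ∀ᵐ t : ℝ, t ≠ 0 ∧ t - T ≠ 0 := by
    filter_upwards [Measure.ae_ne volume 0, Measure.ae_ne volume T] with t h1 h2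
    exact ⟨h1, sub_ne_zero.mpr h2⟩
  have step : ∀ᵐ t : ℝ, ENNReal.ofReal (Real.exp t) * ∫⁻ α in Ioo 0 Real.pi,
        ENNReal.ofReal (Real.exp t) * ∫⁻ φ in Ioo 0 Real.pi,
          ENNReal.ofReal (Real.exp t * Real.sin α) *
          (ENNReal.ofReal (Real.exp t * Real.sin α * Real.sin φ) *
          ENNReal.ofReal (boxKernel (Real.exp T * Real.cos β) (Real.exp T * Real.sin β)
            (Real.exp t * Real.cos α) (Real.exp t * Real.sin α * Real.cos φ)
            ((Real.exp t * Real.sin α * Real.sin φ) ^ 2))) =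
      ENNReal.ofReal (1 / (2 * Real.exp T * Real.sin β)) * ∫⁻ α in Ioo 0 Real.pi,
      ENNReal.ofReal (Real.sin α / (2 * Real.cosh t - 2 * Real.cos α) *
      Real.log ((2 * Real.cosh (t - T) - 2 * Real.cos (α + β)) /
        (2 * Real.cosh (t - T) - 2 * Real.cos (α - β)))) := by
    filter_upwards [hae] with t ht
    have hr := Real.exp_pos t
    rw [← lintegral_const_mul' _ _ ENNReal.ofReal_ne_top,
      ← lintegral_const_mul' _ _ ENNReal.ofReal_ne_top]
    refine setLIntegral_congr_fun measurableSet_Ioo fun α hα => ?_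
    have hsα := Real.sin_pos_of_mem_Ioo hα
    have hD := D_pos ht.1 α
    have h1 : ∫⁻ φ in Ioo 0 Real.pi,
          ENNReal.ofReal (Real.exp t * Real.sin α) *
          (ENNReal.ofReal (Real.exp t * Real.sin α * Real.sin φ) *
          ENNReal.ofReal (boxKernel (Real.exp T * Real.cos β) (Real.exp T * Real.sin β)
            (Real.exp t * Real.cos α) (Real.exp t * Real.sin α * Real.cos φ)
            ((Real.exp t * Real.sin α * Real.sin φ) ^ 2))) =
        ∫⁻ φ in Ioo 0 Real.pi, ENNReal.ofReal
          (Real.sin α ^ 2 / (Real.exp t ^ 2 * Real.exp T * (2 * Real.cosh t - 2 * Real.cos α))) *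
          ENNReal.ofReal (Real.sin φ / ((2 * Real.cosh (t - T) - 2 * Real.cos α * Real.cos β) -
        (2 * Real.sin α * Real.sin β) * Real.cos φ)) := by
      refine setLIntegral_congr_fun measurableSet_Ioo fun φ hφ => ?_
      have hsφ := Real.sin_pos_of_mem_Ioo hφ
      rw [← ENNReal.ofReal_mul (by positivity), ← ENNReal.ofReal_mul (by positivity),
        ← ENNReal.ofReal_mul (by positivity), kernel_algebra ht.1 ht.2 hsα hsβ]
    have hB : 0 < 2 * Real.sin α * Real.sin β := by positivity
    have hA : 2 * Real.sin α * Real.sin β <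
        2 * Real.cosh (t - T) - 2 * Real.cos α * Real.cos β := by
      have h1 := D_pos ht.2 (α - β)
      rw [Real.cos_sub] at h1
      linarith
    rw [h1, lintegral_const_mul' _ _ ENNReal.ofReal_ne_top, lintegral_phi hB hA,
      ← ENNReal.ofReal_mul (by positivity), ← ENNReal.ofReal_mul (by positivity),
      ← ENNReal.ofReal_mul (by positivity), ← ENNReal.ofReal_mul (by positivity)]
    congr 1
    rw [show 2 * Real.cosh (t - T) - 2 * Real.cos α * Real.cos β + 2 * Real.sin α * Real.sin β =
      2 * Real.cosh (t - T) - 2 * Real.cos (α + β) by rw [Real.cos_add]; ring,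
      show 2 * Real.cosh (t - T) - 2 * Real.cos α * Real.cos β - 2 * Real.sin α * Real.sin β =
      2 * Real.cosh (t - T) - 2 * Real.cos (α - β) by rw [Real.cos_sub]; ring]
    generalize Real.log _ = Lg
    generalize 2 * Real.cosh t - 2 * Real.cos α = D at hD
    field_simp
  rw [lintegral_congr_ae step, lintegral_const_mul' _ _ ENNReal.ofReal_ne_top,
    (lintegral_t_alpha hT hβ).2, ← ENNReal.ofReal_mul (by positivity),
    ← ENNReal.ofReal_mul (by positivity)]
  congr 1
  field_simp

open Set in
lemma lintegral_sin : ∫⁻ φ in Ioo 0 Real.pi, ENNReal.ofReal (Real.sin φ) = ENNReal.ofReal 2 := by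
  rw [lintegral_Ioo_ofReal Real.continuous_sin fun x hx => (Real.sin_pos_of_mem_Ioo hx).le,
    integral_sin]
  norm_num

open Set in
lemma lintegral_boxSeries_sq {T : ℝ} (hT : T ≠ 0) :
    ∫⁻ β in Ioo 0 Real.pi, ENNReal.ofReal (boxSeries T β ^ 2) =
      ENNReal.ofReal (Real.pi / 2) * ∑' n, ENNReal.ofReal (boxCoeff T n ^ 2) := by
  have hs := summable_boxCoeff hT
  have hc : Continuous fun β => boxSeries T β := continuous_sin_series _ hs
  have hs2 : Summable fun n => boxCoeff T n ^ 2 := by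
    refine Summable.of_nonneg_of_le (fun n => sq_nonneg _) (fun n => ?_)
      (hs.mul_left (∑' n, |boxCoeff T n|))
    rw [← sq_abs, sq]
    exact mul_le_mul_of_nonneg_right (hs.le_tsum n fun _ _ => abs_nonneg _) (abs_nonneg _)
  rw [lintegral_Ioo_ofReal (f := fun β => boxSeries T β ^ 2) (hc.pow 2) fun x _ => sq_nonneg _,
    ← ENNReal.ofReal_tsum_of_nonneg (fun n => sq_nonneg _) hs2,
    ← ENNReal.ofReal_mul (by positivity)]
  have := parseval_sin _ _ hs hs
  congr 1
  simp_rw [sq]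
  exact this

open Set in
lemma lintegral_boxW_sq :
    ∫⁻ v : EuclideanSpace ℝ (Fin 4), ENNReal.ofReal (1 / (v 0 ^ 2 + v 1 ^ 2 + (v 2 ^ 2 + v 3 ^ 2))) *
      boxW (v 0) (Real.sqrt (v 1 ^ 2 + (v 2 ^ 2 + v 3 ^ 2))) ^ 2 =
    ENNReal.ofReal (20 * Real.pi ^ 6) * ∑' n : ℕ, ENNReal.ofReal (1 / (n + 1 : ℝ) ^ 5) := by
  have hmW : Measurable fun p : ℝ × ℝ × ℝ =>
      ENNReal.ofReal (1 / (p.1 ^ 2 + p.2.1 ^ 2 + p.2.2)) *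
      boxW p.1 (Real.sqrt (p.2.1 ^ 2 + p.2.2)) ^ 2 := by
    refine Measurable.mul (by fun_prop) (Measurable.pow_const ?_ 2)
    exact measurable_boxW.comp (f := fun p : ℝ × ℝ × ℝ => (p.1, Real.sqrt (p.2.1 ^ 2 + p.2.2)))
      (by fun_prop)
  rw [lintegral_spherical (fun a b c => ENNReal.ofReal (1 / (a ^ 2 + b ^ 2 + c)) *
      boxW a (Real.sqrt (b ^ 2 + c)) ^ 2) hmW, lintegral_exp_subst]
  have step : ∀ᵐ T : ℝ, ENNReal.ofReal (Real.exp T) * ∫⁻ β in Ioo 0 Real.pi,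
        ENNReal.ofReal (Real.exp T) * ∫⁻ φ in Ioo 0 Real.pi,
          ENNReal.ofReal (Real.exp T * Real.sin β) *
          (ENNReal.ofReal (Real.exp T * Real.sin β * Real.sin φ) *
          (ENNReal.ofReal (1 / ((Real.exp T * Real.cos β) ^ 2 +
            (Real.exp T * Real.sin β * Real.cos φ) ^ 2 +
            (Real.exp T * Real.sin β * Real.sin φ) ^ 2)) *
          boxW (Real.exp T * Real.cos β) (Real.sqrt ((Real.exp T * Real.sin β * Real.cos φ) ^ 2 +
            (Real.exp T * Real.sin β * Real.sin φ) ^ 2)) ^ 2)) =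
      ENNReal.ofReal (4 * Real.pi ^ 5) * ∑' n, ENNReal.ofReal (boxCoeff T n ^ 2) := by
    filter_upwards [Measure.ae_ne volume 0] with T hT
    have hR := Real.exp_pos T
    have e5 : ENNReal.ofReal (4 * Real.pi ^ 5) = ENNReal.ofReal (8 * Real.pi ^ 4) *
        ENNReal.ofReal (Real.pi / 2) := by
      rw [← ENNReal.ofReal_mul (by positivity)]; congr 1; ring
    rw [e5, mul_assoc, ← lintegral_boxSeries_sq hT,
      ← lintegral_const_mul' _ _ ENNReal.ofReal_ne_top,
      ← lintegral_const_mul' _ _ ENNReal.ofReal_ne_top]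
    refine setLIntegral_congr_fun measurableSet_Ioo fun β hβ => ?_
    have hsβ := Real.sin_pos_of_mem_Ioo hβ
    have hS := (lintegral_t_alpha hT hβ).1
    have h1 : ∫⁻ φ in Ioo 0 Real.pi,
          ENNReal.ofReal (Real.exp T * Real.sin β) *
          (ENNReal.ofReal (Real.exp T * Real.sin β * Real.sin φ) *
          (ENNReal.ofReal (1 / ((Real.exp T * Real.cos β) ^ 2 +
            (Real.exp T * Real.sin β * Real.cos φ) ^ 2 +
            (Real.exp T * Real.sin β * Real.sin φ) ^ 2)) *
          boxW (Real.exp T * Real.cos β) (Real.sqrt ((Real.exp T * Real.sin β * Real.cos φ) ^ 2 +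
            (Real.exp T * Real.sin β * Real.sin φ) ^ 2)) ^ 2)) =
        ∫⁻ φ in Ioo 0 Real.pi, ENNReal.ofReal (4 * Real.pi ^ 4 / Real.exp T ^ 2 *
          boxSeries T β ^ 2) * ENNReal.ofReal (Real.sin φ) := by
      refine setLIntegral_congr_fun measurableSet_Ioo fun φ hφ => ?_
      have hsφ := Real.sin_pos_of_mem_Ioo hφ
      have sβ := Real.sin_sq_add_cos_sq β
      have sφ := Real.sin_sq_add_cos_sq φ
      have k0 : (Real.exp T * Real.sin β * Real.cos φ) ^ 2 +
          (Real.exp T * Real.sin β * Real.sin φ) ^ 2 = (Real.exp T * Real.sin β) ^ 2 := by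
        linear_combination (Real.exp T ^ 2 * Real.sin β ^ 2) * sφ
      have k1 : (Real.exp T * Real.cos β) ^ 2 + (Real.exp T * Real.sin β * Real.cos φ) ^ 2 +
          (Real.exp T * Real.sin β * Real.sin φ) ^ 2 = Real.exp T ^ 2 := by
        linear_combination k0 + Real.exp T ^ 2 * sβ
      rw [k1, k0, Real.sqrt_sq (by positivity), boxW_eq hT hβ,
        ← ENNReal.ofReal_pow (by positivity), ← ENNReal.ofReal_mul (by positivity),
        ← ENNReal.ofReal_mul (by positivity), ← ENNReal.ofReal_mul (by positivity),
        ← ENNReal.ofReal_mul (by positivity)]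
      congr 1
      field_simp
      ring
    rw [h1, lintegral_const_mul' _ _ ENNReal.ofReal_ne_top, lintegral_sin,
      ← ENNReal.ofReal_mul (by positivity), ← ENNReal.ofReal_mul (by positivity),
      ← ENNReal.ofReal_mul (by positivity), ← ENNReal.ofReal_mul (by positivity)]
    congr 1
    field_simp
    ring
  rw [lintegral_congr_ae step, lintegral_const_mul' _ _ ENNReal.ofReal_ne_top, lintegral_tsum]
  · have h2 : ∀ n : ℕ, ∫⁻ T : ℝ, ENNReal.ofReal (boxCoeff T n ^ 2) =
        ENNReal.ofReal (5 / 2) * ENNReal.ofReal (1 / (n + 1 : ℝ) ^ 5) := by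
      intro n
      rw [← ENNReal.ofReal_mul (by positivity),
        ← lintegral_sq_coeff (by positivity : 0 < (n + 1 : ℝ))]
      rfl
    simp_rw [h2]
    rw [ENNReal.tsum_mul_left, ← mul_assoc, ← mul_assoc, ← ENNReal.ofReal_mul (by positivity),
      ← ENNReal.ofReal_mul (by positivity)]
    congr 2
    ring
  · intro n
    unfold boxCoeff
    fun_prop


lemma lintegral_basis (b : OrthonormalBasis (Fin 4) ℝ (EuclideanSpace ℝ (Fin 4)))
    (g : EuclideanSpace ℝ (Fin 4) → ENNReal) :
    ∫⁻ y, g y = ∫⁻ v, g (b.repr.symm v) :=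
  (b.measurePreserving_repr_symm.lintegral_comp_emb
    b.measurableEquiv.symm.measurableEmbedding g).symm

/-- The box function. -/
noncomputable def boxPhi (e x : EuclideanSpace ℝ (Fin 4)) : ENNReal :=
  ∫⁻ y : EuclideanSpace ℝ (Fin 4), ENNReal.ofReal (1 / (‖y‖ ^ 2 * ‖e - y‖ ^ 2 * ‖x - y‖ ^ 2))

lemma boxPhi_eq_of_basis (b : OrthonormalBasis (Fin 4) ℝ (EuclideanSpace ℝ (Fin 4)))
    (p q : ℝ) : boxPhi (b 0) (p • b 0 + q • b 1) = boxW p q := by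
  unfold boxPhi boxW
  rw [lintegral_basis b]
  refine lintegral_congr fun v => ?_
  have hn : ∀ w : EuclideanSpace ℝ (Fin 4), ‖w - b.repr.symm v‖ = ‖b.repr w - v‖ := by
    intro w
    rw [← b.repr.norm_map, map_sub, LinearIsometryEquiv.apply_symm_apply]
  rw [hn, hn, LinearIsometryEquiv.norm_map, map_add, map_smul, map_smul, b.repr_self, b.repr_self]
  unfold boxKernel
  simp only [EuclideanSpace.norm_sq_eq, Fin.sum_univ_four]
  simp
  congr 3 <;> ring_nf

lemma exists_basis_one (e : EuclideanSpace ℝ (Fin 4)) (he : ‖e‖ = 1) :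
    ∃ b : OrthonormalBasis (Fin 4) ℝ (EuclideanSpace ℝ (Fin 4)), b 0 = e := by
  have ho : Orthonormal ℝ (Set.domRestrict ({0} : Set (Fin 4)) fun _ => e) := by
    refine ⟨fun i => he, fun i j hij => ?_⟩
    exact absurd (Subsingleton.elim i j) hij
  obtain ⟨b, hb⟩ := ho.exists_orthonormalBasis_extension_of_card_eq (by simp)
  exact ⟨b, hb 0 rfl⟩

lemma exists_basis_two (e w : EuclideanSpace ℝ (Fin 4)) (he : ‖e‖ = 1) (hw : ‖w‖ = 1)
    (hew : inner ℝ e w = 0) :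
    ∃ b : OrthonormalBasis (Fin 4) ℝ (EuclideanSpace ℝ (Fin 4)), b 0 = e ∧ b 1 = w := by
  have ho : Orthonormal ℝ (Set.domRestrict ({0, 1} : Set (Fin 4)) ![e, w, 0, 0]) := by
    rw [orthonormal_iff_ite]
    rintro ⟨i, hi⟩ ⟨j, hj⟩
    have hwe : inner ℝ w e = 0 := by rw [real_inner_comm]; exact hew
    have hi' := hi
    have hj' := hj
    simp only [Set.mem_insert_iff, Set.mem_singleton_iff] at hi' hj'
    rcases hi' with h | h <;> rcases hj' with h' | h' <;> subst h <;> subst h' <;>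
      simp [he, hw, hew, hwe]
  obtain ⟨b, hb⟩ := ho.exists_orthonormalBasis_extension_of_card_eq (by simp)
  exact ⟨b, hb 0 (by simp), hb 1 (by simp)⟩

lemma boxPhi_eq (e x : EuclideanSpace ℝ (Fin 4)) (he : ‖e‖ = 1) :
    boxPhi e x = boxW (inner ℝ e x) (Real.sqrt (‖x‖ ^ 2 - inner ℝ e x ^ 2)) := by
  set p := inner ℝ e x with hp
  have hn : ‖x - p • e‖ ^ 2 = ‖x‖ ^ 2 - p ^ 2 := by
    rw [norm_sub_sq_real, inner_smul_right, real_inner_comm, norm_smul, he, Real.norm_eq_abs,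
      mul_one, sq_abs]
    ring
  rw [← hn, Real.sqrt_sq (norm_nonneg _)]
  by_cases h : x - p • e = 0
  · obtain ⟨b, hb⟩ := exists_basis_one e he
    have := boxPhi_eq_of_basis b p ‖x - p • e‖
    rw [h, norm_zero, zero_smul, add_zero, hb, ← sub_eq_zero.mp h] at this
    rw [h, norm_zero, this]
  · have hq : ‖x - p • e‖ ≠ 0 := norm_ne_zero_iff.mpr h
    obtain ⟨b, hb0, hb1⟩ := exists_basis_two e (‖x - p • e‖⁻¹ • (x - p • e)) he
      (by rw [norm_smul, norm_inv, norm_norm, inv_mul_cancel₀ hq])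
      (by rw [inner_smul_right, inner_sub_right, inner_smul_right, real_inner_self_eq_norm_sq, he,
            ← hp]; ring)
    have := boxPhi_eq_of_basis b p ‖x - p • e‖
    rw [hb0, hb1, smul_smul, mul_inv_cancel₀ hq, one_smul, add_sub_cancel] at this
    exact this

lemma lintegral_boxPhi_sq (e : EuclideanSpace ℝ (Fin 4)) (he : ‖e‖ = 1) :
    ∫⁻ x, ENNReal.ofReal (1 / ‖x‖ ^ 2) * boxPhi e x ^ 2 =
    ENNReal.ofReal (20 * Real.pi ^ 6) * ∑' n : ℕ, ENNReal.ofReal (1 / (n + 1 : ℝ) ^ 5) := by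
  obtain ⟨b, hb⟩ := exists_basis_one e he
  rw [lintegral_basis b, ← lintegral_boxW_sq]
  refine lintegral_congr fun v => ?_
  have h1 : inner ℝ e (b.repr.symm v) = v 0 := by
    rw [← hb, ← b.repr_apply_apply, LinearIsometryEquiv.apply_symm_apply]
  have h2 : ‖b.repr.symm v‖ ^ 2 = v 0 ^ 2 + v 1 ^ 2 + (v 2 ^ 2 + v 3 ^ 2) := by
    rw [LinearIsometryEquiv.norm_map, EuclideanSpace.norm_sq_eq, Fin.sum_univ_four]
    simp
    ring
  rw [boxPhi_eq e _ he, h1, h2]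
  congr 4
  ring

lemma zeta_five : ∑' n : ℕ, ENNReal.ofReal (1 / (n + 1 : ℝ) ^ 5) =
      ENNReal.ofReal (∑' n : ℕ, 1 / (n + 1 : ℝ) ^ 5) ∧
    ((∑' n : ℕ, 1 / (n + 1 : ℝ) ^ 5 : ℝ) : ℂ) = riemannZeta 5 := by
  have hs : Summable fun n : ℕ => 1 / (n : ℝ) ^ 5 := Real.summable_one_div_nat_pow.mpr (by norm_num)
  have hs1 : Summable fun n : ℕ => 1 / (n + 1 : ℝ) ^ 5 := by
    have := (summable_nat_add_iff 1).mpr hs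
    simpa using this
  refine ⟨(ENNReal.ofReal_tsum_of_nonneg (fun n => by positivity) hs1).symm, ?_⟩
  have h := zeta_nat_eq_tsum_of_gt_one (k := 5) (by norm_num)
  have h' : ∑' n : ℕ, 1 / (n : ℝ) ^ 5 = ∑' n : ℕ, 1 / (n + 1 : ℝ) ^ 5 := by
    rw [hs.tsum_eq_zero_add]
    simp
  rw [← h']
  push_cast at h ⊢
  exact h.symm

lemma lintegral_wheel (e : EuclideanSpace ℝ (Fin 4)) :
    ∫⁻ x : EuclideanSpace ℝ (Fin 4) × EuclideanSpace ℝ (Fin 4) × EuclideanSpace ℝ (Fin 4),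
      ENNReal.ofReal (1 / (‖x.1‖ ^ 2 * ‖x.2.1‖ ^ 2 * ‖x.2.2‖ ^ 2 * ‖e - x.1‖ ^ 2 *
        ‖x.1 - x.2.1‖ ^ 2 * ‖x.2.1 - x.2.2‖ ^ 2 * ‖x.2.2 - e‖ ^ 2)) =
    ∫⁻ x, ENNReal.ofReal (1 / ‖x‖ ^ 2) * boxPhi e x ^ 2 := by
  have hm : Measurable fun z : EuclideanSpace ℝ (Fin 4) × EuclideanSpace ℝ (Fin 4) =>
      ENNReal.ofReal (1 / (‖z.1‖ ^ 2 * ‖e - z.1‖ ^ 2 * ‖z.2 - z.1‖ ^ 2)) := by fun_prop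
  have hmPhi : Measurable fun x => boxPhi e x :=
    Measurable.lintegral_prod_left' (μ := volume) hm
  rw [Measure.volume_eq_prod, lintegral_prod _ (by fun_prop)]
  have h1 : ∀ y : EuclideanSpace ℝ (Fin 4),
      ∫⁻ z : EuclideanSpace ℝ (Fin 4) × EuclideanSpace ℝ (Fin 4),
      ENNReal.ofReal (1 / (‖y‖ ^ 2 * ‖z.1‖ ^ 2 * ‖z.2‖ ^ 2 * ‖e - y‖ ^ 2 *
        ‖y - z.1‖ ^ 2 * ‖z.1 - z.2‖ ^ 2 * ‖z.2 - e‖ ^ 2)) =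
      ∫⁻ x : EuclideanSpace ℝ (Fin 4), ENNReal.ofReal (1 / ‖x‖ ^ 2) * boxPhi e x *
        ENNReal.ofReal (1 / (‖y‖ ^ 2 * ‖e - y‖ ^ 2 * ‖x - y‖ ^ 2)) := by
    intro y
    rw [Measure.volume_eq_prod, lintegral_prod _ (by fun_prop)]
    refine lintegral_congr fun x => ?_
    unfold boxPhi
    rw [mul_right_comm, ← lintegral_const_mul' _ _
      (ENNReal.mul_ne_top ENNReal.ofReal_ne_top ENNReal.ofReal_ne_top)]
    refine lintegral_congr fun w => ?_
    rw [← ENNReal.ofReal_mul (by positivity), ← ENNReal.ofReal_mul (by positivity)]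
    congr 1
    rw [norm_sub_rev y x, norm_sub_rev w e, one_div_mul_one_div, one_div_mul_one_div]
    congr 1
    ring
  simp only [h1]
  rw [lintegral_lintegral_swap]
  · refine lintegral_congr fun x => ?_
    rw [lintegral_const_mul _ (by fun_prop), mul_assoc, sq (boxPhi e x)]
    rfl
  · apply Measurable.aemeasurable
    refine Measurable.mul (Measurable.mul (by fun_prop) (hmPhi.comp measurable_snd)) ?_
    exact hm

/-- The Feynman period of the wheel with four spokes in four dimensions:
the hub at `0`, one rim vertex at the unit vector `e`, the remaining three rim
vertices `x₂, x₃, x₄` integrated, equals `20ζ(5)`. -/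
theorem period_wheel_four_spokes
    (e : EuclideanSpace ℝ (Fin 4)) (he : ‖e‖ = 1) :
    Integrable (fun x : EuclideanSpace ℝ (Fin 4) × EuclideanSpace ℝ (Fin 4) ×
        EuclideanSpace ℝ (Fin 4) =>
      1 / (‖x.1‖ ^ 2 * ‖x.2.1‖ ^ 2 * ‖x.2.2‖ ^ 2 * ‖e - x.1‖ ^ 2 *
        ‖x.1 - x.2.1‖ ^ 2 * ‖x.2.1 - x.2.2‖ ^ 2 * ‖x.2.2 - e‖ ^ 2)) ∧
    (((1 / Real.pi ^ 6) * ∫ x : EuclideanSpace ℝ (Fin 4) × EuclideanSpace ℝ (Fin 4) ×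
        EuclideanSpace ℝ (Fin 4),
        1 / (‖x.1‖ ^ 2 * ‖x.2.1‖ ^ 2 * ‖x.2.2‖ ^ 2 * ‖e - x.1‖ ^ 2 *
          ‖x.1 - x.2.1‖ ^ 2 * ‖x.2.1 - x.2.2‖ ^ 2 * ‖x.2.2 - e‖ ^ 2) : ℝ) : ℂ)
      = 20 * riemannZeta 5 := by
  have hl := lintegral_wheel e
  rw [lintegral_boxPhi_sq e he, zeta_five.1, ← ENNReal.ofReal_mul (by positivity)] at hl
  have hmeas : AEStronglyMeasurable (fun x : EuclideanSpace ℝ (Fin 4) × EuclideanSpace ℝ (Fin 4) ×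
        EuclideanSpace ℝ (Fin 4) =>
      1 / (‖x.1‖ ^ 2 * ‖x.2.1‖ ^ 2 * ‖x.2.2‖ ^ 2 * ‖e - x.1‖ ^ 2 *
        ‖x.1 - x.2.1‖ ^ 2 * ‖x.2.1 - x.2.2‖ ^ 2 * ‖x.2.2 - e‖ ^ 2)) volume :=
    Measurable.aestronglyMeasurable (by fun_prop)
  have hnn : ∀ x : EuclideanSpace ℝ (Fin 4) × EuclideanSpace ℝ (Fin 4) ×
        EuclideanSpace ℝ (Fin 4),
      0 ≤ 1 / (‖x.1‖ ^ 2 * ‖x.2.1‖ ^ 2 * ‖x.2.2‖ ^ 2 * ‖e - x.1‖ ^ 2 *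
        ‖x.1 - x.2.1‖ ^ 2 * ‖x.2.1 - x.2.2‖ ^ 2 * ‖x.2.2 - e‖ ^ 2) := fun x => by positivity
  refine ⟨⟨hmeas, ?_⟩, ?_⟩
  · rw [hasFiniteIntegral_iff_ofReal (Filter.Eventually.of_forall hnn), hl]
    exact ENNReal.ofReal_lt_top
  · have h0 : 0 ≤ ∑' n : ℕ, 1 / (n + 1 : ℝ) ^ 5 := tsum_nonneg fun n => by positivity
    rw [integral_eq_lintegral_of_nonneg_ae (Filter.Eventually.of_forall hnn) hmeas, hl,
      ENNReal.toReal_ofReal (by positivity), ← zeta_five.2, ← Complex.ofReal_ofNat,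
      ← Complex.ofReal_mul]
    congr 1
    have := Real.pi_pos
    field_simp
end

section
/- Let D ≥ 1 be an integer and let a, b be real numbers with 0 < a < D, 0 < b < D and a + b > D. Then for every nonzero z ∈ ℝ^D the function x ↦ ‖x‖^{−a}‖x − z‖^{−b} is Lebesgue integrable on ℝ^D and π^{−D/2} ∫_{ℝ^D} ‖x‖^{−a}‖x − z‖^{−b} dx = [Γ((D−a)/2)·Γ((D−b)/2)·Γ((a+b−D)/2)] / [Γ(a/2)·Γ(b/2)·Γ(D − (a+b)/2)] · ‖z‖^{D−a−b}. -/
open MeasureTheory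

lemma pc_gamma {p r c : ℝ} (hp : 0 < p) (hr : 0 < r) (hc : 0 ≤ c) :
    ∫⁻ s in Set.Ioi (0:ℝ), ENNReal.ofReal (c * (s ^ (p - 1) * Real.exp (-(r * s))))
      = ENNReal.ofReal (c * (Real.Gamma p * r ^ (-p))) := by
  have h := Real.integral_rpow_mul_exp_neg_mul_Ioi hp hr
  have hG := Real.Gamma_pos_of_pos hp
  have hi : IntegrableOn (fun s : ℝ => s ^ (p - 1) * Real.exp (-(r * s))) (Set.Ioi 0) := by
    by_contra hn
    rw [integral_undef hn] at h
    have : 0 < (1 / r) ^ p * Real.Gamma p := by positivity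
    linarith
  rw [← ofReal_integral_eq_lintegral_ofReal (hi.const_mul c)]
  · rw [integral_const_mul, h, one_div, Real.inv_rpow hr.le, Real.rpow_neg hr.le, mul_comm (Real.Gamma p)]
  · filter_upwards [ae_restrict_mem measurableSet_Ioi] with s hs
    have hs' : (0:ℝ) < s := hs
    show 0 ≤ c * _
    positivity

lemma pc_beta {p q c : ℝ} (hp : 0 < p) (hq : 0 < q) (hc : 0 ≤ c) :
    ∫⁻ u in Set.Ioi (0:ℝ), ENNReal.ofReal
        (c * (Real.Gamma (p + q) * (u ^ (p - 1) * (1 + u) ^ (-(p + q)))))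
      = ENNReal.ofReal (c * (Real.Gamma p * Real.Gamma q)) := by
  have hGp := Real.Gamma_pos_of_pos hp
  calc
    _ = ∫⁻ u in Set.Ioi (0:ℝ), ∫⁻ s in Set.Ioi (0:ℝ),
        ENNReal.ofReal (c * u ^ (p - 1) * (s ^ (p + q - 1) * Real.exp (-((1 + u) * s)))) := by
      refine setLIntegral_congr_fun measurableSet_Ioi fun u hu => ?_
      have hu' : (0:ℝ) < u := hu
      rw [pc_gamma (by positivity) (by positivity) (by positivity)]
      congr 1; ring
    _ = ∫⁻ s in Set.Ioi (0:ℝ), ∫⁻ u in Set.Ioi (0:ℝ),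
        ENNReal.ofReal (c * u ^ (p - 1) * (s ^ (p + q - 1) * Real.exp (-((1 + u) * s)))) := by
      refine lintegral_lintegral_swap (Measurable.aemeasurable ?_)
      unfold Function.uncurry
      fun_prop
    _ = ∫⁻ s in Set.Ioi (0:ℝ),
        ENNReal.ofReal (c * Real.Gamma p * (s ^ (q - 1) * Real.exp (-(1 * s)))) := by
      refine setLIntegral_congr_fun measurableSet_Ioi fun s hs => ?_
      have hs' : (0:ℝ) < s := hs
      have := pc_gamma (p := p) (r := s) (c := c * (s ^ (p + q - 1) * Real.exp (-s))) hp hs'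
        (by positivity)
      convert this using 1
      · refine lintegral_congr fun u => ?_
        congr 1
        rw [show -((1 + u) * s) = -s + -(s * u) by ring, Real.exp_add]; ring
      · congr 1
        rw [show q - 1 = (p + q - 1) + (-p) by ring, Real.rpow_add hs', one_mul]; ring
    _ = _ := by
      rw [pc_gamma hq one_pos (by positivity)]
      congr 1; simp; ring

lemma pc_gauss (D : ℕ) (z : EuclideanSpace ℝ (Fin D)) {s u c : ℝ} (hs : 0 < s) (hu : 0 < u)
    (hc : 0 ≤ c) :
    ∫⁻ x : EuclideanSpace ℝ (Fin D),
        ENNReal.ofReal (c * Real.exp (-(s * (‖x‖ ^ 2 + u * ‖x - z‖ ^ 2))))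
      = ENNReal.ofReal (c * ((Real.pi / (s * (1 + u))) ^ ((D:ℝ) / 2) *
          Real.exp (-(‖z‖ ^ 2 * (u / (1 + u)) * s)))) := by
  have hB : 0 < s * (1 + u) := by positivity
  have h := GaussianFourier.integral_rexp_neg_mul_sq_norm
    (V := EuclideanSpace ℝ (Fin D)) hB
  rw [finrank_euclideanSpace_fin] at h
  have hi : Integrable (fun x : EuclideanSpace ℝ (Fin D) =>
      Real.exp (-(s * (1 + u)) * ‖x‖ ^ 2)) := by
    by_contra hn
    rw [integral_undef hn] at h
    have : 0 < (Real.pi / (s * (1 + u))) ^ ((D:ℝ) / 2) := by positivity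
    linarith
  set k := c * Real.exp (-(‖z‖ ^ 2 * (u / (1 + u)) * s)) with hk
  have key : ∀ x : EuclideanSpace ℝ (Fin D),
      c * Real.exp (-(s * (‖x‖ ^ 2 + u * ‖x - z‖ ^ 2)))
      = k * Real.exp (-(s * (1 + u)) * ‖x - (u / (1 + u)) • z‖ ^ 2) := by
    intro x
    rw [hk, mul_assoc, ← Real.exp_add]
    congr 2
    rw [norm_sub_sq_real, norm_sub_sq_real, inner_smul_right, norm_smul, mul_pow,
      Real.norm_eq_abs, sq_abs]
    field_simp
    ring
  simp_rw [key]
  rw [lintegral_sub_right_eq_self (fun x : EuclideanSpace ℝ (Fin D) =>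
    ENNReal.ofReal (k * Real.exp (-(s * (1 + u)) * ‖x‖ ^ 2)))]
  rw [← ofReal_integral_eq_lintegral_ofReal (hi.const_mul k)
    (Filter.Eventually.of_forall fun x => by show 0 ≤ k * _; positivity)]
  rw [integral_const_mul, h]
  congr 1; rw [hk]; ring

lemma pc_main (D : ℕ) (hD : 1 ≤ D) (α β d : ℝ) (hd : d = (D:ℝ) / 2)
    (ha0 : 0 < α) (haD : α < d) (hb0 : 0 < β) (hbD : β < d) (hab : d < α + β)
    (z : EuclideanSpace ℝ (Fin D)) (hz : z ≠ 0) :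
    ∫⁻ x : EuclideanSpace ℝ (Fin D), ENNReal.ofReal (Real.Gamma α * Real.Gamma β *
        (‖x‖ ^ (-(2 * α)) * ‖x - z‖ ^ (-(2 * β))))
      = ENNReal.ofReal (Real.pi ^ d * (Real.Gamma (d - α) * Real.Gamma (d - β) *
          Real.Gamma (α + β - d) / Real.Gamma (2 * d - α - β)) *
          ‖z‖ ^ (2 * (d - α - β))) := by
  have hGa := Real.Gamma_pos_of_pos ha0
  have hGb := Real.Gamma_pos_of_pos hb0
  have hGc := Real.Gamma_pos_of_pos (sub_pos.2 hab)
  have hGd : 0 < Real.Gamma (2 * d - α - β) := Real.Gamma_pos_of_pos (by linarith)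
  have hR : 0 < ‖z‖ := norm_pos_iff.2 hz
  have : Nonempty (Fin D) := ⟨⟨0, hD⟩⟩
  let F : EuclideanSpace ℝ (Fin D) → ℝ → ℝ → ENNReal := fun x s u =>
    ENNReal.ofReal (s ^ (α + β - 1) * u ^ (β - 1) *
      Real.exp (-(s * (‖x‖ ^ 2 + u * ‖x - z‖ ^ 2))))
  have hF : Measurable (fun q : (EuclideanSpace ℝ (Fin D) × ℝ) × ℝ => F q.1.1 q.1.2 q.2) := by
    simp only [F]; fun_prop
  have hsq : ∀ (y e : ℝ), 0 < y → (y ^ 2) ^ (-e) = y ^ (-(2 * e)) := by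
    intro y e hy
    rw [← Real.rpow_natCast, ← Real.rpow_mul hy.le]; congr 1; push_cast; ring
  calc
    _ = ∫⁻ x : EuclideanSpace ℝ (Fin D), ∫⁻ s in Set.Ioi (0:ℝ), ∫⁻ u in Set.Ioi (0:ℝ), F x s u := by
      have h0 : ∀ᵐ x : EuclideanSpace ℝ (Fin D), x ≠ 0 := Measure.ae_ne volume 0
      have h1 : ∀ᵐ x : EuclideanSpace ℝ (Fin D), x ≠ z := Measure.ae_ne volume z
      refine lintegral_congr_ae ?_
      filter_upwards [h0, h1] with x hx0 hx1
      have n0 : 0 < ‖x‖ := norm_pos_iff.2 hx0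
      have n1 : 0 < ‖x - z‖ := norm_pos_iff.2 (sub_ne_zero.2 hx1)
      have e := pc_gamma (p := α) (r := ‖x‖ ^ 2)
        (c := Real.Gamma β * (‖x - z‖ ^ 2) ^ (-β)) ha0 (by positivity) (by positivity)
      rw [hsq _ _ n0, hsq _ _ n1] at e
      rw [show Real.Gamma α * Real.Gamma β * (‖x‖ ^ (-(2 * α)) * ‖x - z‖ ^ (-(2 * β)))
        = Real.Gamma β * ‖x - z‖ ^ (-(2 * β)) * (Real.Gamma α * ‖x‖ ^ (-(2 * α))) by ring, ← e]
      refine setLIntegral_congr_fun measurableSet_Ioi fun s hs => ?_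
      have hs' : (0:ℝ) < s := hs
      have e2 := pc_gamma (p := β) (r := s * ‖x - z‖ ^ 2)
        (c := s ^ (α + β - 1) * Real.exp (-(s * ‖x‖ ^ 2))) hb0 (by positivity) (by positivity)
      rw [Real.mul_rpow hs'.le (by positivity), hsq _ _ n1] at e2
      simp only [F]
      symm
      convert e2 using 1
      · refine lintegral_congr fun u => ?_
        congr 1
        rw [show -(s * (‖x‖ ^ 2 + u * ‖x - z‖ ^ 2))
          = -(s * ‖x‖ ^ 2) + -(s * ‖x - z‖ ^ 2 * u) by ring, Real.exp_add]
        ring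
      · congr 1
        rw [show α - 1 = (α + β - 1) + (-β) by ring, Real.rpow_add hs', mul_comm (‖x‖ ^ 2) s]
        ring
    _ = ∫⁻ s in Set.Ioi (0:ℝ), ∫⁻ x : EuclideanSpace ℝ (Fin D), ∫⁻ u in Set.Ioi (0:ℝ), F x s u := by
      refine lintegral_lintegral_swap (Measurable.aemeasurable ?_)
      exact hF.lintegral_prod_right'
    _ = ∫⁻ s in Set.Ioi (0:ℝ), ∫⁻ u in Set.Ioi (0:ℝ), ∫⁻ x : EuclideanSpace ℝ (Fin D), F x s u := by
      refine lintegral_congr fun s => ?_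
      refine lintegral_lintegral_swap (Measurable.aemeasurable ?_)
      simp only [F]
      unfold Function.uncurry
      fun_prop
    _ = ∫⁻ u in Set.Ioi (0:ℝ), ∫⁻ s in Set.Ioi (0:ℝ), ∫⁻ x : EuclideanSpace ℝ (Fin D), F x s u := by
      refine lintegral_lintegral_swap (Measurable.aemeasurable ?_)
      have : Measurable (fun q : (ℝ × ℝ) × EuclideanSpace ℝ (Fin D) => F q.2 q.1.1 q.1.2) := by
        simp only [F]; fun_prop
      exact this.lintegral_prod_right'
    _ = ∫⁻ u in Set.Ioi (0:ℝ), ENNReal.ofReal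
        ((Real.pi ^ d * Real.Gamma (α + β - d) * ‖z‖ ^ (2 * (d - α - β)) /
          Real.Gamma (2 * d - α - β)) *
          (Real.Gamma ((d - α) + (d - β)) * (u ^ ((d - α) - 1) *
            (1 + u) ^ (-((d - α) + (d - β)))))) := by
      refine setLIntegral_congr_fun measurableSet_Ioi fun u hu => ?_
      have hu' : (0:ℝ) < u := hu
      have hu1 : (0:ℝ) < 1 + u := by positivity
      have e := pc_gamma (p := α + β - d) (r := ‖z‖ ^ 2 * (u / (1 + u)))
        (c := u ^ (β - 1) * Real.pi ^ d * (1 + u) ^ (-d)) (sub_pos.2 hab)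
        (by positivity) (by positivity)
      trans
      swap
      · convert e using 1
        congr 1
        rw [Real.mul_rpow (by positivity) (by positivity), hsq _ _ hR,
          Real.div_rpow hu'.le hu1.le, div_eq_mul_inv (u ^ _), ← Real.rpow_neg hu1.le,
          show (d - α) + (d - β) = 2 * d - α - β by ring,
          show d - α - 1 = (β - 1) + -(α + β - d) by ring, Real.rpow_add hu',
          show -(2 * d - α - β) = (-d) + - -(α + β - d) by ring, Real.rpow_add hu1,
          show 2 * (d - α - β) = -(2 * (α + β - d)) by ring]
        field_simp
        exact div_self (by rw [mul_comm d 2]; exact hGd.ne')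
      · refine setLIntegral_congr_fun measurableSet_Ioi fun s hs => ?_
        have hs' : (0:ℝ) < s := hs
        simp only [F]
        rw [pc_gauss D z hs' hu' (by positivity), ← hd]
        congr 1
        rw [Real.div_rpow Real.pi_pos.le (by positivity), div_eq_mul_inv,
          ← Real.rpow_neg (by positivity), Real.mul_rpow hs'.le hu1.le,
          show α + β - d - 1 = (α + β - 1) + -d by ring, Real.rpow_add hs']
        ring
    _ = _ := by
      rw [pc_beta (by linarith) (by linarith) (by positivity)]
      congr 1; field_simp

/-- The convolution (chain) identity for two massless propagators:
`π^{−D/2} ∫ ‖x‖^{−a} ‖x − z‖^{−b} dx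
  = Γ((D−a)/2)Γ((D−b)/2)Γ((a+b−D)/2) / (Γ(a/2)Γ(b/2)Γ(D−(a+b)/2)) · ‖z‖^{D−a−b}`. -/
theorem propagator_convolution
    (D : ℕ) (hD : 1 ≤ D) (a b : ℝ)
    (ha0 : 0 < a) (haD : a < D) (hb0 : 0 < b) (hbD : b < D) (hab : (D : ℝ) < a + b)
    (z : EuclideanSpace ℝ (Fin D)) (hz : z ≠ 0) :
    Integrable (fun x : EuclideanSpace ℝ (Fin D) => ‖x‖ ^ (-a) * ‖x - z‖ ^ (-b)) ∧
    Real.pi ^ (-(D : ℝ) / 2) *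
        ∫ x : EuclideanSpace ℝ (Fin D), ‖x‖ ^ (-a) * ‖x - z‖ ^ (-b)
      = Real.Gamma (((D : ℝ) - a) / 2) * Real.Gamma (((D : ℝ) - b) / 2) *
          Real.Gamma ((a + b - D) / 2) /
          (Real.Gamma (a / 2) * Real.Gamma (b / 2) * Real.Gamma ((D : ℝ) - (a + b) / 2)) *
          ‖z‖ ^ ((D : ℝ) - a - b) := by
  have h := pc_main D hD (a / 2) (b / 2) ((D:ℝ) / 2) rfl (by linarith) (by linarith)
    (by linarith) (by linarith) (by linarith) z hz
  rw [show 2 * (a / 2) = a by ring, show 2 * (b / 2) = b by ring,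
    show (D:ℝ) / 2 - a / 2 = (D - a) / 2 by ring, show (D:ℝ) / 2 - b / 2 = (D - b) / 2 by ring,
    show a / 2 + b / 2 - (D:ℝ) / 2 = (a + b - D) / 2 by ring,
    show 2 * ((D:ℝ) / 2) - a / 2 - b / 2 = D - (a + b) / 2 by ring,
    show 2 * (((D:ℝ) - a) / 2 - b / 2) = D - a - b by ring] at h
  have hGa : 0 < Real.Gamma (a / 2) := Real.Gamma_pos_of_pos (by linarith)
  have hGb : 0 < Real.Gamma (b / 2) := Real.Gamma_pos_of_pos (by linarith)
  have h1 : 0 < Real.Gamma (((D:ℝ) - a) / 2) := Real.Gamma_pos_of_pos (by linarith)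
  have h2 : 0 < Real.Gamma (((D:ℝ) - b) / 2) := Real.Gamma_pos_of_pos (by linarith)
  have h3 : 0 < Real.Gamma ((a + b - (D:ℝ)) / 2) := Real.Gamma_pos_of_pos (by linarith)
  have h4 : 0 < Real.Gamma ((D:ℝ) - (a + b) / 2) := Real.Gamma_pos_of_pos (by linarith)
  set K := Real.Gamma (a / 2) * Real.Gamma (b / 2) with hK
  have hKp : 0 < K := by positivity
  have hm : Measurable (fun x : EuclideanSpace ℝ (Fin D) =>
      K * (‖x‖ ^ (-a) * ‖x - z‖ ^ (-b))) := by fun_prop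
  have hnn : ∀ x : EuclideanSpace ℝ (Fin D), 0 ≤ K * (‖x‖ ^ (-a) * ‖x - z‖ ^ (-b)) :=
    fun x => by positivity
  have hi : Integrable (fun x : EuclideanSpace ℝ (Fin D) =>
      K * (‖x‖ ^ (-a) * ‖x - z‖ ^ (-b))) := by
    refine ⟨hm.aestronglyMeasurable, ?_⟩
    rw [hasFiniteIntegral_iff_ofReal (Filter.Eventually.of_forall hnn), h]
    exact ENNReal.ofReal_lt_top
  have hv := integral_eq_lintegral_of_nonneg_ae (μ := volume) (Filter.Eventually.of_forall hnn)
    hm.aestronglyMeasurable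
  rw [h, ENNReal.toReal_ofReal (by positivity), integral_const_mul] at hv
  refine ⟨(integrable_const_mul_iff (Ne.isUnit hKp.ne') _).1 hi, ?_⟩
  have hpi : Real.pi ^ (-(D:ℝ) / 2) * Real.pi ^ ((D:ℝ) / 2) = 1 := by
    rw [← Real.rpow_add Real.pi_pos]; ring_nf; simp
  refine mul_left_cancel₀ hKp.ne' ?_
  rw [mul_left_comm, hv]
  rw [show ∀ A B C E : ℝ, A * (B * C * E) = (A * B) * (C * E) by intros; ring, hpi]
  field_simp
end

section
/- Let D ≥ 1 be an integer and f : ℝ × ℝ → ℂ a measurable function such that for every unit vector u ∈ ℝ^D the function g_u(w) = f(‖w‖², ‖w − u‖²) is Lebesgue integrable on ℝ^D. Define A(z₁, z₂) = ‖z₁‖^{−D}·f(‖z₂‖²/‖z₁‖², ‖z₂ − z₁‖²/‖z₁‖²) for z₁ ≠ 0. Then for all nonzero z₁, p₁ ∈ ℝ^D, ∫_{ℝ^D} e^{−i⟨z₂, p₁⟩} A(z₁, z₂) dz₂ = ∫_{ℝ^D} e^{−i⟨z₂, z₁⟩} A(p₁, z₂) dz₂; that is, the partial Fourier transform of A in its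 second argument is symmetric under exchanging the remaining position variable with the momentum variable. -/
open MeasureTheory RealInnerProductSpace

/-- The partial Fourier transform (in the second argument) of a
rotation-invariant massless three-point function of scaling weight `D` with one
external point at the origin is symmetric under exchanging the remaining
position variable with the momentum variable. -/
theorem three_point_fourier_symmetry
    (D : ℕ) (hD : 1 ≤ D) (f : ℝ × ℝ → ℂ) (hmeas : Measurable f)
    (hint : ∀ u : EuclideanSpace ℝ (Fin D), ‖u‖ = 1 →
      Integrable (fun w : EuclideanSpace ℝ (Fin D) => f (‖w‖ ^ 2, ‖w - u‖ ^ 2))) :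
    let A : EuclideanSpace ℝ (Fin D) → EuclideanSpace ℝ (Fin D) → ℂ :=
      fun z₁ z₂ => (((‖z₁‖ ^ D)⁻¹ : ℝ) : ℂ) *
        f (‖z₂‖ ^ 2 / ‖z₁‖ ^ 2, ‖z₂ - z₁‖ ^ 2 / ‖z₁‖ ^ 2)
    ∀ z₁ p₁ : EuclideanSpace ℝ (Fin D), z₁ ≠ 0 → p₁ ≠ 0 →
      (∫ z₂ : EuclideanSpace ℝ (Fin D),
          Complex.exp (-Complex.I * ((⟪z₂, p₁⟫ : ℝ) : ℂ)) * A z₁ z₂)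
        = ∫ z₂ : EuclideanSpace ℝ (Fin D),
            Complex.exp (-Complex.I * ((⟪z₂, z₁⟫ : ℝ) : ℂ)) * A p₁ z₂ := by
  intro A z p hz hp
  have ha : 0 < ‖z‖ := norm_pos_iff.mpr hz
  have hb : 0 < ‖p‖ := norm_pos_iff.mpr hp
  obtain ⟨R, hR⟩ : ∃ R : EuclideanSpace ℝ (Fin D) ≃ₗᵢ[ℝ] EuclideanSpace ℝ (Fin D),
      (R (‖z‖ • p) = ‖p‖ • z) ∧ R (‖p‖ • z) = ‖z‖ • p := by
    have hn : ‖(‖z‖ • p)‖ = ‖(‖p‖ • z)‖ := by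
      simp [norm_smul, mul_comm]
    refine ⟨(ℝ ∙ (‖z‖ • p - ‖p‖ • z))ᗮ.reflection, Submodule.reflection_sub hn, ?_⟩
    have h := Submodule.reflection_sub hn
    exact (congrArg _ h).symm.trans (Submodule.reflection_reflection _ _)
  obtain ⟨h1, h2⟩ := hR
  set c : ℝ := ‖z‖ / ‖p‖ with hc
  have hc0 : 0 < c := by positivity
  have hRp : c • R p = z := by
    rw [map_smul] at h1
    rw [hc, div_eq_inv_mul, mul_smul, h1, smul_smul, inv_mul_cancel₀ hb.ne', one_smul]
  have hRz : R z = c • p := by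
    rw [map_smul] at h2
    rw [hc, div_eq_inv_mul, mul_smul, ← h2, smul_smul, inv_mul_cancel₀ hb.ne', one_smul]
  set F : EuclideanSpace ℝ (Fin D) → ℂ := fun z₂ =>
    Complex.exp (-Complex.I * ((⟪z₂, p⟫ : ℝ) : ℂ)) * A z z₂ with hF
  set G : EuclideanSpace ℝ (Fin D) → ℂ := fun z₂ =>
    Complex.exp (-Complex.I * ((⟪z₂, z⟫ : ℝ) : ℂ)) * A p z₂ with hG
  have hinn : ∀ w, ⟪c • R w, p⟫ = ⟪w, z⟫ := by
    intro w
    rw [real_inner_smul_left, ← real_inner_smul_right, ← hRz, R.inner_map_map]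
  have key : ∀ w, G w = (((c ^ D : ℝ)) : ℂ) * F (R (c • w)) := by
    intro w
    have e1 : ‖c • R w‖ ^ 2 / ‖z‖ ^ 2 = ‖w‖ ^ 2 / ‖p‖ ^ 2 := by
      rw [norm_smul, R.norm_map, Real.norm_of_nonneg hc0.le, hc]
      field_simp
    have e2 : ‖c • R w - z‖ ^ 2 / ‖z‖ ^ 2 = ‖w - p‖ ^ 2 / ‖p‖ ^ 2 := by
      have : c • R w - z = c • R (w - p) := by
        rw [map_sub, smul_sub, hRp]
      rw [this, norm_smul, R.norm_map, Real.norm_of_nonneg hc0.le, hc]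
      field_simp
    have e3 : (‖p‖ ^ D)⁻¹ = c ^ D * (‖z‖ ^ D)⁻¹ := by
      rw [hc, div_pow]
      field_simp
    simp only [hF, hG, A]
    rw [map_smul, hinn, e1, e2, e3]
    push_cast
    ring
  have i1 : ∫ w, F (R (c • w)) = |(c ^ D)⁻¹| • ∫ w, F w := by
    have := Measure.integral_comp_smul (volume : Measure (EuclideanSpace ℝ (Fin D)))
      (fun x => F (R x)) c
    rw [finrank_euclideanSpace_fin] at this
    rw [this, R.measurePreserving.integral_comp R.toHomeomorph.measurableEmbedding]
  change ∫ w, F w = ∫ w, G w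
  simp_rw [key]
  rw [integral_const_mul, i1, abs_of_pos (by positivity), Complex.real_smul, ← mul_assoc,
    ← Complex.ofReal_mul, mul_inv_cancel₀ (by positivity), Complex.ofReal_one, one_mul]
end
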